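/- arXiv:1811.00049 — 2 statements merged into one kernel-verified Lean document; each statement's English description precedes it below -/
import Mathlib

section
/- Let T = {P, P₁, P₂} be a self-polar triangle containing the point P = (0:0:1). Let L̄ ≤ M_ℓ be a subgroup mapping T to itself such that the pointwise stabilizer L̄_T of T in L̄ has index 2 in L̄. Set w := |L̄ ∩ Z| and t := |L̄|/(2w). Then the number N of orbits of L̄ acting on O equals 1 + (q−t+1)/(2t) + (q+1)·gcd(w,t)/(t·w) + (q+1)²·(q−2)/(2·t·w). -/
/-!
By the Cauchy–Frobenius formula, the number of orbits is determined by the number of points of the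
curve that each element of the group fixes. A unitary frame adapted to the triangle turns the group
into one of matrices `diag(x, y, 1)` and of swaps, that is, such matrices composed with the
interchange of the first two coordinates; each kind makes up half of the group.

A diagonal matrix fixes `q ^ 3 + 1`, `q + 1` or `0` points according to whether all, exactly two or
none of its three diagonal entries coincide. A swap fixes exactly one, because in characteristic `2`
its action on the first two coordinates has a single eigenline, and that line is isotropic.

The pairs `(x, y)` that occur form a subgroup of `Fˣ × Fˣ` that is invariant under conjugation by a
swap, hence under `(x, y) ↦ (y, x)`. As `Fˣ` has odd order, this subgroup is the direct product of
its pairs `(x, x)`, which are the `w` central elements, and its pairs `(x, x⁻¹)`, of which there are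
therefore `t`. The identity `(1, y ^ 2) = (y, y) * (y⁻¹, y)` shows that `(1, y)` occurs exactly when
both `(y, y)` and `(y, y⁻¹)` do, and since `Fˣ` is cyclic this happens for `gcd(w, t)` elements `y`.
-/

open Matrix

noncomputable def glAct {F : Type*} [Field F] (M : GL (Fin 3) F)
    (x : Projectivization F (Fin 3 → F)) : Projectivization F (Fin 3 → F) :=
  Projectivization.map
    ((LinearMap.GeneralLinearGroup.generalLinearEquiv F (Fin 3 → F)
        (Matrix.GeneralLinearGroup.toLin M)).toLinearMap)
    ((LinearMap.GeneralLinearGroup.generalLinearEquiv F (Fin 3 → F)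
        (Matrix.GeneralLinearGroup.toLin M)).injective) x

noncomputable def numOrbits {F : Type*} [Field F] (L : Subgroup (GL (Fin 3) F))
    (O : Set (Projectivization F (Fin 3 → F))) : ℕ :=
  Nat.card ((fun x => {y | ∃ g ∈ L, glAct g x = y}) '' O :
    Set (Set (Projectivization F (Fin 3 → F))))

def hermitianPts (q : ℕ) (F : Type*) [Field F] : Set (Projectivization F (Fin 3 → F)) :=
  {x | x.rep 1 ^ (q + 1) = x.rep 0 ^ (q + 1) - x.rep 2 ^ (q + 1)}

def MlSet (q : ℕ) (F : Type*) [Field F] : Set (GL (Fin 3) F) :=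
  {M | ∃ a c τ : F, a ^ (q + 1) - c ^ (q + 1) = 1 ∧ τ ^ (q + 1) = 1 ∧
    (M : Matrix (Fin 3) (Fin 3) F) = !![a, τ * c ^ q, 0; c, τ * a ^ q, 0; 0, 0, 1]}

def ZSet (q : ℕ) (F : Type*) [Field F] : Set (GL (Fin 3) F) :=
  {M | ∃ ε : F, ε ^ (q + 1) = 1 ∧ (M : Matrix (Fin 3) (Fin 3) F) = Matrix.diagonal ![ε, ε, 1]}

def hermForm (q : ℕ) {F : Type*} [Field F] (u v : Fin 3 → F) : F :=
  -(u 0 ^ q) * v 0 + u 1 ^ q * v 1 + u 2 ^ q * v 2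

/-! ### Swap-invariant subgroups of the square of a cyclic group -/

section SwapInvariant

variable {G : Type*} [CommGroup G]

lemma eq_ker_powMonoidHom_card [IsCyclic G] [Finite G] (H : Subgroup G) :
    H = (powMonoidHom (Nat.card H) : G →* G).ker := by
  refine Subgroup.eq_of_le_of_card_ge (fun x hx => ?_) ?_
  · rw [MonoidHom.mem_ker, powMonoidHom_apply]
    exact congrArg Subtype.val (pow_card_eq_one' (x := (⟨x, hx⟩ : H)))
  · rw [IsCyclic.card_powMonoidHom_ker]
    exact Nat.gcd_le_right _ Nat.card_pos

lemma card_inf_of_isCyclic [IsCyclic G] [Finite G] (H K : Subgroup G) :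
    Nat.card (H ⊓ K : Subgroup G) = (Nat.card H).gcd (Nat.card K) := by
  have h_inf : H ⊓ K = (powMonoidHom ((Nat.card H).gcd (Nat.card K)) : G →* G).ker := by
    ext x
    nth_rw 1 [eq_ker_powMonoidHom_card H, eq_ker_powMonoidHom_card K]
    simp only [Subgroup.mem_inf, MonoidHom.mem_ker, powMonoidHom_apply, pow_gcd_eq_one]
  rw [h_inf, IsCyclic.card_powMonoidHom_ker]
  exact Nat.gcd_eq_right ((Nat.gcd_dvd_left _ _).trans (Subgroup.card_subgroup_dvd_card H))

lemma sq_injective_of_odd_card (hG : Odd (Nat.card G)) :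
    Function.Injective fun x : G => x ^ 2 :=
  (powCoprime hG.coprime_two_right).injective

lemma exists_mem_sq_eq (hG : Odd (Nat.card G)) {H : Subgroup G} {x : G} (hx : x ∈ H) :
    ∃ y ∈ H, y ^ 2 = x := by
  have := Nat.finite_of_card_ne_zero hG.pos.ne'
  have hH : Odd (Nat.card H) := hG.of_dvd_nat (Subgroup.card_subgroup_dvd_card H)
  obtain ⟨y, hy⟩ := (powCoprime hH.coprime_two_right).surjective ⟨x, hx⟩
  exact ⟨y, y.2, congrArg Subtype.val hy⟩

/-- The group of all `x` with `(x, x) ∈ A`. -/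
def diagonalPart (A : Subgroup (G × G)) : Subgroup G :=
  A.comap ((MonoidHom.id G).prod (MonoidHom.id G))

/-- The group of all `x` with `(x, x⁻¹) ∈ A`. -/
def antidiagonalPart (A : Subgroup (G × G)) : Subgroup G :=
  A.comap ((MonoidHom.id G).prod invMonoidHom)

lemma mem_diagonalPart {A : Subgroup (G × G)} {x : G} : x ∈ diagonalPart A ↔ (x, x) ∈ A :=
  Iff.rfl

lemma mem_antidiagonalPart {A : Subgroup (G × G)} {x : G} :
    x ∈ antidiagonalPart A ↔ (x, x⁻¹) ∈ A :=
  Iff.rfl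

variable {A : Subgroup (G × G)}

lemma comap_inl_eq_comap_inr (hA : ∀ a ∈ A, a.swap ∈ A) :
    A.comap (MonoidHom.inl G G) = A.comap (MonoidHom.inr G G) := by
  ext x
  exact ⟨hA _, hA _⟩

lemma card_diagonalPart_mul_card_antidiagonalPart (hG : Odd (Nat.card G))
    (hA : ∀ a ∈ A, a.swap ∈ A) :
    Nat.card (diagonalPart A) * Nat.card (antidiagonalPart A) = Nat.card A := by
  rw [← Nat.card_prod]
  refine Nat.card_congr (Equiv.ofBijective
    (fun z => ⟨((z.1 : G), (z.1 : G)) * ((z.2 : G), (z.2 : G)⁻¹), A.mul_mem z.1.2 z.2.2⟩) ⟨?_, ?_⟩)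
  · rintro ⟨⟨x, _⟩, ⟨y, _⟩⟩ ⟨⟨x', _⟩, ⟨y', _⟩⟩ h
    simp only [Prod.mk_mul_mk, Subtype.mk.injEq, Prod.mk.injEq] at h
    have hx : x = x' := sq_injective_of_odd_card hG <| by
      calc x ^ 2 = x * y * (x * y⁻¹) := by rw [mul_mul_mul_comm, mul_inv_cancel, mul_one, sq]
        _ = x' * y' * (x' * y'⁻¹) := by rw [h.1, h.2]
        _ = x' ^ 2 := by rw [mul_mul_mul_comm, mul_inv_cancel, mul_one, sq]
    subst hx
    simpa using h.1
  · rintro ⟨⟨a, b⟩, hab⟩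
    have h_diag : a * b ∈ diagonalPart A := by
      simpa [mem_diagonalPart, mul_comm b a] using A.mul_mem hab (hA _ hab)
    have h_anti : a * b⁻¹ ∈ antidiagonalPart A := by
      simpa [mem_antidiagonalPart, mul_comm b a⁻¹] using A.mul_mem hab (A.inv_mem (hA _ hab))
    obtain ⟨x, hx, hxab⟩ := exists_mem_sq_eq hG h_diag
    obtain ⟨y, hy, hyab⟩ := exists_mem_sq_eq hG h_anti
    have h_fst : x * y = a := sq_injective_of_odd_card hG <| by
      simp only [mul_pow, hxab, hyab]
      rw [mul_mul_mul_comm, mul_inv_cancel, mul_one, sq]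
    have h_snd : x * y⁻¹ = b := sq_injective_of_odd_card hG <| by
      simp only [mul_pow, inv_pow, hxab, hyab]
      rw [mul_inv, inv_inv, mul_mul_mul_comm, mul_inv_cancel, one_mul, sq]
    exact ⟨⟨⟨x, hx⟩, ⟨y, hy⟩⟩, Subtype.ext (Prod.ext h_fst h_snd)⟩

lemma comap_inr_eq_diagonalPart_inf_antidiagonalPart (hG : Odd (Nat.card G))
    (hA : ∀ a ∈ A, a.swap ∈ A) :
    A.comap (MonoidHom.inr G G) = diagonalPart A ⊓ antidiagonalPart A := by
  ext y
  simp only [Subgroup.mem_comap, MonoidHom.inr_apply, Subgroup.mem_inf, mem_diagonalPart,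
    mem_antidiagonalPart]
  constructor
  · intro hy
    exact ⟨by simpa using A.mul_mem (hA _ hy) hy,
      by simpa using A.mul_mem (hA _ hy) (A.inv_mem hy)⟩
  · rintro ⟨h_diag, h_anti⟩
    have h_sq : (1, y ^ 2) ∈ A := by simpa [sq] using A.mul_mem h_diag (A.inv_mem h_anti)
    obtain ⟨z, hz, hzy⟩ := exists_mem_sq_eq hG
      (show y ^ 2 ∈ A.comap (MonoidHom.inr G G) from h_sq)
    rwa [sq_injective_of_odd_card hG hzy] at hz

lemma card_comap_inr_eq_gcd [IsCyclic G] (hG : Odd (Nat.card G)) (hA : ∀ a ∈ A, a.swap ∈ A) :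
    Nat.card (A.comap (MonoidHom.inr G G)) =
      (Nat.card (diagonalPart A)).gcd (Nat.card (antidiagonalPart A)) := by
  have := Nat.finite_of_card_ne_zero hG.pos.ne'
  rw [comap_inr_eq_diagonalPart_inf_antidiagonalPart hG hA, card_inf_of_isCyclic]

end SwapInvariant

/-! ### The norm of a field with `q ^ 2` elements -/

section Norm

variable {F : Type*} [Field F] [Fintype F] {q : ℕ}

lemma one_lt_of_card (hF : Fintype.card F = q ^ 2) : 1 < q :=
  (one_lt_sq_iff₀ q.zero_le).1 (hF ▸ Fintype.one_lt_card)

lemma charP_two_of_card (hF : Fintype.card F = q ^ 2) (hq : Even q) : CharP F 2 :=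
  ringChar.of_eq <| FiniteField.even_card_iff_char_two.2 <| by
    rw [hF, ← Nat.even_iff]
    exact hq.pow_of_ne_zero two_ne_zero

lemma add_pow_of_card (hF : Fintype.card F = q ^ 2) (x y : F) :
    (x + y) ^ q = x ^ q + y ^ q := by
  obtain ⟨p, _, n, hp, hcard⟩ := FiniteField.card' F
  have h_dvd : q ∣ p ^ (n : ℕ) := by
    rw [← hcard, hF]
    exact dvd_pow_self q two_ne_zero
  obtain ⟨k, -, rfl⟩ := (Nat.dvd_prime_pow hp).1 h_dvd
  have := Fact.mk hp
  exact add_pow_char_pow x y p k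

/-- The involution `x ↦ x ^ q` of a field with `q ^ 2` elements, which plays the role of complex
conjugation. -/
def conjHom (hF : Fintype.card F = q ^ 2) : F →+* F where
  toFun x := x ^ q
  map_one' := one_pow q
  map_mul' x y := mul_pow x y q
  map_zero' := zero_pow (one_lt_of_card hF).ne_bot
  map_add' := add_pow_of_card hF

lemma conjHom_apply (hF : Fintype.card F = q ^ 2) (x : F) : conjHom hF x = x ^ q := rfl

lemma pow_pow_of_card (hF : Fintype.card F = q ^ 2) (x : F) : (x ^ q) ^ q = x := by
  rw [← pow_mul, ← sq, ← hF, FiniteField.pow_card]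

lemma norm_pow_of_card (hF : Fintype.card F = q ^ 2) (x : F) :
    (x ^ (q + 1)) ^ q = x ^ (q + 1) := by
  rw [pow_succ, mul_pow, pow_pow_of_card hF, mul_comm]

lemma card_units_of_card (hF : Fintype.card F = q ^ 2) : Nat.card Fˣ = (q - 1) * (q + 1) := by
  rw [Nat.card_units, Nat.card_eq_fintype_card, hF, mul_comm, ← Nat.sq_sub_sq, one_pow]

-- Both subgroups of the cyclic group `Fˣ` have order `q - 1`.
lemma range_norm_units_eq_ker (hF : Fintype.card F = q ^ 2) :
    (powMonoidHom (q + 1) : Fˣ →* Fˣ).range = (powMonoidHom (q - 1) : Fˣ →* Fˣ).ker := by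
  refine Subgroup.eq_of_le_of_card_ge ?_ ?_
  · rintro _ ⟨x, rfl⟩
    rw [MonoidHom.mem_ker, powMonoidHom_apply, powMonoidHom_apply, ← pow_mul, mul_comm,
      ← card_units_of_card hF, pow_card_eq_one']
  · rw [IsCyclic.card_powMonoidHom_ker, IsCyclic.card_powMonoidHom_range, card_units_of_card hF,
      Nat.gcd_mul_left_left, Nat.gcd_mul_right_left, Nat.mul_div_cancel _ q.succ_pos]

lemma exists_pow_succ_eq (hF : Fintype.card F = q ^ 2) {a : F} (ha : a ^ q = a) :
    ∃ z : F, z ^ (q + 1) = a := by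
  rcases eq_or_ne a 0 with rfl | ha0
  · exact ⟨0, zero_pow q.succ_ne_zero⟩
  have h_ker : Units.mk0 a ha0 ∈ (powMonoidHom (q - 1) : Fˣ →* Fˣ).ker := by
    ext
    refine mul_right_cancel₀ ha0 ?_
    simp [pow_sub_one_mul (one_lt_of_card hF).ne_bot, ha]
  obtain ⟨z, hz⟩ := range_norm_units_eq_ker hF ▸ h_ker
  exact ⟨z, by simpa using congrArg Units.val hz⟩

lemma card_norm_eq_one (hF : Fintype.card F = q ^ 2) :
    Nat.card {z : F // z ^ (q + 1) = 1} = q + 1 := by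
  have h_ker : Nat.card (powMonoidHom (q + 1) : Fˣ →* Fˣ).ker = q + 1 := by
    rw [IsCyclic.card_powMonoidHom_ker, card_units_of_card hF, Nat.gcd_mul_left_left]
  refine Eq.trans (Nat.card_congr (Equiv.ofBijective
    (fun u => ⟨((u : Fˣ) : F), by simpa using congrArg Units.val u.2⟩) ⟨?_, ?_⟩)).symm h_ker
  · intro u v huv
    exact Subtype.ext (Units.ext (congrArg Subtype.val huv))
  · rintro ⟨z, hz⟩
    have hz0 : z ≠ 0 := by rintro rfl; simp at hz
    exact ⟨⟨Units.mk0 z hz0, Units.ext (by simpa using hz)⟩, rfl⟩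

lemma card_norm_eq (hF : Fintype.card F = q ^ 2) [DecidableEq F] {a : F} (ha : a ^ q = a) :
    Nat.card {z : F // z ^ (q + 1) = a} = if a = 0 then 1 else q + 1 := by
  obtain ⟨b, rfl⟩ := exists_pow_succ_eq hF ha
  rcases eq_or_ne b 0 with rfl | hb
  · simp
  rw [if_neg (pow_ne_zero _ hb)]
  refine Eq.trans (Nat.card_congr ((Equiv.mulLeft₀ b hb).subtypeEquiv fun z => ?_).symm)
    (card_norm_eq_one hF)
  simp [mul_pow, hb]

end Norm

/-! ### Counting isotropic vectors -/

section IsotropicCount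

variable {F : Type*} [Field F] [Fintype F] {q : ℕ}

lemma card_isotropic_succ (hF : Fintype.card F = q ^ 2) (n : ℕ) :
    Nat.card {v : Fin (n + 1) → F // ∑ i, v i ^ (q + 1) = 0} +
      q * Nat.card {v : Fin n → F // ∑ i, v i ^ (q + 1) = 0} = (q + 1) * q ^ (2 * n) := by
  classical
  have h_fiber (v : Fin n → F) : Nat.card {z : F // z ^ (q + 1) = -∑ i, v i ^ (q + 1)} +
      q * (if ∑ i, v i ^ (q + 1) = 0 then 1 else 0) = q + 1 := by
    rw [card_norm_eq hF]
    · simp only [neg_eq_zero]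
      split_ifs <;> ring
    · simp only [← conjHom_apply hF, map_neg, map_sum]
      simp only [conjHom_apply, norm_pow_of_card hF]
  have h_cons : Nat.card {v : Fin (n + 1) → F // ∑ i, v i ^ (q + 1) = 0} =
      ∑ v : Fin n → F, Nat.card {z : F // z ^ (q + 1) = -∑ i, v i ^ (q + 1)} := by
    rw [← Nat.card_sigma]
    refine Nat.card_congr (Equiv.trans ?_ (Equiv.subtypeProdEquivSigmaSubtype
      fun (v : Fin n → F) (z : F) => z ^ (q + 1) = -∑ i, v i ^ (q + 1)))
    refine ((Fin.consEquiv fun _ => F).symm.trans (Equiv.prodComm _ _)).subtypeEquiv fun v => ?_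
    rw [Fin.sum_univ_succ, eq_neg_iff_add_eq_zero]
    rfl
  have h_zero : Nat.card {v : Fin n → F // ∑ i, v i ^ (q + 1) = 0} =
      ∑ v : Fin n → F, if ∑ i, v i ^ (q + 1) = 0 then 1 else 0 := by
    rw [Nat.card_eq_fintype_card, Fintype.card_subtype, Finset.card_filter]
  rw [h_cons, h_zero, Finset.mul_sum, ← Finset.sum_add_distrib,
    Finset.sum_congr rfl fun v _ => h_fiber v]
  simp [hF, ← pow_mul, mul_comm]

lemma card_isotropic (hF : Fintype.card F = q ^ 2) (ι : Type*) [Fintype ι] :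
    (q : ℤ) * Nat.card {v : ι → F // ∑ i, v i ^ (q + 1) = 0} =
      q ^ (2 * Fintype.card ι) + (q - 1) * (-q) ^ Fintype.card ι := by
  let e := Fintype.equivFin ι
  have h_fin (n : ℕ) : (q : ℤ) * Nat.card {v : Fin n → F // ∑ i, v i ^ (q + 1) = 0} =
      q ^ (2 * n) + (q - 1) * (-q) ^ n := by
    induction n with
    | zero => simp
    | succ n ih =>
      have h_rec := congrArg (Nat.cast : ℕ → ℤ) (card_isotropic_succ hF n)
      push_cast at h_rec
      linear_combination (q : ℤ) * h_rec - q * ih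
  rw [← h_fin, Nat.card_congr ((e.arrowCongr (Equiv.refl F)).subtypeEquiv fun v => ?_)]
  simp [e.symm.sum_comp fun i => v i ^ (q + 1)]

end IsotropicCount

section Eigenvectors

variable {F : Type*} [Field F] [DecidableEq F] {q : ℕ} {ι : Type*} [Fintype ι]

lemma card_isotropic_diagonal_eigenspace (d : ι → F) (c : F) :
    Nat.card {v : ι → F // (∀ i, d i * v i = c * v i) ∧ ∑ i, v i ^ (q + 1) = 0} =
      Nat.card {v : {i // d i = c} → F // ∑ i, v i ^ (q + 1) = 0} := by
  have h_supp {v : ι → F} (hv : ∀ i, d i * v i = c * v i) (i : ι) (hi : d i ≠ c) : v i = 0 :=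
    (mul_eq_mul_right_iff.1 (hv i)).resolve_left hi
  have h_sum (v : ι → F) (hv : ∀ i, d i ≠ c → v i = 0) :
      ∑ i : {i // d i = c}, v i ^ (q + 1) = ∑ i, v i ^ (q + 1) := by
    refine Fintype.sum_of_injective _ Subtype.val_injective _ _ (fun i hi => ?_) fun _ => rfl
    rw [hv i (by simpa using hi), zero_pow q.succ_ne_zero]
  refine Nat.card_congr (Equiv.ofBijective
    (fun v => ⟨fun i => v.1 i, (h_sum v.1 (h_supp v.2.1)).trans v.2.2⟩) ⟨?_, ?_⟩)
  · rintro ⟨u, hu, _⟩ ⟨v, hv, _⟩ h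
    refine Subtype.ext (funext fun i => ?_)
    by_cases hi : d i = c
    · exact congrFun (congrArg Subtype.val h) ⟨i, hi⟩
    · exact (h_supp hu i hi).trans (h_supp hv i hi).symm
  · rintro ⟨u, hu⟩
    let v : ι → F := fun i => if hi : d i = c then u ⟨i, hi⟩ else 0
    have hvu (i : {i // d i = c}) : v i = u i := dif_pos i.2
    have hv (i : ι) (hi : d i ≠ c) : v i = 0 := dif_neg hi
    refine ⟨⟨v, fun i => ?_, ?_⟩, Subtype.ext (funext hvu)⟩
    · by_cases hi : d i = c
      · rw [hi]
      · simp [hv i hi]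
    · rw [← h_sum v hv, ← hu]
      simp only [hvu]

lemma card_isotropic_diagonal_eigenvectors [Fintype F] (hF : Fintype.card F = q ^ 2)
    (d : ι → F) (c : F) :
    (q : ℤ) * Nat.card {v : ι → F //
        (∀ i, d i * v i = c * v i) ∧ v ≠ 0 ∧ ∑ i, v i ^ (q + 1) = 0} =
      q ^ (2 * Fintype.card {i // d i = c}) + (q - 1) * (-q) ^ Fintype.card {i // d i = c} - q := by
  let S : Set (ι → F) := {v | (∀ i, d i * v i = c * v i) ∧ ∑ i, v i ^ (q + 1) = 0}
  have h_zero : (0 : ι → F) ∈ S := by simp [S]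
  have h_punctured : Nat.card {v : ι → F //
      (∀ i, d i * v i = c * v i) ∧ v ≠ 0 ∧ ∑ i, v i ^ (q + 1) = 0} = (S \ {0}).ncard :=
    Nat.card_congr (Equiv.subtypeEquivRight fun v =>
      (and_congr_right fun _ => and_comm).trans and_assoc.symm)
  have h_count := card_isotropic hF {i // d i = c}
  rw [← card_isotropic_diagonal_eigenspace] at h_count
  change (q : ℤ) * S.ncard = _ at h_count
  rw [← Set.ncard_sdiff_singleton_add_one h_zero] at h_count
  rw [h_punctured, ← h_count]
  push_cast
  ring

end Eigenvectors

/-! ### Orbit counting and fixed points in projective space -/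

section OrbitCounting

open MulAction

variable {G X : Type*} [Group G] [MulAction G X]

/-- A set that is invariant under a group action, as a set with an action of the group. -/
def invariantSubMulAction (S : Set X) (hS : ∀ g : G, ∀ x ∈ S, g • x ∈ S) : SubMulAction G X :=
  ⟨S, fun g _ hx => hS g _ hx⟩

lemma card_orbit_image (S : Set X) (hS : ∀ g : G, ∀ x ∈ S, g • x ∈ S) :
    Nat.card (orbit G '' S) = Nat.card (Quotient (orbitRel G (invariantSubMulAction S hS))) := by
  have h_ker : orbitRel G (invariantSubMulAction S hS) = Setoid.ker fun x : S => orbit G x.1 := by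
    rw [SubMulAction.orbitRel_of_subMul]
    ext x y
    exact orbit_eq_iff.symm
  rw [h_ker, Set.image_eq_range]
  exact (Nat.card_congr (Setoid.quotientKerEquivRange _)).symm

lemma card_orbit_image_mul_card [Fintype G] [Finite X] (S : Set X)
    (hS : ∀ g : G, ∀ x ∈ S, g • x ∈ S) :
    Nat.card (orbit G '' S) * Nat.card G = ∑ g : G, Nat.card {x // x ∈ S ∧ g • x = x} := by
  classical
  let S' := invariantSubMulAction S hS
  have : Fintype (Quotient (orbitRel G S')) := Fintype.ofFinite _
  have (g : G) : Fintype (fixedBy S' g) := Fintype.ofFinite _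
  have h_fixed (g : G) : Nat.card {x // x ∈ S ∧ g • x = x} = Fintype.card (fixedBy S' g) := by
    rw [← Nat.card_eq_fintype_card]
    exact Nat.card_congr
      { toFun x := ⟨⟨x.1, x.2.1⟩, Subtype.ext x.2.2⟩
        invFun x := ⟨x.1.1, x.1.2, congrArg Subtype.val x.2⟩ }
  rw [card_orbit_image S hS, Finset.sum_congr rfl fun g _ => h_fixed g,
    sum_card_fixedBy_eq_card_orbits_mul_card_group, Nat.card_eq_fintype_card,
    Nat.card_eq_fintype_card]

end OrbitCounting

section ProjectiveCount

open Projectivization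

variable {K V : Type*} [Field K] [AddCommGroup V] [Module K V]

lemma card_mul_card_units (S : Set (Projectivization K V)) :
    Nat.card S * Nat.card Kˣ = Nat.card {v : V // ∃ hv : v ≠ 0, mk K v hv ∈ S} := by
  have h_mk (x : Projectivization K V) (c : Kˣ) :
      mk K (c • x.rep) ((smul_ne_zero_iff_ne c).2 x.rep_nonzero) = x := by
    conv_rhs => rw [← x.mk_rep]
    exact (mk_eq_mk_iff K _ _ _ _).2 ⟨c, rfl⟩
  rw [← Nat.card_prod]
  refine Nat.card_congr (Equiv.ofBijective (fun p => ⟨p.2 • p.1.1.rep,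
    (smul_ne_zero_iff_ne p.2).2 p.1.1.rep_nonzero, (h_mk p.1.1 p.2).symm ▸ p.1.2⟩) ⟨?_, ?_⟩)
  · rintro ⟨⟨x, hx⟩, c⟩ ⟨⟨y, hy⟩, d⟩ h
    have h_smul : c • x.rep = d • y.rep := congrArg Subtype.val h
    obtain rfl : x = y := by
      rw [← h_mk x c, ← h_mk y d]
      simp only [h_smul]
    have hcd : c = d := Units.ext (smul_left_injective K x.rep_nonzero h_smul)
    rw [hcd]
  · rintro ⟨v, hv, hS⟩
    obtain ⟨c, hc⟩ := exists_smul_eq_mk_rep K v hv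
    exact ⟨⟨⟨mk K v hv, hS⟩, c⁻¹⟩, Subtype.ext (by simp [← hc])⟩

variable {G : Type*} [Group G] [DistribMulAction G V] [SMulCommClass G K V]

lemma smul_mk_eq_self_iff (g : G) {v : V} (hv : v ≠ 0) :
    g • mk K v hv = mk K v hv ↔ ∃ c : K, g • v = c • v := by
  rw [smul_mk, mk_eq_mk_iff']
  exact exists_congr fun c => eq_comm

-- A point is fixed when the vectors spanning it are eigenvectors; the sum runs over eigenvalues.
lemma card_fixed_mul_card_units [Fintype K] [Finite V] (g : G) (S : Set (Projectivization K V)) :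
    Nat.card {x // x ∈ S ∧ g • x = x} * Nat.card Kˣ =
      ∑ c : K, Nat.card {v : V // g • v = c • v ∧ ∃ hv : v ≠ 0, mk K v hv ∈ S} := by
  have h_card := card_mul_card_units {x | x ∈ S ∧ g • x = x}
  rw [← Nat.card_sigma]
  refine h_card.trans (Nat.card_congr (Equiv.ofBijective (fun z => ⟨z.2.1, z.2.2.2.fst,
    z.2.2.2.snd, (smul_mk_eq_self_iff g z.2.2.2.fst).2 ⟨z.1, z.2.2.1⟩⟩) ⟨?_, ?_⟩)).symm
  · rintro ⟨c, v, hgv, hv, _⟩ ⟨d, v', hgv', _⟩ h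
    obtain rfl : v = v' := congrArg Subtype.val h
    obtain rfl : c = d := smul_left_injective K hv (hgv.symm.trans hgv')
    rfl
  · rintro ⟨v, hv, hS, hfix⟩
    obtain ⟨c, hc⟩ := (smul_mk_eq_self_iff g hv).1 hfix
    exact ⟨⟨c, v, hc, hv, hS⟩, rfl⟩

end ProjectiveCount

/-! ### The unitary group of the Hermitian form -/

section HermitianForm

variable {q : ℕ} {F : Type*} [Field F]

lemma hermForm_smul_smul (a b : F) (u v : Fin 3 → F) :
    hermForm q (a • u) (b • v) = a ^ q * b * hermForm q u v := by
  simp only [hermForm, Pi.smul_apply, smul_eq_mul, mul_pow]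
  ring

lemma hermForm_mk_rep_eq_zero_iff {u v : Fin 3 → F} (hu : u ≠ 0) (hv : v ≠ 0) :
    hermForm q (Projectivization.mk F u hu).rep (Projectivization.mk F v hv).rep = 0 ↔
      hermForm q u v = 0 := by
  obtain ⟨a, ha⟩ := Projectivization.exists_smul_eq_mk_rep F u hu
  obtain ⟨b, hb⟩ := Projectivization.exists_smul_eq_mk_rep F v hv
  rw [← ha, ← hb, Units.smul_def, Units.smul_def, hermForm_smul_smul]
  simp

lemma mk_mem_hermitianPts_iff {v : Fin 3 → F} (hv : v ≠ 0) :
    Projectivization.mk F v hv ∈ hermitianPts q F ↔ hermForm q v v = 0 := by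
  rw [← hermForm_mk_rep_eq_zero_iff hv hv, hermitianPts, Set.mem_ofPred_eq, ← sub_eq_zero, hermForm]
  ring_nf

variable (q F) in
/-- The unitary group of the Hermitian form `hermForm q`. -/
def hermUnitary : Subgroup (GL (Fin 3) F) where
  carrier := {g | ∀ u v : Fin 3 → F, hermForm q (g • u) (g • v) = hermForm q u v}
  one_mem' u v := by rw [one_smul, one_smul]
  mul_mem' {g k} hg hk u v := by rw [mul_smul, mul_smul, hg, hk]
  inv_mem' {g} hg u v := by rw [← hg, smul_inv_smul, smul_inv_smul]

variable (q F) in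
/-- The subgroup of the unitary group that fixes the vector `(0, 0, 1)`. -/
def axialUnitary : Subgroup (GL (Fin 3) F) :=
  hermUnitary q F ⊓ MulAction.stabilizer (GL (Fin 3) F) (Pi.single 2 1 : Fin 3 → F)

lemma axialUnitary_le_hermUnitary : axialUnitary q F ≤ hermUnitary q F := inf_le_left

lemma mem_axialUnitary_of_mem_MlSet [Fintype F] (hF : Fintype.card F = q ^ 2)
    {g : GL (Fin 3) F} (hg : g ∈ MlSet q F) : g ∈ axialUnitary q F := by
  obtain ⟨a, c, τ, hac, hτ, hgval⟩ := hg
  have h_smul (v : Fin 3 → F) :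
      g • v = ![a * v 0 + τ * c ^ q * v 1, c * v 0 + τ * a ^ q * v 1, v 2] := by
    change g.val *ᵥ v = _
    rw [hgval]
    ext i
    fin_cases i <;> simp [Matrix.mulVec, dotProduct, Fin.sum_univ_three]
  refine Subgroup.mem_inf.2 ⟨fun u v => ?_, MulAction.mem_stabilizer_iff.2 ?_⟩
  · rw [h_smul, h_smul]
    simp only [hermForm, Matrix.cons_val_zero, Matrix.cons_val_one, Matrix.cons_val,
      add_pow_of_card hF, mul_pow, pow_pow_of_card hF]
    linear_combination (u 1 ^ q * v 1 * τ ^ (q + 1) - u 0 ^ q * v 0) * hac + u 1 ^ q * v 1 * hτ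
  · rw [h_smul]
    ext i
    fin_cases i <;> simp

lemma smul_mem_hermitianPts_iff {g : GL (Fin 3) F} (hg : g ∈ hermUnitary q F)
    (x : Projectivization F (Fin 3 → F)) : g • x ∈ hermitianPts q F ↔ x ∈ hermitianPts q F := by
  induction x using Projectivization.ind with
  | h v hv => rw [Projectivization.smul_mk, mk_mem_hermitianPts_iff, mk_mem_hermitianPts_iff, hg]

variable (q) in
/-- The points of the Hermitian curve fixed by `g`. -/
def hermitianFixedPts (g : GL (Fin 3) F) : Set (Projectivization F (Fin 3 → F)) :=
  {x | x ∈ hermitianPts q F ∧ g • x = x}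

lemma card_hermitianFixedPts_conj {C : GL (Fin 3) F} (hC : C ∈ hermUnitary q F)
    (g : GL (Fin 3) F) :
    Nat.card (hermitianFixedPts q (C * g * C⁻¹)) = Nat.card (hermitianFixedPts q g) := by
  refine (Nat.card_congr ((MulAction.toPerm C).subtypeEquiv fun x => ?_)).symm
  refine and_congr (smul_mem_hermitianPts_iff hC x).symm ?_
  rw [MulAction.toPerm_apply, mul_smul, mul_smul, inv_smul_smul, smul_left_cancel_iff]

lemma numOrbits_hermitianPts_mul_card [Finite F] {L : Subgroup (GL (Fin 3) F)} [Fintype L]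
    (hL : L ≤ hermUnitary q F) :
    numOrbits L (hermitianPts q F) * Nat.card L = ∑ g : L, Nat.card (hermitianFixedPts q g.1) := by
  have h_orbit : (fun x => {y | ∃ g ∈ L, glAct g x = y}) = MulAction.orbit L := by
    ext x y
    exact ⟨fun ⟨g, hg, hgx⟩ => ⟨⟨g, hg⟩, hgx⟩, fun ⟨g, hgx⟩ => ⟨g, g.2, hgx⟩⟩
  rw [numOrbits, h_orbit]
  exact card_orbit_image_mul_card _ fun g x => (smul_mem_hermitianPts_iff (hL g.2) x).2

end HermitianForm

/-! ### Fixed points of diagonal matrices and swaps -/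

section FiberSums

variable {α : Type*} [DecidableEq α] (d : Fin 3 → α)

lemma card_fiber_fin_three (c : α) : Fintype.card {i // d i = c} =
    (if d 0 = c then 1 else 0) + (if d 1 = c then 1 else 0) + (if d 2 = c then 1 else 0) := by
  rw [Fintype.card_subtype, Finset.card_filter, Fin.sum_univ_three]

variable [Fintype α]

lemma sum_card_fiber_choose_two : ∑ c, (Fintype.card {i // d i = c}).choose 2 =
    (if d 0 = d 1 then 1 else 0) + (if d 0 = d 2 then 1 else 0) + (if d 1 = d 2 then 1 else 0) := by
  have h_pairs (c : α) : (Fintype.card {i // d i = c}).choose 2 =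
      (if d 1 = c then if d 0 = c then 1 else 0 else 0) +
        (if d 2 = c then if d 0 = c then 1 else 0 else 0) +
        (if d 2 = c then if d 1 = c then 1 else 0 else 0) := by
    rw [card_fiber_fin_three]
    split_ifs <;> rfl
  simp only [h_pairs, Finset.sum_add_distrib, Finset.sum_ite_eq, Finset.mem_univ, if_true]

lemma sum_card_fiber_choose_three : ∑ c, (Fintype.card {i // d i = c}).choose 3 =
    if d 0 = d 2 ∧ d 1 = d 2 then 1 else 0 := by
  have h_triple (c : α) : (Fintype.card {i // d i = c}).choose 3 =
      if d 2 = c then if d 0 = c ∧ d 1 = c then 1 else 0 else 0 := by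
    rw [card_fiber_fin_three]
    split_ifs <;> first | rfl | simp_all
  simp only [h_triple, Finset.sum_ite_eq, Finset.mem_univ, if_true]

end FiberSums

section Diagonal

variable {F : Type*} [Field F]

variable (F) in
/-- The homomorphism sending `(x, y)` to the invertible matrix `diag(x, y, 1)`. -/
def diagGL : Fˣ × Fˣ →* GL (Fin 3) F :=
  ((Units.map (Matrix.diagonalRingHom (Fin 3) F).toMonoidHom).comp
    MulEquiv.piUnits.symm.toMonoidHom).comp
      { toFun a := ![a.1, a.2, 1]
        map_one' := by ext i; fin_cases i <;> rfl
        map_mul' a b := by ext i; fin_cases i <;> simp }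

lemma diagGL_val (a : Fˣ × Fˣ) :
    (diagGL F a).val = Matrix.diagonal ![(a.1 : F), (a.2 : F), 1] := by
  refine congrArg Matrix.diagonal (funext fun i => ?_)
  fin_cases i <;> rfl

lemma diagGL_smul_apply (a : Fˣ × Fˣ) (v : Fin 3 → F) (i : Fin 3) :
    (diagGL F a • v) i = (![a.1, a.2, 1] : Fin 3 → F) i * v i := by
  change ((diagGL F a).val *ᵥ v) i = _
  rw [diagGL_val, Matrix.mulVec_diagonal]

lemma diagGL_injective : Function.Injective (diagGL F) := by
  intro a b hab
  have h_diag : ![(a.1 : F), (a.2 : F), 1] = ![(b.1 : F), (b.2 : F), 1] :=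
    Matrix.diagonal_injective ((diagGL_val a).symm.trans (hab ▸ diagGL_val b))
  exact Prod.ext (Units.ext (congrFun h_diag 0)) (Units.ext (congrFun h_diag 1))

end Diagonal

section CharTwo

variable {q : ℕ} {F : Type*} [Field F] [CharP F 2]

lemma hermForm_self (v : Fin 3 → F) : hermForm q v v = ∑ i, v i ^ (q + 1) := by
  rw [hermForm, CharTwo.neg_eq, Fin.sum_univ_three, pow_succ, pow_succ, pow_succ]

variable [Fintype F]

lemma card_isotropic_eigenvectors_diagGL [DecidableEq F] (hF : Fintype.card F = q ^ 2)
    (a : Fˣ × Fˣ) (c : F) :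
    (Nat.card {v : Fin 3 → F // diagGL F a • v = c • v ∧
        ∃ hv : v ≠ 0, Projectivization.mk F v hv ∈ hermitianPts q F} : ℤ) =
      Nat.card Fˣ *
        ((q + 1) * (Fintype.card {i // (![a.1, a.2, 1] : Fin 3 → F) i = c}).choose 2 +
          (q ^ 3 - 3 * q - 2) *
            (Fintype.card {i // (![a.1, a.2, 1] : Fin 3 → F) i = c}).choose 3) := by
  have hq := one_lt_of_card hF
  have h_card : (Nat.card Fˣ : ℤ) = (q - 1) * (q + 1) := by
    rw [card_units_of_card hF, Nat.cast_mul, Nat.cast_sub hq.le]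
    simp
  have h_coord (v : Fin 3 → F) : (diagGL F a • v = c • v ∧
      ∃ hv : v ≠ 0, Projectivization.mk F v hv ∈ hermitianPts q F) ↔
      (∀ i, (![a.1, a.2, 1] : Fin 3 → F) i * v i = c * v i) ∧ v ≠ 0 ∧
        ∑ i, v i ^ (q + 1) = 0 := by
    simp only [funext_iff (f := diagGL F a • v), diagGL_smul_apply, Pi.smul_apply, smul_eq_mul,
      mk_mem_hermitianPts_iff, hermForm_self, exists_prop]
  have h_count := card_isotropic_diagonal_eigenvectors hF ![(a.1 : F), (a.2 : F), 1] c
  rw [← Nat.card_congr (Equiv.subtypeEquivRight h_coord)] at h_count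
  refine mul_left_cancel₀ (Nat.cast_ne_zero.2 (by omega : q ≠ 0)) (h_count.trans ?_)
  have h_le : Fintype.card {i // (![a.1, a.2, 1] : Fin 3 → F) i = c} ≤ 3 :=
    Fintype.card_subtype_le _
  generalize Fintype.card {i // (![a.1, a.2, 1] : Fin 3 → F) i = c} = m at h_le ⊢
  rw [h_card]
  interval_cases m <;> simp [Nat.choose] <;> ring

lemma card_hermitianFixedPts_diagGL [DecidableEq F] (hF : Fintype.card F = q ^ 2)
    (a : Fˣ × Fˣ) :
    (Nat.card (hermitianFixedPts q (diagGL F a)) : ℤ) =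
      (q + 1) * ((if a.1 = a.2 then 1 else 0) + (if a.1 = 1 then 1 else 0) +
        (if a.2 = 1 then 1 else 0)) +
      (q ^ 3 - 3 * q - 2) * (if a.1 = 1 ∧ a.2 = 1 then 1 else 0) := by
  have h_two := sum_card_fiber_choose_two ![(a.1 : F), (a.2 : F), 1]
  have h_three := sum_card_fiber_choose_three ![(a.1 : F), (a.2 : F), 1]
  simp only [Matrix.cons_val_zero, Matrix.cons_val_one, Matrix.cons_val, Units.val_inj,
    Units.val_eq_one] at h_two h_three
  have h_fixed := congrArg (Nat.cast : ℕ → ℤ)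
    (card_fixed_mul_card_units (diagGL F a) (hermitianPts q F))
  push_cast [card_isotropic_eigenvectors_diagGL hF] at h_fixed
  rw [← Finset.mul_sum, mul_comm] at h_fixed
  refine mul_left_cancel₀ (Nat.cast_ne_zero.2 Nat.card_pos.ne') (h_fixed.trans ?_)
  rw [Finset.sum_add_distrib, ← Finset.mul_sum, ← Finset.mul_sum, ← Nat.cast_sum,
    ← Nat.cast_sum, h_two, h_three]
  push_cast
  rfl

end CharTwo

section Swap

variable {F : Type*} [Field F]

variable (F) in
/-- The permutation matrix that interchanges the first two coordinates. -/
def swapGL : GL (Fin 3) F := Matrix.permMatrixHom.toHomUnits (Equiv.swap 0 1)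

lemma swapGL_smul (v : Fin 3 → F) : swapGL F • v = v ∘ Equiv.swap 0 1 :=
  (Matrix.permMatrix_mulVec _).trans (by rw [Equiv.swap_inv])

lemma swapGL_mul_self : swapGL F * swapGL F = 1 := by
  rw [swapGL, ← map_mul, Equiv.swap_mul_self, map_one]

lemma ext_of_smul_single {g k : GL (Fin 3) F}
    (h : ∀ i, g • (Pi.single i 1 : Fin 3 → F) = k • (Pi.single i 1 : Fin 3 → F)) : g = k :=
  Units.ext (Matrix.ext_of_mulVec_single h)

lemma diagGL_smul_single (a : Fˣ × Fˣ) (i : Fin 3) (x : F) :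
    diagGL F a • (Pi.single i x : Fin 3 → F) =
      Pi.single i ((![a.1, a.2, 1] : Fin 3 → F) i * x) := by
  ext j
  rw [diagGL_smul_apply]
  obtain rfl | hij := eq_or_ne j i
  · simp
  · simp [hij]

lemma swapGL_smul_single (i : Fin 3) (x : F) :
    swapGL F • (Pi.single i x : Fin 3 → F) = Pi.single (Equiv.swap 0 1 i) x := by
  rw [swapGL_smul]
  ext j
  simp [Pi.single_apply, Equiv.swap_apply_eq_iff]

lemma swapGL_mul_diagGL (a : Fˣ × Fˣ) :
    swapGL F * diagGL F a = diagGL F a.swap * swapGL F := by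
  refine ext_of_smul_single fun i => ?_
  rw [mul_smul, mul_smul, diagGL_smul_single, swapGL_smul_single, swapGL_smul_single,
    diagGL_smul_single]
  fin_cases i <;> simp [Equiv.swap_apply_of_ne_of_ne]

lemma conj_diagGL_mul_swapGL (a b : Fˣ × Fˣ) :
    diagGL F b * swapGL F * diagGL F a * (diagGL F b * swapGL F)⁻¹ = diagGL F a.swap := by
  rw [mul_inv_eq_iff_eq_mul, mul_assoc, swapGL_mul_diagGL, ← mul_assoc, ← mul_assoc, ← map_mul,
    ← map_mul, mul_comm]

variable {q : ℕ}

lemma hermForm_single_right (u : Fin 3 → F) (i : Fin 3) (x : F) :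
    hermForm q u (Pi.single i x) = (![-1, 1, 1] : Fin 3 → F) i * u i ^ q * x := by
  fin_cases i <;> simp [hermForm]

lemma hermForm_single_self (i : Fin 3) (x : F) :
    hermForm q (Pi.single i x) (Pi.single i x) = (![-1, 1, 1] : Fin 3 → F) i * x ^ (q + 1) := by
  rw [hermForm_single_right, Pi.single_eq_same, mul_assoc, ← pow_succ]

end Swap

section SwapFixedPoints

variable {q : ℕ} {F : Type*} [Field F]

lemma diagGL_mul_swapGL_smul (b : Fˣ × Fˣ) (v : Fin 3 → F) :
    (diagGL F b * swapGL F) • v = ![b.1 * v 1, b.2 * v 0, v 2] := by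
  ext i
  rw [mul_smul, swapGL_smul, diagGL_smul_apply]
  fin_cases i <;> simp [Equiv.swap_apply_of_ne_of_ne]

variable [CharP F 2]

lemma pow_succ_eq_one_of_diagGL_mul_swapGL_mem {b : Fˣ × Fˣ}
    (hb : diagGL F b * swapGL F ∈ hermUnitary q F) :
    (b.1 : F) ^ (q + 1) = 1 ∧ (b.2 : F) ^ (q + 1) = 1 := by
  have h_fst := hb (Pi.single 1 1) (Pi.single 1 1)
  have h_snd := hb (Pi.single 0 1) (Pi.single 0 1)
  simp only [mul_smul, swapGL_smul_single, diagGL_smul_single, Equiv.swap_apply_left,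
    Equiv.swap_apply_right, hermForm_single_self] at h_fst h_snd
  exact ⟨by simpa [CharTwo.neg_eq] using h_fst, by simpa [CharTwo.neg_eq] using h_snd⟩

lemma mk_eq_of_diagGL_mul_swapGL_smul_mk_eq {b : Fˣ × Fˣ} {δ : F}
    (hδ : (b.1 * b.2 : F) = δ ^ 2) (hb_norm : (b.1 : F) ^ (q + 1) = 1) (hδ_norm : δ ^ (q + 1) = 1)
    {v : Fin 3 → F} (hv : v ≠ 0) (h_isotropic : hermForm q v v = 0)
    (h_fixed : (diagGL F b * swapGL F) • Projectivization.mk F v hv = Projectivization.mk F v hv)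
    (hδv : ![(b.1 : F), δ, 0] ≠ 0) :
    Projectivization.mk F v hv = Projectivization.mk F ![(b.1 : F), δ, 0] hδv := by
  obtain ⟨c, hc⟩ := (smul_mk_eq_self_iff _ hv).1 h_fixed
  rw [diagGL_mul_swapGL_smul] at hc
  have h_zero : b.1 * v 1 = c * v 0 := congrFun hc 0
  have h_one : b.2 * v 0 = c * v 1 := congrFun hc 1
  have h_ratio : b.1 * v 1 = δ * v 0 := CharTwo.sq_injective <| by
    linear_combination (b.1 * v 1) * h_zero - b.1 * v 0 * h_one + v 0 ^ 2 * hδ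
  have h_norm : v 1 ^ (q + 1) = v 0 ^ (q + 1) := by
    simpa only [mul_pow, hb_norm, hδ_norm, one_mul] using congrArg (· ^ (q + 1)) h_ratio
  have h_two : v 2 = 0 := by
    rw [hermForm_self, Fin.sum_univ_three, h_norm, CharTwo.add_self_eq_zero,
      zero_add] at h_isotropic
    exact eq_zero_of_pow_eq_zero h_isotropic
  refine (Projectivization.mk_eq_mk_iff' F _ _ hv hδv).2 ⟨v 0 / b.1, funext fun i => ?_⟩
  fin_cases i
  · simp
  · exact (div_mul_eq_mul_div _ _ _).trans <|
      (div_eq_iff b.1.ne_zero).2 ((mul_comm _ _).trans (h_ratio.symm.trans (mul_comm _ _)))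
  · simp [h_two]

lemma card_hermitianFixedPts_diagGL_mul_swapGL [Finite F] {b : Fˣ × Fˣ}
    (hb : diagGL F b * swapGL F ∈ hermUnitary q F) :
    Nat.card (hermitianFixedPts q (diagGL F b * swapGL F)) = 1 := by
  obtain ⟨δ, hδ⟩ := isSquare_of_charTwo' (b.1 * b.2 : F)
  rw [← sq] at hδ
  have hδv : ![(b.1 : F), δ, 0] ≠ 0 := fun h => b.1.ne_zero (congrFun h 0)
  obtain ⟨hb_fst, hb_snd⟩ := pow_succ_eq_one_of_diagGL_mul_swapGL_mem hb
  have hδ_norm : δ ^ (q + 1) = 1 := CharTwo.sq_injective <| by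
    simp only [← pow_mul, mul_comm (q + 1) 2]
    rw [pow_mul, ← hδ, mul_pow, hb_fst, hb_snd, one_mul, one_pow]
  refine Nat.card_eq_one_iff_exists.2 ⟨⟨Projectivization.mk F _ hδv, ?_, ?_⟩, ?_⟩
  · rw [mk_mem_hermitianPts_iff, hermForm_self]
    simp [Fin.sum_univ_three, hb_fst, hδ_norm, CharTwo.add_self_eq_zero]
  · refine (smul_mk_eq_self_iff _ hδv).2 ⟨δ, ?_⟩
    rw [diagGL_mul_swapGL_smul]
    ext i
    fin_cases i
    · simp [mul_comm]
    · simp [mul_comm _ (b.1 : F), hδ, sq]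
    · simp
  · rintro ⟨x, hx, hgx⟩
    induction x using Projectivization.ind with
    | h v hv =>
      exact Subtype.ext <| mk_eq_of_diagGL_mul_swapGL_smul_mk_eq hδ hb_fst hδ_norm hv
        ((mk_mem_hermitianPts_iff hv).1 hx) hgx hδv

end SwapFixedPoints

section CoordPoint

variable {F : Type*} [Field F]

variable (F) in
/-- The vertex `(0 : ⋯ : 1 : ⋯ : 0)` of the coordinate triangle, with `1` in position `i`. -/
def coordPoint (i : Fin 3) : Projectivization F (Fin 3 → F) :=
  Projectivization.mk F (Pi.single i 1) (Pi.single_ne_zero_iff.2 one_ne_zero)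

lemma mk_eq_coordPoint_two (h : ![(0 : F), 0, 1] ≠ 0) :
    Projectivization.mk F ![0, 0, 1] h = coordPoint F 2 := by
  have h_single : ![(0 : F), 0, 1] = Pi.single 2 1 := by
    ext i
    fin_cases i <;> rfl
  simp only [h_single, coordPoint]

lemma smul_coordPoint (g : GL (Fin 3) F) (i : Fin 3) :
    g • coordPoint F i = Projectivization.mk F (g • Pi.single i 1)
      ((smul_ne_zero_iff_ne g).2 (Pi.single_ne_zero_iff.2 one_ne_zero)) := rfl

lemma diagGL_smul_coordPoint (a : Fˣ × Fˣ) (i : Fin 3) :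
    diagGL F a • coordPoint F i = coordPoint F i := by
  refine (smul_mk_eq_self_iff _ _).2
    ⟨(![a.1, a.2, 1] : Fin 3 → F) i, (diagGL_smul_single a i 1).trans ?_⟩
  rw [← smul_eq_mul, Pi.single_smul]

lemma swapGL_smul_coordPoint (i : Fin 3) :
    swapGL F • coordPoint F i = coordPoint F (Equiv.swap 0 1 i) := by
  simp only [smul_coordPoint, swapGL_smul_single]
  rfl

lemma exists_eq_diagGL {g : GL (Fin 3) F}
    (hg : g • (Pi.single 2 1 : Fin 3 → F) = Pi.single 2 1)
    (h_zero : g • coordPoint F 0 = coordPoint F 0) (h_one : g • coordPoint F 1 = coordPoint F 1) :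
    ∃ a, g = diagGL F a := by
  obtain ⟨x, hx⟩ := (smul_mk_eq_self_iff _ _).1 h_zero
  obtain ⟨y, hy⟩ := (smul_mk_eq_self_iff _ _).1 h_one
  have h_ne (i : Fin 3) : g • (Pi.single i 1 : Fin 3 → F) ≠ 0 :=
    (smul_ne_zero_iff_ne g).2 (Pi.single_ne_zero_iff.2 one_ne_zero)
  have hx_ne : x ≠ 0 := fun h => h_ne 0 (by rw [hx, h, zero_smul])
  have hy_ne : y ≠ 0 := fun h => h_ne 1 (by rw [hy, h, zero_smul])
  refine ⟨(Units.mk0 x hx_ne, Units.mk0 y hy_ne), ext_of_smul_single fun i => ?_⟩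
  rw [diagGL_smul_single]
  fin_cases i
  · exact hx.trans (by simp [← Pi.single_smul])
  · exact hy.trans (by simp [← Pi.single_smul])
  · exact hg.trans (by simp)

lemma exists_eq_diagGL_mul_swapGL {g : GL (Fin 3) F}
    (hg : g • (Pi.single 2 1 : Fin 3 → F) = Pi.single 2 1)
    (h_zero : g • coordPoint F 0 = coordPoint F 1) (h_one : g • coordPoint F 1 = coordPoint F 0) :
    ∃ a, g = diagGL F a * swapGL F := by
  obtain ⟨a, ha⟩ := exists_eq_diagGL (g := g * swapGL F)
    (by rw [mul_smul, swapGL_smul_single, Equiv.swap_apply_of_ne_of_ne (by decide) (by decide), hg])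
    (by rw [mul_smul, swapGL_smul_coordPoint, Equiv.swap_apply_left, h_one])
    (by rw [mul_smul, swapGL_smul_coordPoint, Equiv.swap_apply_right, h_zero])
  exact ⟨a, by rw [← ha, mul_assoc, swapGL_mul_self, mul_one]⟩

lemma coordPoint_injective : Function.Injective (coordPoint F) := by
  intro i j hij
  obtain ⟨c, hc⟩ := (Projectivization.mk_eq_mk_iff' F _ _ _ _).1 hij
  by_contra h_ne
  simpa [h_ne] using congrFun hc i

lemma exists_eq_diagGL_or_eq_diagGL_mul_swapGL {g : GL (Fin 3) F}
    (hg : g • (Pi.single 2 1 : Fin 3 → F) = Pi.single 2 1)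
    (h_perm : ∀ i, ∃ j, g • coordPoint F i = coordPoint F j) :
    ∃ a, g = diagGL F a ∨ g = diagGL F a * swapGL F := by
  choose σ hσ using h_perm
  have hσ_inj : Function.Injective σ := fun i j hij =>
    coordPoint_injective (MulAction.injective g ((hσ i).trans (hij ▸ (hσ j).symm)))
  have hσ_two : σ 2 = 2 := coordPoint_injective <| by
    rw [← hσ]
    exact (smul_mk_eq_self_iff _ _).2 ⟨1, by rw [hg, one_smul]⟩
  have hσ_cases : σ 0 = 0 ∧ σ 1 = 1 ∨ σ 0 = 1 ∧ σ 1 = 0 := by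
    have h_zero : σ 0 ≠ 2 := fun h => absurd (hσ_inj (h.trans hσ_two.symm)) (by decide)
    have h_one : σ 1 ≠ 2 := fun h => absurd (hσ_inj (h.trans hσ_two.symm)) (by decide)
    have h_ne : σ 0 ≠ σ 1 := hσ_inj.ne (by decide)
    omega
  rcases hσ_cases with ⟨h_zero, h_one⟩ | ⟨h_zero, h_one⟩
  · obtain ⟨a, ha⟩ := exists_eq_diagGL hg (by rw [hσ, h_zero]) (by rw [hσ, h_one])
    exact ⟨a, .inl ha⟩
  · obtain ⟨a, ha⟩ := exists_eq_diagGL_mul_swapGL hg (by rw [hσ, h_zero]) (by rw [hσ, h_one])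
    exact ⟨a, .inr ha⟩

end CoordPoint

/-! ### Unitary frames -/

section Frame

variable {q : ℕ} {F : Type*} [Field F]

lemma hermForm_single_single {i j : Fin 3} (hij : i ≠ j) (hq : q ≠ 0) (x y : F) :
    hermForm q (Pi.single i x) (Pi.single j y) = 0 := by
  rw [hermForm_single_right, Pi.single_eq_of_ne hij.symm, zero_pow hq, mul_zero, zero_mul]

lemma eq_zero_of_forall_hermForm_eq_zero {u : Fin 3 → F} (hu : ∀ v, hermForm q u v = 0) :
    u = 0 := by
  funext i
  have h_coord := hu (Pi.single i 1)
  rw [hermForm_single_right, mul_one] at h_coord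
  refine eq_zero_of_pow_eq_zero ((mul_eq_zero.1 h_coord).resolve_left ?_)
  fin_cases i <;> simp

variable [Fintype F]

lemma hermForm_sum_smul_sum_smul (hF : Fintype.card F = q ^ 2) (u v : Fin 3 → F)
    (b : Fin 3 → Fin 3 → F) :
    hermForm q (∑ i, u i • b i) (∑ j, v j • b j) =
      ∑ i, ∑ j, u i ^ q * v j * hermForm q (b i) (b j) := by
  simp only [hermForm, Fin.sum_univ_three, Pi.add_apply, Pi.smul_apply, smul_eq_mul,
    add_pow_of_card hF, mul_pow]
  ring

lemma exists_mem_hermUnitary_smul_single_eq (hF : Fintype.card F = q ^ 2)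
    (b : Fin 3 → Fin 3 → F)
    (hb : ∀ i j, hermForm q (b i) (b j) =
      hermForm q (Pi.single i 1 : Fin 3 → F) (Pi.single j 1)) :
    ∃ C ∈ hermUnitary q F, ∀ i, C • (Pi.single i 1 : Fin 3 → F) = b i := by
  have hq := one_lt_of_card hF
  set M : Matrix (Fin 3) (Fin 3) F := (Matrix.of b)ᵀ
  have hM (u : Fin 3 → F) : M *ᵥ u = ∑ i, u i • b i := by
    rw [Matrix.mulVec_transpose, Matrix.vecMul_eq_sum]
    rfl
  have h_form (u v : Fin 3 → F) : hermForm q (M *ᵥ u) (M *ᵥ v) = hermForm q u v := by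
    rw [hM, hM, hermForm_sum_smul_sum_smul hF]
    simp only [hb]
    rw [← hermForm_sum_smul_sum_smul hF, ← pi_eq_sum_univ', ← pi_eq_sum_univ']
  have h_det : M.det ≠ 0 := fun h_det => by
    obtain ⟨u, hu, hMu⟩ := Matrix.exists_mulVec_eq_zero_iff.2 h_det
    refine hu (eq_zero_of_forall_hermForm_eq_zero (q := q) fun v => ?_)
    rw [← h_form, hMu]
    simp [hermForm, (zero_lt_one.trans hq).ne']
  refine ⟨Matrix.GeneralLinearGroup.mkOfDetNeZero M h_det, h_form, fun i => ?_⟩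
  exact (Matrix.mulVec_single_one M i)

lemma hermForm_self_pow (hF : Fintype.card F = q ^ 2) (v : Fin 3 → F) :
    hermForm q v v ^ q = hermForm q v v := by
  simp only [hermForm, ← conjHom_apply hF, map_add, map_mul, map_neg]
  simp only [conjHom_apply, pow_pow_of_card hF]
  ring

lemma exists_mk_eq_hermForm_self_eq (hF : Fintype.card F = q ^ 2)
    {x : Projectivization F (Fin 3 → F)} (hx : hermForm q x.rep x.rep ≠ 0) {a : F}
    (ha_ne : a ≠ 0) (ha : a ^ q = a) :
    ∃ (v : Fin 3 → F) (hv : v ≠ 0), Projectivization.mk F v hv = x ∧ hermForm q v v = a := by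
  obtain ⟨z, hz⟩ := exists_pow_succ_eq hF (a := a / hermForm q x.rep x.rep)
    (by rw [div_pow, ha, hermForm_self_pow hF])
  have hz_ne : z ≠ 0 := fun h => div_ne_zero ha_ne hx (by rw [← hz, h, zero_pow q.succ_ne_zero])
  refine ⟨z • x.rep, smul_ne_zero hz_ne x.rep_nonzero, ?_, ?_⟩
  · exact ((Projectivization.mk_eq_mk_iff' F _ _ _ x.rep_nonzero).2 ⟨z, rfl⟩).trans x.mk_rep
  · rw [hermForm_smul_smul, ← pow_succ, hz, div_mul_cancel₀ _ hx]

variable (q) in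
/-- A self-polar triangle of the Hermitian form, with ordered vertices: no vertex is isotropic and
any two are orthogonal (so the vertices are distinct). -/
structure IsSelfPolarTriangle (T : Fin 3 → Projectivization F (Fin 3 → F)) : Prop where
  hermForm_self_ne_zero : ∀ i, hermForm q (T i).rep (T i).rep ≠ 0
  hermForm_eq_zero : Pairwise fun i j => hermForm q (T i).rep (T j).rep = 0

lemma IsSelfPolarTriangle.exists_smul_coordPoint_eq (hF : Fintype.card F = q ^ 2)
    {T : Fin 3 → Projectivization F (Fin 3 → F)} (hT : IsSelfPolarTriangle q T) :
    ∃ C ∈ hermUnitary q F, ∀ i, C • coordPoint F i = T i := by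
  have hq := one_lt_of_card hF
  have h_norm (i : Fin 3) : (![-1, 1, 1] : Fin 3 → F) i ^ q = (![-1, 1, 1] : Fin 3 → F) i := by
    fin_cases i <;> simp [← conjHom_apply hF]
  have h_ne (i : Fin 3) : (![-1, 1, 1] : Fin 3 → F) i ≠ 0 := by
    fin_cases i <;> simp
  choose b hb_ne hb_mk hb_self using fun i =>
    exists_mk_eq_hermForm_self_eq hF (hT.hermForm_self_ne_zero i) (h_ne i) (h_norm i)
  obtain ⟨C, hC, hCb⟩ := exists_mem_hermUnitary_smul_single_eq hF b fun i j => by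
    obtain rfl | hij := eq_or_ne i j
    · rw [hb_self, hermForm_single_self, one_pow, mul_one]
    · rw [hermForm_single_single hij (zero_lt_one.trans hq).ne',
        ← hermForm_mk_rep_eq_zero_iff (hb_ne i) (hb_ne j), hb_mk, hb_mk, hT.hermForm_eq_zero hij]
  exact ⟨C, hC, fun i => by simp only [smul_coordPoint, hCb, hb_mk]⟩

end Frame

section AxialFrame

variable {q : ℕ} {F : Type*} [Field F]

lemma conj_inv_smul_single_two {C g : GL (Fin 3) F} (hC : C • coordPoint F 2 = coordPoint F 2)
    (hg : g • (Pi.single 2 1 : Fin 3 → F) = Pi.single 2 1) :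
    (C⁻¹ * g * C) • (Pi.single 2 1 : Fin 3 → F) = Pi.single 2 1 := by
  obtain ⟨c, hc⟩ := (smul_mk_eq_self_iff _ _).1 hC
  rw [mul_smul, mul_smul, hc, smul_comm g c, hg, ← hc, inv_smul_smul]

lemma diagGL_self_smul (x : Fˣ) (v : Fin 3 → F) :
    diagGL F (x, x) • v = (x : F) • v + ((1 - x) * v 2) • Pi.single 2 1 := by
  ext i
  rw [diagGL_smul_apply]
  fin_cases i <;> simp
  ring

lemma hermForm_single_two_left (hq : q ≠ 0) (v : Fin 3 → F) :
    hermForm q (Pi.single 2 1) v = v 2 := by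
  simp [hermForm, hq]

lemma conj_diagGL_self (hq : q ≠ 0) {C : GL (Fin 3) F} (hC : C ∈ hermUnitary q F)
    (hC_two : C • coordPoint F 2 = coordPoint F 2) (x : Fˣ) :
    C * diagGL F (x, x) * C⁻¹ = diagGL F (x, x) := by
  obtain ⟨c, hc⟩ := (smul_mk_eq_self_iff _ _).1 hC_two
  have h_axis (v : Fin 3 → F) : c ^ q * (C • v) 2 = v 2 := by
    have h_form := hC (Pi.single 2 1) v
    rwa [hc, ← one_smul F (C • v), hermForm_smul_smul, mul_one, hermForm_single_two_left hq,
      hermForm_single_two_left hq] at h_form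
  have h_norm : c ^ q * c = 1 := by simpa [hc] using h_axis (Pi.single 2 1)
  refine mul_inv_eq_iff_eq_mul.2 (ext_of_smul_single fun i => ?_)
  generalize (Pi.single i 1 : Fin 3 → F) = v
  rw [mul_smul, mul_smul, diagGL_self_smul, diagGL_self_smul, smul_add, smul_comm C, smul_comm C,
    hc, smul_smul]
  congr 2
  linear_combination (1 - x : F) * (c * -h_axis v + (C • v) 2 * h_norm)

end AxialFrame

/-! ### Orbit count for monomial groups -/

section DiagPairs

variable {q : ℕ} {F : Type*} [Field F] {C : GL (Fin 3) F} {L : Subgroup (GL (Fin 3) F)}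

variable (C L) in
/-- The group of pairs `(x, y)` for which the matrix acting as `diag(x, y, 1)` in the frame formed
by the columns of `C` lies in `L`. -/
def diagPairs : Subgroup (Fˣ × Fˣ) := L.comap ((MulAut.conj C).toMonoidHom.comp (diagGL F))

lemma mem_diagPairs {a : Fˣ × Fˣ} : a ∈ diagPairs C L ↔ C * diagGL F a * C⁻¹ ∈ L := Iff.rfl

lemma conj_diagGL_injective : Function.Injective fun a => C * diagGL F a * C⁻¹ :=
  (MulAut.conj C).injective.comp diagGL_injective

lemma exists_eq_conj_diagGL_or_swap (hC : C • coordPoint F 2 = coordPoint F 2) {g : GL (Fin 3) F}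
    (hg : g • (Pi.single 2 1 : Fin 3 → F) = Pi.single 2 1)
    (h_perm : ∀ i, ∃ j, g • C • coordPoint F i = C • coordPoint F j) :
    ∃ a, g = C * diagGL F a * C⁻¹ ∨ g = C * (diagGL F a * swapGL F) * C⁻¹ := by
  have h_iff (k : GL (Fin 3) F) : C⁻¹ * g * C = k ↔ g = C * k * C⁻¹ := by
    rw [mul_assoc, inv_mul_eq_iff_eq_mul, eq_mul_inv_iff_mul_eq]
  simp only [← h_iff]
  refine exists_eq_diagGL_or_eq_diagGL_mul_swapGL (conj_inv_smul_single_two hC hg) fun i => ?_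
  obtain ⟨j, hj⟩ := h_perm i
  exact ⟨j, by rw [mul_smul, mul_smul, hj, inv_smul_smul]⟩

lemma card_diagPairs (hC : C • coordPoint F 2 = coordPoint F 2)
    (hL : ∀ g ∈ L, g • (Pi.single 2 1 : Fin 3 → F) = Pi.single 2 1) :
    Nat.card (diagPairs C L) =
      Nat.card {g | g ∈ L ∧ ∀ i, g • C • coordPoint F i = C • coordPoint F i} := by
  have h_image : {g | g ∈ L ∧ ∀ i, g • C • coordPoint F i = C • coordPoint F i} =
      (fun a => C * diagGL F a * C⁻¹) '' diagPairs C L := by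
    ext g
    constructor
    · rintro ⟨hg, hg_fix⟩
      have h_conj (i : Fin 3) : (C⁻¹ * g * C) • coordPoint F i = coordPoint F i := by
        rw [mul_smul, mul_smul, hg_fix, inv_smul_smul]
      obtain ⟨a, ha⟩ :=
        exists_eq_diagGL (conj_inv_smul_single_two hC (hL g hg)) (h_conj 0) (h_conj 1)
      have hga : C * diagGL F a * C⁻¹ = g := by rw [← ha]; group
      exact ⟨a, mem_diagPairs.2 (hga ▸ hg), hga⟩
    · rintro ⟨a, ha, rfl⟩
      refine ⟨ha, fun i => ?_⟩
      rw [mul_smul, mul_smul, inv_smul_smul, diagGL_smul_coordPoint]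
  rw [h_image]
  exact (Nat.card_image_of_injective conj_diagGL_injective _).symm

lemma swap_mem_diagPairs {a b : Fˣ × Fˣ} (hb : C * (diagGL F b * swapGL F) * C⁻¹ ∈ L)
    (ha : a ∈ diagPairs C L) : a.swap ∈ diagPairs C L := by
  have h_conj := L.mul_mem (L.mul_mem hb (mem_diagPairs.1 ha)) (L.inv_mem hb)
  rw [mem_diagPairs, ← conj_diagGL_mul_swapGL a b]
  convert h_conj using 1
  group

lemma card_diagonalPart_diagPairs (hq : q ≠ 0) (hC : C ∈ hermUnitary q F)
    (hC_two : C • coordPoint F 2 = coordPoint F 2) (hL : L ≤ hermUnitary q F) :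
    Nat.card (diagonalPart (diagPairs C L)) =
      Nat.card ((L : Set (GL (Fin 3) F)) ∩ ZSet q F : Set (GL (Fin 3) F)) := by
  have h_image : (L : Set (GL (Fin 3) F)) ∩ ZSet q F =
      (fun x => diagGL F (x, x)) '' diagonalPart (diagPairs C L) := by
    ext g
    simp only [Set.mem_image, SetLike.mem_coe, mem_diagonalPart, mem_diagPairs,
      conj_diagGL_self hq hC hC_two]
    constructor
    · rintro ⟨hg, ε, hε, hgε⟩
      have hε_ne : ε ≠ 0 := fun h => by simp [h] at hε
      have hg_diag : diagGL F (Units.mk0 ε hε_ne, Units.mk0 ε hε_ne) = g :=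
        Units.ext ((diagGL_val _).trans hgε.symm)
      exact ⟨_, hg_diag ▸ hg, hg_diag⟩
    · rintro ⟨x, hx, rfl⟩
      have h_form := hL hx (Pi.single 1 1) (Pi.single 1 1)
      rw [diagGL_smul_single, hermForm_single_self, hermForm_single_self] at h_form
      exact ⟨hx, x, by simpa using h_form, diagGL_val _⟩
  rw [h_image]
  refine (Nat.card_image_of_injective (fun x y hxy => ?_) _).symm
  exact congrArg Prod.fst (diagGL_injective hxy)

end DiagPairs

section OrbitCount

lemma sum_ite_eq_card_comap {G H : Type*} [Group G] [Group H] {f : H →* G}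
    (hf : Function.Injective f) (A : Subgroup G) [Fintype A] (p : A → Prop) [DecidablePred p]
    (hp : ∀ a : A, p a ↔ (a : G) ∈ f.range) :
    ∑ a : A, (if p a then 1 else 0 : ℤ) = Nat.card (A.comap f) := by
  rw [Finset.sum_boole, ← Fintype.card_subtype, ← Nat.card_eq_fintype_card, Nat.cast_inj]
  refine (Nat.card_congr <| Equiv.ofBijective
    (fun x : A.comap f => (⟨⟨f x, x.2⟩, (hp _).2 ⟨x, rfl⟩⟩ : {a // p a})) ⟨?_, ?_⟩).symm
  · exact fun x y hxy => Subtype.ext (hf (congrArg (fun a => (a.1 : G)) hxy))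
  · rintro ⟨a, ha⟩
    obtain ⟨x, hx⟩ := (hp a).1 ha
    exact ⟨⟨x, Subgroup.mem_comap.2 (hx ▸ a.2)⟩, Subtype.ext (Subtype.ext hx)⟩

variable {q : ℕ} {F : Type*} [Field F]

lemma sum_card_hermitianFixedPts_diagGL [Fintype F] [CharP F 2] (hF : Fintype.card F = q ^ 2)
    {A : Subgroup (Fˣ × Fˣ)} [Fintype A] (hA : ∀ a ∈ A, a.swap ∈ A) :
    ∑ a : A, (Nat.card (hermitianFixedPts q (diagGL F a.1)) : ℤ) =
      (q + 1) * (Nat.card (diagonalPart A) + 2 * Nat.card (A.comap (MonoidHom.inr Fˣ Fˣ))) +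
        (q ^ 3 - 3 * q - 2) := by
  classical
  have h_diag : ∑ a : A, (if a.1.1 = a.1.2 then 1 else 0 : ℤ) = Nat.card (diagonalPart A) :=
    sum_ite_eq_card_comap (fun x y h => congrArg Prod.fst h) A _ fun a =>
      ⟨fun h => ⟨a.1.1, Prod.ext rfl h⟩, fun ⟨x, hx⟩ => by rw [← hx]; rfl⟩
  have h_fst : ∑ a : A, (if a.1.1 = 1 then 1 else 0 : ℤ) = Nat.card (A.comap (.inr Fˣ Fˣ)) :=
    sum_ite_eq_card_comap (fun x y h => congrArg Prod.snd h) A _ fun a =>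
      ⟨fun h => ⟨a.1.2, Prod.ext h.symm rfl⟩, fun ⟨x, hx⟩ => by rw [← hx]; rfl⟩
  have h_snd : ∑ a : A, (if a.1.2 = 1 then 1 else 0 : ℤ) = Nat.card (A.comap (.inr Fˣ Fˣ)) := by
    rw [← comap_inl_eq_comap_inr hA]
    exact sum_ite_eq_card_comap (fun x y h => congrArg Prod.fst h) A _ fun a =>
      ⟨fun h => ⟨a.1.1, Prod.ext rfl h.symm⟩, fun ⟨x, hx⟩ => by rw [← hx]; rfl⟩
  have h_one : ∑ a : A, (if a.1.1 = 1 ∧ a.1.2 = 1 then 1 else 0 : ℤ) = 1 := by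
    rw [Finset.sum_eq_single_of_mem 1 (Finset.mem_univ _)]
    · simp
    · exact fun a _ ha => if_neg fun h => ha (Subtype.ext (Prod.ext h.1 h.2))
  simp only [card_hermitianFixedPts_diagGL hF, Finset.sum_add_distrib, ← Finset.mul_sum, h_diag,
    h_fst, h_snd, h_one]
  ring

variable [Finite F] {C : GL (Fin 3) F} {L : Subgroup (GL (Fin 3) F)}

-- A swap has a single fixed point, so it drops out once one is subtracted from every count.
lemma numOrbits_sub_one_mul_card [CharP F 2] [Fintype (diagPairs C L)]
    (hC : C ∈ hermUnitary q F) (hL : L ≤ hermUnitary q F)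
    (h_mono : ∀ g ∈ L, ∃ a,
      g = C * diagGL F a * C⁻¹ ∨ g = C * (diagGL F a * swapGL F) * C⁻¹) :
    ((numOrbits L (hermitianPts q F) : ℤ) - 1) * Nat.card L =
      ∑ a : diagPairs C L, ((Nat.card (hermitianFixedPts q (diagGL F a.1)) : ℤ) - 1) := by
  classical
  have := Fintype.ofFinite L
  have h_burnside := congrArg (Nat.cast : ℕ → ℤ) (numOrbits_hermitianPts_mul_card hL)
  push_cast at h_burnside
  rw [sub_mul, one_mul, h_burnside, Nat.card_eq_fintype_card, ← nsmul_one (Fintype.card L),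
    ← Finset.card_univ, ← Finset.sum_const, ← Finset.sum_sub_distrib]
  refine (Fintype.sum_of_injective
    (fun a : diagPairs C L => (⟨C * diagGL F a * C⁻¹, a.2⟩ : L)) ?_ _ _ ?_ ?_).symm
  · exact fun a b hab => Subtype.ext (conj_diagGL_injective (congrArg Subtype.val hab))
  · rintro ⟨g, hg⟩ hg_range
    obtain ⟨a, rfl | rfl⟩ := h_mono g hg
    · exact absurd ⟨⟨a, hg⟩, rfl⟩ hg_range
    · have h_swap : diagGL F a * swapGL F ∈ hermUnitary q F :=
        ((hermUnitary q F).mul_mem_cancel_left hC).1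
          (((hermUnitary q F).mul_mem_cancel_right (inv_mem hC)).1 (hL hg))
      simp only [card_hermitianFixedPts_conj hC, card_hermitianFixedPts_diagGL_mul_swapGL h_swap]
      rfl
  · intro a
    rw [card_hermitianFixedPts_conj hC]

lemma exists_conj_swap_mem (h_card : Nat.card (diagPairs C L) < Nat.card L)
    (h_mono : ∀ g ∈ L, ∃ a,
      g = C * diagGL F a * C⁻¹ ∨ g = C * (diagGL F a * swapGL F) * C⁻¹) :
    ∃ b, C * (diagGL F b * swapGL F) * C⁻¹ ∈ L := by
  by_contra! h_none
  refine h_card.not_ge ?_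
  refine Nat.card_le_card_of_surjective
    (fun a : diagPairs C L => (⟨C * diagGL F a * C⁻¹, a.2⟩ : L)) ?_
  rintro ⟨g, hg⟩
  obtain ⟨a, rfl | rfl⟩ := h_mono g hg
  · exact ⟨⟨a, hg⟩, rfl⟩
  · exact absurd hg (h_none a)

end OrbitCount

lemma odd_card_units_of_charTwo {F : Type*} [Field F] [Finite F] [CharP F 2] :
    Odd (Nat.card Fˣ) := by
  have := Fintype.ofFinite F
  rw [Nat.card_units, Nat.card_eq_fintype_card]
  refine Nat.Even.sub_odd Fintype.card_pos (Nat.even_iff.2 ?_) odd_one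
  exact FiniteField.even_card_iff_char_two.1 (ringChar.eq F 2)

lemma numOrbits_sub_one_mul_card_of_isSelfPolarTriangle {q : ℕ} {F : Type*} [Field F] [Fintype F]
    [CharP F 2] (hF : Fintype.card F = q ^ 2) {T : Fin 3 → Projectivization F (Fin 3 → F)}
    (hT : IsSelfPolarTriangle q T) (hT_two : T 2 = coordPoint F 2) {L : Subgroup (GL (Fin 3) F)}
    (hL : L ≤ axialUnitary q F) (h_perm : ∀ g ∈ L, ∀ i, ∃ j, g • T i = T j)
    (h_index : Nat.card L = 2 * Nat.card {g | g ∈ L ∧ ∀ i, g • T i = T i}) {t w : ℕ}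
    (hw : Nat.card ((L : Set (GL (Fin 3) F)) ∩ ZSet q F : Set (GL (Fin 3) F)) = w)
    (h_card : Nat.card L = 2 * t * w) :
    ((numOrbits L (hermitianPts q F) : ℤ) - 1) * (2 * t * w) =
      (q + 1) * (w + 2 * w.gcd t) + (q ^ 3 - 3 * q - 2) - t * w := by
  have hL_unitary : L ≤ hermUnitary q F := hL.trans axialUnitary_le_hermUnitary
  have hL_axis (g) (hg : g ∈ L) : g • (Pi.single 2 1 : Fin 3 → F) = Pi.single 2 1 := (hL hg).2
  obtain ⟨C, hC, hCT⟩ := hT.exists_smul_coordPoint_eq hF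
  simp only [← hCT] at hT_two h_perm h_index
  have h_mono (g) (hg : g ∈ L) :=
    exists_eq_conj_diagGL_or_swap hT_two (hL_axis g hg) (h_perm g hg)
  rw [← card_diagPairs hT_two hL_axis] at h_index
  obtain ⟨b, hb⟩ := exists_conj_swap_mem (C := C) (L := L)
    (by have := Nat.card_pos (α := diagPairs C L); omega) h_mono
  have h_swap (a) (ha : a ∈ diagPairs C L) : a.swap ∈ diagPairs C L := swap_mem_diagPairs hb ha
  have hq : q ≠ 0 := (zero_lt_one.trans (one_lt_of_card hF)).ne'
  have h_diag : Nat.card (diagonalPart (diagPairs C L)) = w :=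
    (card_diagonalPart_diagPairs hq hC hT_two hL_unitary).trans hw
  have hA_card : Nat.card (diagPairs C L) = w * t := by linarith
  have h_anti : Nat.card (antidiagonalPart (diagPairs C L)) = t := by
    have h_mul := card_diagonalPart_mul_card_antidiagonalPart odd_card_units_of_charTwo h_swap
    rw [h_diag, hA_card] at h_mul
    exact Nat.eq_of_mul_eq_mul_left (h_diag ▸ Nat.card_pos) h_mul
  have h_gcd := card_comap_inr_eq_gcd odd_card_units_of_charTwo h_swap
  rw [h_diag, h_anti] at h_gcd
  have := Fintype.ofFinite (diagPairs C L)
  have h_count := numOrbits_sub_one_mul_card hC hL_unitary h_mono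
  rw [Finset.sum_sub_distrib, sum_card_hermitianFixedPts_diagGL hF h_swap, h_diag, h_gcd, h_card,
    Finset.sum_const, Finset.card_univ, ← Nat.card_eq_fintype_card, hA_card, nsmul_one] at h_count
  push_cast at h_count
  rw [h_count, mul_comm (t : ℤ)]

theorem stmt13 (h q t w : ℕ) (hh : 1 ≤ h) (hq : q = 2 ^ h)
    (F : Type*) [Field F] [Fintype F] (hF : Fintype.card F = q ^ 2)
    (P P₁ P₂ : Projectivization F (Fin 3 → F))
    (hP : P = Projectivization.mk F (![0, 0, 1] : Fin 3 → F)
      (by intro hcon; have h2 := congrFun hcon 2; simp at h2))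
    (hne01 : P ≠ P₁) (hne02 : P ≠ P₂) (hne12 : P₁ ≠ P₂)
    (hselfpolar : (∀ x ∈ ({P, P₁, P₂} : Set (Projectivization F (Fin 3 → F))),
        hermForm q x.rep x.rep ≠ 0) ∧
      (∀ x ∈ ({P, P₁, P₂} : Set (Projectivization F (Fin 3 → F))),
        ∀ y ∈ ({P, P₁, P₂} : Set (Projectivization F (Fin 3 → F))),
          x ≠ y → hermForm q x.rep y.rep = 0))
    (L : Subgroup (GL (Fin 3) F)) (hLMl : (L : Set (GL (Fin 3) F)) ⊆ MlSet q F)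
    (hstab : ∀ g ∈ L, ∀ x ∈ ({P, P₁, P₂} : Set (Projectivization F (Fin 3 → F))),
      glAct g x ∈ ({P, P₁, P₂} : Set (Projectivization F (Fin 3 → F))))
    (hindex2 : Nat.card ↥L = 2 * Nat.card
      {g : GL (Fin 3) F | g ∈ L ∧
        ∀ x ∈ ({P, P₁, P₂} : Set (Projectivization F (Fin 3 → F))), glAct g x = x})
    (hZcard : Nat.card ((L : Set (GL (Fin 3) F)) ∩ ZSet q F : Set (GL (Fin 3) F)) = w)
    (hLcard : Nat.card ↥L = 2 * t * w) :
    (numOrbits L (hermitianPts q F) : ℚ)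
      = 1 + ((q : ℚ) - (t : ℚ) + 1) / (2 * (t : ℚ))
        + ((q : ℚ) + 1) * (Nat.gcd w t : ℚ) / ((t : ℚ) * (w : ℚ))
        + ((q : ℚ) + 1) ^ 2 * ((q : ℚ) - 2) / (2 * (t : ℚ) * (w : ℚ)) := by
  have := charP_two_of_card hF (hq ▸ even_two.pow_of_ne_zero (by omega))
  have h_set : ({P, P₁, P₂} : Set (Projectivization F (Fin 3 → F))) = Set.range ![P₁, P₂, P] := by
    simp only [Matrix.range_cons, Matrix.range_empty, Set.union_empty, Set.singleton_union]
    rw [Set.insert_comm, Set.pair_comm]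
  have h_inj : Function.Injective ![P₁, P₂, P] :=
    List.nodup_ofFn.1 (by simp [hne01.symm, hne02.symm, hne12])
  simp only [h_set, Set.forall_mem_range] at hselfpolar hstab hindex2
  have hT : IsSelfPolarTriangle q ![P₁, P₂, P] :=
    ⟨hselfpolar.1, fun i j hij => hselfpolar.2 i j (h_inj.ne hij)⟩
  have h_count := numOrbits_sub_one_mul_card_of_isSelfPolarTriangle hF hT
    (hP.trans (mk_eq_coordPoint_two _)) (fun g hg => mem_axialUnitary_of_mem_MlSet hF (hLMl hg))
    (fun g hg i => (hstab g hg i).imp fun j hj => hj.symm) hindex2 hZcard hLcard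
  obtain ⟨ht, hw⟩ : t ≠ 0 ∧ w ≠ 0 := by
    simpa using (hLcard ▸ Nat.card_pos.ne' : 2 * t * w ≠ 0)
  have h_rat := congrArg (Int.cast : ℤ → ℚ) h_count
  push_cast at h_rat
  field_simp
  linear_combination h_rat
end

section
/- Let k | h and set r := h/k. Let w be a divisor of (q+1)/2 and let L̄ ≤ M_ℓ be a subgroup such that |L̄ ∩ Z₁| = w and L̄ is the internal direct product of L̄ ∩ Z₁ and a subgroup S isomorphic to SL(2, 𝔽_{p^k}). If r is even, then the number N of orbits of L̄ acting on O equals 2 + 2(q−p^{2k})/(p^k(p^{2k}−1)) + (q/p^k)·((q−1)/(p^{2k}−1))·((q+1)/w). If r is odd, then N = 1 + 2(q−p^k)/(p^k(p^{2k}−1)) + (q+1)·gcd(p^k+1, w)/((p^k+1)·w) + (q²−q−p^k(p^k−1))·(q+1)/(p^k(p^k−1)(p^k+1)·w). -/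
open Matrix

def Z1Set (q : ℕ) (F : Type*) [Field F] : Set (GL (Fin 3) F) :=
  {M | ∃ ε : F, ε ^ ((q + 1) / 2) = 1 ∧
    (M : Matrix (Fin 3) (Fin 3) F) = Matrix.diagonal ![ε, ε, 1]}

/-!
Put `P = p ^ k`. Transvections have order `p`, so every homomorphism from `SL₂(P)` to `Fˣ` is
trivial. Hence `S` consists of the matrices `ρ g ⊕ 1` for an embedding `ρ` of `SL₂(P)` into the
special unitary group of the form `x ^ (q + 1) - y ^ (q + 1)`, and `L̄` of the matrices
`(u • ρ g) ⊕ 1` with `u ^ w = 1`. Here `w` is odd, since otherwise both factors would contain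
`diag(-1, -1, 1)`.

By Burnside's lemma the orbits are counted by fixed points. The affine fixed points of
`(u • ρ g) ⊕ 1` on `O` are the eigenvectors of `ρ g` of norm one for the eigenvalue `u⁻¹`. If
`g ≠ 1`, there are `q + 1` of them when `u⁻¹ ≠ 1` is an eigenvalue and none otherwise, so that
summing over `u` gives `2 * (q + 1)` if `g ^ w = 1` and zero otherwise. The fixed points at infinity
are the isotropic eigenlines of `ρ g`: as many as `ρ g` has eigenvalues in the field with `q`
elements, or all `q + 1` isotropic lines if `g = ±1`. Both counts depend only on the order of `g`,
which divides `2 * p`, `P - 1` or `P + 1`, so their sums over `g` follow from the number of matrices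
in `SL₂(P)` with a given trace.
-/

namespace HermitianOrbits

open Finset

/-! ### Orders of matrices of determinant one -/

section Order

variable {K : Type*} [Field K]

lemma pow_pred_eq_one_iff {l : K} (hl : l ≠ 0) {Q : ℕ} (hQ : Q ≠ 0) :
    l ^ (Q - 1) = 1 ↔ l ^ Q = l := by
  rw [← mul_left_inj' hl, one_mul, pow_sub_one_mul hQ]

lemma mul_sub_eq_one_iff {T l : K} (hl : l * (T - l) = 1) {x : K} :
    x * (T - x) = 1 ↔ x = l ∨ x = l⁻¹ := by
  rw [← eq_inv_of_mul_eq_one_right hl, ← sub_eq_zero (a := x) (b := l),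
    ← sub_eq_zero (a := x) (b := T - l), ← mul_eq_zero]
  constructor <;> intro h <;> linear_combination hl - h

lemma inv_ne_self_of_sq_ne_one {l : K} (hl : l ≠ 0) (hl2 : l ^ 2 ≠ 1) : l⁻¹ ≠ l := fun h =>
  hl2 (by rw [sq, mul_eq_one_iff_eq_inv₀ hl, h])

variable {A : Matrix (Fin 2) (Fin 2) K}

lemma sq_eq_trace_smul_sub_one (hA : A.det = 1) : A ^ 2 = A.trace • A - 1 := by
  have h := aeval_self_charpoly A
  rw [charpoly_fin_two, hA] at h
  simp only [map_add, map_sub, map_mul, map_pow, Polynomial.aeval_X, Polynomial.aeval_C, map_one,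
    Algebra.algebraMap_eq_smul_one, smul_mul_assoc, one_mul] at h
  rw [← sub_eq_zero, ← h]
  abel

lemma sq_sub_one_sq (hA : A.det = 1) : (A ^ 2 - 1) ^ 2 = (A.trace ^ 2 - 4) • A ^ 2 := by
  have h : A ^ 2 + 1 = A.trace • A := by rw [sq_eq_trace_smul_sub_one hA, sub_add_cancel]
  calc (A ^ 2 - 1) ^ 2 = (A ^ 2 + 1) ^ 2 - (4 : K) • A ^ 2 := by
        rw [ofNat_smul_eq_nsmul]
        noncomm_ring
    _ = (A.trace ^ 2 - 4) • A ^ 2 := by rw [h, smul_pow, sub_smul]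

lemma pow_two_mul_char_eq_one_iff (p : ℕ) [Fact p.Prime] [CharP K p] (hA : A.det = 1) :
    A ^ (2 * p) = 1 ↔ A.trace ^ 2 = 4 := by
  have hpow : A ^ (2 * p) - 1 = (A ^ 2 - 1) ^ p := by
    rw [sub_pow_char_of_commute p (Commute.one_right _), one_pow, pow_mul]
  rw [← sub_eq_zero, hpow, ← sub_eq_zero (b := (4 : K))]
  constructor
  · intro h
    have h0 : (A.trace ^ 2 - 4) ^ p • A ^ (2 * p) = 0 := by
      rw [pow_mul, ← smul_pow, ← sq_sub_one_sq hA, ← pow_mul, mul_comm, pow_mul, h,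
        zero_pow two_ne_zero]
    have hne : A ^ (2 * p) ≠ 0 := fun h => by simpa [hA] using congrArg det h
    exact eq_zero_of_pow_eq_zero ((smul_eq_zero_iff_left hne).mp h0)
  · intro h
    exact pow_eq_zero_of_le (Fact.out : p.Prime).two_le
      (by rw [sq_sub_one_sq hA, h, zero_smul])

lemma pow_mul_eq_smul {n : Type*} [Fintype n] [DecidableEq n] {A B : Matrix n n K} {l : K}
    (h : A * B = l • B) (j : ℕ) : A ^ j * B = l ^ j • B := by
  induction j with
  | zero => simp
  | succ j ih => rw [pow_succ, mul_assoc, h, Matrix.mul_smul, ih, smul_smul, pow_succ']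

lemma mul_sub_smul_eq_smul (hA : A.det = 1) {l l' : K} (hl : l * l' = 1) (hT : l + l' = A.trace) :
    A * (A - l' • (1 : Matrix (Fin 2) (Fin 2) K)) =
      l • (A - l' • (1 : Matrix (Fin 2) (Fin 2) K)) := by
  rw [mul_sub, ← sq, sq_eq_trace_smul_sub_one hA, ← hT, mul_smul_comm, mul_one, smul_sub,
    smul_smul, hl, one_smul, add_smul]
  abel

lemma pow_eq_one_iff_of_eigenvalue (hA : A.det = 1) {l : K} (hl : l * (A.trace - l) = 1)
    (hl2 : l ^ 2 ≠ 1) (n : ℕ) : A ^ n = 1 ↔ l ^ n = 1 := by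
  have hl0 : l ≠ 0 := left_ne_zero_of_mul_eq_one hl
  have hT : l + l⁻¹ = A.trace := by rw [← eq_inv_of_mul_eq_one_right hl, add_sub_cancel]
  have hne : l - l⁻¹ ≠ 0 := sub_ne_zero.mpr (inv_ne_self_of_sq_ne_one hl0 hl2).symm
  have h₁ := pow_mul_eq_smul (mul_sub_smul_eq_smul hA (mul_inv_cancel₀ hl0) hT) n
  have h₂ := pow_mul_eq_smul
    (mul_sub_smul_eq_smul hA (inv_mul_cancel₀ hl0) ((add_comm _ _).trans hT)) n
  constructor
  · intro hAn
    rw [hAn, one_mul] at h₁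
    by_contra hln
    have hscalar : A - l⁻¹ • (1 : Matrix (Fin 2) (Fin 2) K) = 0 := by
      refine (smul_eq_zero_iff_right (sub_ne_zero.mpr (Ne.symm hln))).mp ?_
      rw [sub_smul, one_smul, ← h₁, sub_self]
    have htr := congrArg trace (sub_eq_zero.mp hscalar)
    rw [trace_smul, trace_one, Fintype.card_fin, ← hT, Nat.cast_ofNat, smul_eq_mul] at htr
    exact hne (by linear_combination htr)
  · intro hln
    rw [hln, one_smul] at h₁
    rw [inv_pow, hln, inv_one, one_smul] at h₂
    have hscalar : (A - l⁻¹ • (1 : Matrix (Fin 2) (Fin 2) K)) -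
        (A - l • (1 : Matrix (Fin 2) (Fin 2) K)) = (l - l⁻¹) • 1 := by
      rw [sub_smul, sub_sub_sub_cancel_left]
    have h := congrArg₂ (· - ·) h₁ h₂
    simp only [← mul_sub, hscalar, mul_smul_comm, mul_one] at h
    exact smul_right_injective _ hne h

lemma sq_eq_one_iff_of_det_eq_one (h2 : (2 : K) ≠ 0) (hA : A.det = 1) :
    A ^ 2 = 1 ↔ A = 1 ∨ A = -1 := by
  refine ⟨fun h => ?_, by rintro (rfl | rfl) <;> simp⟩
  have hsmul : A.trace • A = (2 : K) • (1 : Matrix (Fin 2) (Fin 2) K) := by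
    rw [eq_add_of_sub_eq (sq_eq_trace_smul_sub_one hA).symm, h, two_smul]
  have hT : A.trace ^ 2 = 4 := by
    have := congrArg trace hsmul
    rw [trace_smul, trace_smul, trace_one, Fintype.card_fin, smul_eq_mul, smul_eq_mul] at this
    push_cast at this
    linear_combination this
  have hT' : (A.trace - 2) * (A.trace + 2) = 0 := by linear_combination hT
  rcases mul_eq_zero.mp hT' with hT | hT
  · rw [sub_eq_zero.mp hT] at hsmul
    exact Or.inl (smul_right_injective _ h2 hsmul)
  · rw [eq_neg_of_add_eq_zero_left hT] at hsmul
    exact Or.inr (smul_right_injective _ h2 (by simpa [neg_eq_iff_eq_neg] using hsmul))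

end Order

section NumEigenvalues

/-- The number of eigenvalues in the field with `Q` elements of a matrix `g ∈ SL₂` of odd
characteristic `p`. It is read off from the order of `g`, so that it makes sense in an abstract
group and is preserved by every embedding into another `SL₂` of the same characteristic. -/
def numEigenvalues {M : Type*} [Monoid M] [DecidableEq M] (p Q : ℕ) (g : M) : ℕ :=
  if g ^ (2 * p) = 1 then 1 else if g ^ (Q - 1) = 1 then 2 else 0

lemma numEigenvalues_map {M N H : Type*} [Monoid M] [Monoid N] [DecidableEq M] [DecidableEq N]
    [FunLike H M N] [MonoidHomClass H M N] (f : H) (hf : Function.Injective f) (p Q : ℕ) (g : M) :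
    numEigenvalues p Q (f g) = numEigenvalues p Q g := by
  simp only [numEigenvalues, ← map_pow, map_eq_one_iff f hf]

lemma coe_pow_eq_one_iff {R : Type*} [CommRing R] (m : SpecialLinearGroup (Fin 2) R) (n : ℕ) :
    (m : Matrix (Fin 2) (Fin 2) R) ^ n = 1 ↔ m ^ n = 1 := by
  rw [← Matrix.SpecialLinearGroup.coe_pow]
  exact ⟨fun h => Subtype.ext h, congrArg Subtype.val⟩

lemma specialLinearGroup_sq_eq_one_iff {K : Type*} [Field K] (h2 : (2 : K) ≠ 0)
    (m : SpecialLinearGroup (Fin 2) K) : m ^ 2 = 1 ↔ m = 1 ∨ m = -1 := by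
  rw [← coe_pow_eq_one_iff, sq_eq_one_iff_of_det_eq_one h2 m.det_coe]
  exact or_congr ⟨fun h => Subtype.ext h, congrArg Subtype.val⟩
    ⟨fun h => Subtype.ext h, congrArg Subtype.val⟩

lemma specialLinearGroup_one_ne_neg_one {K : Type*} [Field K] (h2 : (2 : K) ≠ 0) :
    (1 : SpecialLinearGroup (Fin 2) K) ≠ -1 := by
  intro h
  have h00 : (1 : K) = -1 := congrArg (fun m : SpecialLinearGroup (Fin 2) K => m 0 0) h
  exact h2 (by linear_combination h00)

lemma numEigenvalues_coe {R : Type*} [CommRing R] [DecidableEq R] (p Q : ℕ)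
    (m : SpecialLinearGroup (Fin 2) R) :
    numEigenvalues p Q (m : Matrix (Fin 2) (Fin 2) R) = numEigenvalues p Q m := by
  simp only [numEigenvalues, coe_pow_eq_one_iff]

variable {K : Type*} [Field K]

lemma trace_sq_eq_four_iff {T l : K} (hl : l * (T - l) = 1) : T ^ 2 = 4 ↔ l ^ 2 = 1 := by
  have h : T ^ 2 - 4 = (T - l - l) ^ 2 := by linear_combination 4 * hl
  rw [← sub_eq_zero, h, sq_eq_zero_iff, sub_eq_zero, eq_inv_of_mul_eq_one_right hl, sq,
    mul_eq_one_iff_eq_inv₀ (left_ne_zero_of_mul_eq_one hl), eq_comm]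

variable [DecidableEq K] (p : ℕ) [Fact p.Prime] [CharP K p] {A : Matrix (Fin 2) (Fin 2) K}

lemma ncard_eigenvalue_pow_eq_self {Q : ℕ} (hQ : Odd Q) (hA : A.det = 1)
    (hex : ∃ l, l * (A.trace - l) = 1) :
    {x : K | x ^ Q = x ∧ x * (A.trace - x) = 1}.ncard = numEigenvalues p Q A := by
  obtain ⟨l, hl⟩ := hex
  have hl0 : l ≠ 0 := left_ne_zero_of_mul_eq_one hl
  simp only [numEigenvalues, pow_two_mul_char_eq_one_iff p hA, trace_sq_eq_four_iff hl,
    mul_sub_eq_one_iff hl]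
  by_cases hl2 : l ^ 2 = 1
  · have hlQ : l ^ Q = l := by
      obtain ⟨j, rfl⟩ := hQ
      rw [pow_succ, pow_mul, hl2, one_pow, one_mul]
    have hinv : l⁻¹ = l := inv_eq_of_mul_eq_one_left (by rw [← sq, hl2])
    rw [if_pos hl2, Set.ncard_eq_one]
    refine ⟨l, Set.ext fun x => ?_⟩
    simp only [Set.mem_ofPred_eq, Set.mem_singleton_iff, hinv, or_self, and_iff_right_iff_imp]
    rintro rfl
    exact hlQ
  · simp only [if_neg hl2, pow_eq_one_iff_of_eigenvalue hA hl hl2,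
      pow_pred_eq_one_iff hl0 hQ.pos.ne']
    split_ifs with hlQ
    · rw [← Set.ncard_pair (inv_ne_self_of_sq_ne_one hl0 hl2).symm]
      congr 1
      ext x
      simp only [Set.mem_ofPred_eq, Set.mem_insert_iff, Set.mem_singleton_iff,
        and_iff_right_iff_imp]
      rintro (rfl | rfl)
      exacts [hlQ, by rw [inv_pow, hlQ]]
    · convert Set.ncard_empty K
      rw [Set.eq_empty_iff_forall_notMem]
      rintro x ⟨hx, rfl | rfl⟩
      exacts [hlQ hx, hlQ (inv_injective ((inv_pow l Q).symm.trans hx))]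

end NumEigenvalues

/-! ### Traces and eigenvalues in `SL₂` of a finite field -/

section FiniteField

variable {E : Type*} [Field E] [Fintype E]

lemma pow_card_eq_self_iff {K : Type*} [Field K] [Algebra E K] {x : K} :
    x ^ Fintype.card E = x ↔ x ∈ Set.range (algebraMap E K) := by
  have hE := FiniteField.roots_X_pow_card_sub_X E
  have hsplits : (Polynomial.X ^ Fintype.card E - Polynomial.X : Polynomial E).Splits := by
    rw [Polynomial.splits_iff_card_roots, hE, ← card_def, card_univ,
      FiniteField.X_pow_card_sub_X_natDegree_eq _ Fintype.one_lt_card]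
  have hmem := hE ▸ hsplits.roots_map (algebraMap E K) ▸ Multiset.mem_map (b := x)
  simpa [sub_eq_zero, FiniteField.X_pow_card_sub_X_ne_zero K Fintype.one_lt_card] using hmem

lemma exists_mul_sub_eq_one {K : Type*} [Field K] [IsAlgClosed K] (T : K) :
    ∃ l, l * (T - l) = 1 := by
  obtain ⟨l, hl⟩ := IsAlgClosed.exists_root
    (Polynomial.C 1 * Polynomial.X ^ 2 + Polynomial.C (-T) * Polynomial.X + Polynomial.C 1)
    (by rw [Polynomial.degree_quadratic one_ne_zero]; norm_num)
  simp only [Polynomial.IsRoot.def, Polynomial.eval_add, Polynomial.eval_mul,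
    Polynomial.eval_pow, Polynomial.eval_C, Polynomial.eval_X] at hl
  exact ⟨l, by linear_combination -hl⟩

variable (p : ℕ) [Fact p.Prime] [CharP E p] {A : Matrix (Fin 2) (Fin 2) E}

lemma card_eigenvalue_eq [DecidableEq E] (hE : Odd (Fintype.card E)) (hA : A.det = 1) :
    #{x : E | x * (A.trace - x) = 1} = numEigenvalues p (Fintype.card E) A := by
  classical
  let K := AlgebraicClosure E
  have : CharP K p := charP_of_injective_algebraMap (algebraMap E K).injective p
  let ι := (algebraMap E K).mapMatrix (m := Fin 2)
  have hι : Function.Injective ι := Matrix.map_injective (algebraMap E K).injective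
  have hdet : (ι A).det = 1 := by rw [← RingHom.map_det, hA, map_one]
  have htr : (ι A).trace = algebraMap E K A.trace := (AddMonoidHom.map_trace _ A).symm
  rw [← numEigenvalues_map ι hι p,
    ← ncard_eigenvalue_pow_eq_self p hE hdet (exists_mul_sub_eq_one _),
    ← Set.ncard_coe_finset, ← Set.ncard_image_of_injective _ (algebraMap E K).injective]
  congr 1
  ext x
  rw [Set.mem_ofPred_eq, pow_card_eq_self_iff, htr]
  have hmap (y : E) : y * (A.trace - y) = 1 ↔
      algebraMap E K y * (algebraMap E K A.trace - algebraMap E K y) = 1 := by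
    rw [← map_sub, ← map_mul, map_eq_one_iff _ (algebraMap E K).injective]
  simp only [Set.mem_image, mem_coe, mem_filter_univ, hmap]
  constructor
  · rintro ⟨y, hy, rfl⟩
    exact ⟨⟨y, rfl⟩, hy⟩
  · rintro ⟨⟨y, rfl⟩, hy⟩
    exact ⟨y, hy, rfl⟩

lemma pow_eq_one_trichotomy (hA : A.det = 1) :
    A ^ (2 * p) = 1 ∨ A ^ (Fintype.card E - 1) = 1 ∨ A ^ (Fintype.card E + 1) = 1 := by
  let K := AlgebraicClosure E
  let ι := (algebraMap E K).mapMatrix (m := Fin 2)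
  have hι : Function.Injective ι := Matrix.map_injective (algebraMap E K).injective
  have hdet : (ι A).det = 1 := by rw [← RingHom.map_det, hA, map_one]
  have hpow (n : ℕ) : A ^ n = 1 ↔ ι A ^ n = 1 := by rw [← map_pow, map_eq_one_iff ι hι]
  have htr : (ι A).trace = algebraMap E K A.trace := (AddMonoidHom.map_trace _ A).symm
  obtain ⟨l, hl⟩ := exists_mul_sub_eq_one (ι A).trace
  have hl0 : l ≠ 0 := left_ne_zero_of_mul_eq_one hl
  rw [htr] at hl
  by_cases hl2 : l ^ 2 = 1
  · rw [pow_two_mul_char_eq_one_iff p hA, ← (algebraMap E K).injective.eq_iff, map_pow,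
      map_ofNat, trace_sq_eq_four_iff hl]
    exact Or.inl hl2
  right
  have hfrob : l ^ Fintype.card E * (algebraMap E K A.trace - l ^ Fintype.card E) = 1 := by
    have := congrArg (FiniteField.frobeniusAlgHom E K) hl
    rwa [map_mul, map_sub, AlgHom.commutes, map_one, FiniteField.coe_frobeniusAlgHom] at this
  rw [hpow, hpow, pow_eq_one_iff_of_eigenvalue hdet (htr ▸ hl) hl2,
    pow_eq_one_iff_of_eigenvalue hdet (htr ▸ hl) hl2, pow_pred_eq_one_iff hl0 Fintype.card_ne_zero,
    pow_succ, mul_eq_one_iff_eq_inv₀ hl0]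
  exact (mul_sub_eq_one_iff hl).mp hfrob

section Count

variable [DecidableEq E]

lemma card_mul_eq (u : E) : #{v : E × E | v.1 * v.2 = u} + 1 =
    Fintype.card E + if u = 0 then Fintype.card E else 0 := by
  have hzero : #{c : E | 0 * c = u} = if u = 0 then Fintype.card E else 0 := by
    split_ifs with hu
    · simp [hu]
    · simp [Ne.symm hu]
  have hunit (b : E) (hb : b ≠ 0) : #{c : E | b * c = u} = 1 := by
    rw [card_eq_one]
    refine ⟨u / b, Finset.ext fun c => ?_⟩
    rw [mem_filter_univ, mem_singleton, eq_div_iff hb, mul_comm]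
  have hsum : #{v : E × E | v.1 * v.2 = u} = ∑ b : E, #{c : E | b * c = u} := by
    simp only [card_filter, Fintype.sum_prod_type]
  rw [hsum, ← sum_erase_add univ _ (mem_univ 0), hzero,
    sum_congr rfl fun b hb => hunit b (ne_of_mem_erase hb), sum_const, smul_eq_mul, mul_one,
    add_right_comm, card_erase_add_one (mem_univ _), card_univ]

/-- The entries `a, b, c` determine a matrix of determinant one and trace `T`, and are subject to
`b * c = a * (T - a) - 1`. -/
lemma card_trace_eq_sum (T : E) :
    #{m : SpecialLinearGroup (Fin 2) E | (m : Matrix (Fin 2) (Fin 2) E).trace = T} =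
      ∑ a : E, #{v : E × E | v.1 * v.2 = a * (T - a) - 1} := by
  have hsum : ∑ a : E, #{v : E × E | v.1 * v.2 = a * (T - a) - 1} =
      #{z : E × E × E | z.2.1 * z.2.2 = z.1 * (T - z.1) - 1} := by
    simp only [card_filter, Fintype.sum_prod_type]
  rw [hsum]
  refine Finset.card_bij (fun m _ => (m 0 0, m 0 1, m 1 0)) (fun m hm => ?_)
    (fun m hm m' hm' h => ?_) ?_
  · rw [mem_filter_univ, trace_fin_two] at hm
    rw [mem_filter_univ]
    linear_combination -m.det_coe + det_fin_two (m : Matrix (Fin 2) (Fin 2) E) + m 0 0 * hm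
  · rw [mem_filter_univ, trace_fin_two] at hm hm'
    simp only [Prod.mk.injEq] at h
    obtain ⟨h00, h01, h10⟩ := h
    have h11 : m 1 1 = m' 1 1 := by linear_combination hm - hm' - h00
    ext i j
    fin_cases i <;> fin_cases j <;> assumption
  · rintro ⟨a, b, c⟩ hz
    rw [mem_filter_univ] at hz
    have hdet : det !![a, b; c, T - a] = 1 := by
      rw [det_fin_two_of]
      linear_combination -hz
    refine ⟨⟨!![a, b; c, T - a], hdet⟩, (mem_filter_univ _).mpr ?_, rfl⟩
    exact (trace_fin_two_of a b c (T - a)).trans (add_sub_cancel a T)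

lemma card_trace_eq (T : E) :
    #{m : SpecialLinearGroup (Fin 2) E | (m : Matrix (Fin 2) (Fin 2) E).trace = T} +
        Fintype.card E =
      Fintype.card E ^ 2 + Fintype.card E * #{x : E | x * (T - x) = 1} := by
  have h := sum_congr rfl fun a (_ : a ∈ univ) => card_mul_eq (a * (T - a) - 1)
  simp only [sum_add_distrib, ← card_trace_eq_sum, sub_eq_zero, ← sum_filter, sum_const, card_univ,
    smul_eq_mul, mul_one] at h
  rw [h, sq, mul_comm (Fintype.card E) (card _)]

lemma sum_card_eigenvalue_mul (g : E → ℕ) :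
    ∑ T : E, #{x : E | x * (T - x) = 1} * g T = ∑ x ∈ univ.erase 0, g (x + x⁻¹) := by
  rw [← filter_ne' univ (0 : E), sum_filter]
  simp only [card_filter, sum_mul, ite_mul, one_mul, zero_mul]
  rw [sum_comm]
  refine sum_congr rfl fun x _ => ?_
  split_ifs with hx
  · have hT (T : E) : x * (T - x) = 1 ↔ T = x + x⁻¹ := by
      rw [mul_comm, mul_eq_one_iff_eq_inv₀ hx, sub_eq_iff_eq_add']
    simp only [hT, sum_ite_eq', mem_univ, if_true]
  · simp [not_not.mp hx]

lemma card_specialLinearGroup_add_card :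
    Fintype.card (SpecialLinearGroup (Fin 2) E) + Fintype.card E = Fintype.card E ^ 3 := by
  have hfib : Fintype.card (SpecialLinearGroup (Fin 2) E) = ∑ T : E,
      #{m : SpecialLinearGroup (Fin 2) E | (m : Matrix (Fin 2) (Fin 2) E).trace = T} :=
    card_eq_sum_card_fiberwise fun _ _ => mem_univ _
  have htrace := sum_congr rfl fun T (_ : T ∈ univ) => card_trace_eq (E := E) T
  have hroots := sum_card_eigenvalue_mul (E := E) fun _ => 1
  simp only [mul_one, sum_const, smul_eq_mul] at hroots
  rw [sum_add_distrib, ← hfib, sum_add_distrib, ← mul_sum, hroots, sum_const, sum_const, card_univ,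
    smul_eq_mul, smul_eq_mul] at htrace
  have hne := card_erase_add_one (mem_univ (0 : E))
  rw [card_univ] at hne
  generalize Fintype.card E = P at *
  subst hne
  linear_combination htrace

lemma card_eigenvalue_add_inv {x : E} (hx : x ≠ 0) :
    #{y : E | y * (x + x⁻¹ - y) = 1} + (if x ^ 2 = 1 then 1 else 0) = 2 := by
  have hroots : x * (x + x⁻¹ - x) = 1 := by rw [add_sub_cancel_left, mul_inv_cancel₀ hx]
  have hpair : ({y : E | y * (x + x⁻¹ - y) = 1} : Finset E) = {x, x⁻¹} := by
    ext y
    rw [mem_filter_univ, mul_sub_eq_one_iff hroots, mem_insert, mem_singleton]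
  rw [hpair]
  split_ifs with h
  · rw [← eq_inv_of_mul_eq_one_left ((sq x).symm.trans h), pair_eq_singleton, card_singleton]
  · rw [card_pair (inv_ne_self_of_sq_ne_one hx h).symm]

lemma card_trace_eq_two_mul {x : E} (hx : x ^ 2 = 1) :
    #{m : SpecialLinearGroup (Fin 2) E | (m : Matrix (Fin 2) (Fin 2) E).trace = 2 * x} =
      Fintype.card E ^ 2 := by
  have hxx : x * x = 1 := (sq x).symm.trans hx
  have hroots := card_eigenvalue_add_inv (left_ne_zero_of_mul_eq_one hxx)
  have htrace := card_trace_eq (x + x⁻¹)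
  rw [if_pos hx] at hroots
  rw [Nat.succ_injective hroots, mul_one, add_left_inj,
    ← eq_inv_of_mul_eq_one_left hxx, ← two_mul] at htrace
  exact htrace

lemma card_trace_sq_eq_four (h2 : (2 : E) ≠ 0) :
    #{m : SpecialLinearGroup (Fin 2) E | (m : Matrix (Fin 2) (Fin 2) E).trace ^ 2 = 4} =
      2 * Fintype.card E ^ 2 := by
  have hsq (T : E) : T ^ 2 = 4 ↔ T = 2 * 1 ∨ T = 2 * -1 := by
    rw [mul_one, mul_neg_one, ← sq_eq_sq_iff_eq_or_eq_neg]
    norm_num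
  have hdisj : Disjoint
      (α := Finset (SpecialLinearGroup (Fin 2) E))
      {m | (m : Matrix (Fin 2) (Fin 2) E).trace = 2 * 1}
      {m | (m : Matrix (Fin 2) (Fin 2) E).trace = 2 * -1} := by
    refine disjoint_filter.mpr fun m _ h h' => h2 ?_
    have h4 : (2 : E) * 2 = 0 := by linear_combination h' - h
    exact mul_self_eq_zero.mp h4
  simp only [hsq]
  rw [filter_or, card_union_of_disjoint hdisj, card_trace_eq_two_mul (one_pow 2),
    card_trace_eq_two_mul neg_one_sq, two_mul]

lemma card_sq_eq_one (h2 : (2 : E) ≠ 0) :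
    #{m : SpecialLinearGroup (Fin 2) E | m ^ 2 = 1} = 2 := by
  refine (congrArg card (Finset.ext fun m => ?_)).trans
    (card_pair (specialLinearGroup_one_ne_neg_one h2))
  rw [mem_filter_univ, mem_insert, mem_singleton, specialLinearGroup_sq_eq_one_iff h2]

variable (p : ℕ) [Fact p.Prime] [CharP E p]

lemma sum_numEigenvalues_eq_sum_trace (hE : Odd (Fintype.card E)) :
    ∑ m : SpecialLinearGroup (Fin 2) E, numEigenvalues p (Fintype.card E) m =
      ∑ T : E, #{x : E | x * (T - x) = 1} *
        #{m : SpecialLinearGroup (Fin 2) E | (m : Matrix (Fin 2) (Fin 2) E).trace = T} := by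
  simp only [← numEigenvalues_coe, ← card_eigenvalue_eq p hE (Matrix.SpecialLinearGroup.det_coe _)]
  rw [← sum_fiberwise_of_maps_to (t := univ) (g := fun m : SpecialLinearGroup (Fin 2) E =>
    (m : Matrix (Fin 2) (Fin 2) E).trace) fun _ _ => mem_univ _]
  refine sum_congr rfl fun T _ => ?_
  rw [sum_congr rfl (g := fun _ => #{x : E | x * (T - x) = 1}), sum_const, smul_eq_mul, mul_comm]
  intro m hm
  rw [(mem_filter.mp hm).2]

lemma sum_numEigenvalues (hE : Odd (Fintype.card E)) (h2 : (2 : E) ≠ 0) :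
    ∑ m : SpecialLinearGroup (Fin 2) E, numEigenvalues p (Fintype.card E) m + 3 * Fintype.card E =
      Fintype.card E ^ 3 := by
  have hsq : #{x ∈ univ.erase (0 : E) | x ^ 2 = 1} = 2 := by
    refine (congrArg card (Finset.ext fun x => ?_)).trans
      (card_pair fun h : (1 : E) = -1 => h2 (by linear_combination h))
    rw [mem_filter, mem_insert, mem_singleton, ← sq_eq_one_iff, and_iff_right_iff_imp]
    exact fun h => mem_erase.mpr ⟨left_ne_zero_of_mul_eq_one ((sq x).symm.trans h), mem_univ x⟩
  have hx (x : E) (hx : x ≠ 0) :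
      #{m : SpecialLinearGroup (Fin 2) E | (m : Matrix (Fin 2) (Fin 2) E).trace = x + x⁻¹} +
        Fintype.card E * (if x ^ 2 = 1 then 1 else 0) = Fintype.card E ^ 2 + Fintype.card E := by
    have h := card_trace_eq (x + x⁻¹)
    have h' := card_eigenvalue_add_inv hx
    linear_combination h + Fintype.card E * h'
  have h := sum_congr rfl fun x (h : x ∈ univ.erase 0) => hx x (ne_of_mem_erase h)
  rw [sum_add_distrib, ← mul_sum, ← card_filter, hsq, sum_const, smul_eq_mul,
    ← sum_card_eigenvalue_mul fun T =>
      #{m : SpecialLinearGroup (Fin 2) E | (m : Matrix (Fin 2) (Fin 2) E).trace = T}] at h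
  rw [sum_numEigenvalues_eq_sum_trace p hE]
  have hne := card_erase_add_one (mem_univ (0 : E))
  rw [card_univ] at hne
  generalize Fintype.card E = P at *
  subst hne
  linear_combination h

end Count

end FiniteField

/-! ### Elements of given order in `SL₂` of a finite field -/

section Torsion

variable {E : Type*} [Field E] [Fintype E] (p : ℕ) [Fact p.Prime] [CharP E p]

lemma card_pow_two_mul_char_eq_one [DecidableEq E] (h2 : (2 : E) ≠ 0) :
    #{m : SpecialLinearGroup (Fin 2) E | m ^ (2 * p) = 1} = 2 * Fintype.card E ^ 2 := by
  simp only [← card_trace_sq_eq_four h2, ← coe_pow_eq_one_iff,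
    pow_two_mul_char_eq_one_iff p (Matrix.SpecialLinearGroup.det_coe _)]

lemma pow_eq_one_iff_pow_gcd_eq_one {w : ℕ} (h2p : (2 * p).Coprime w)
    (hP : (Fintype.card E - 1).Coprime w) (m : SpecialLinearGroup (Fin 2) E) :
    m ^ w = 1 ↔ m ^ (Fintype.card E + 1).gcd w = 1 := by
  refine ⟨fun h => pow_gcd_eq_one.mpr ⟨?_, h⟩, fun h => (pow_gcd_eq_one.mp h).2⟩
  have htri := pow_eq_one_trichotomy p m.det_coe
  simp only [coe_pow_eq_one_iff] at htri
  rcases htri with h' | h' | h'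
  · rw [(pow_eq_one_iff_of_coprime h2p).mp ⟨h', h⟩, one_pow]
  · rw [(pow_eq_one_iff_of_coprime hP).mp ⟨h', h⟩, one_pow]
  · exact h'

lemma eq_one_of_sq_eq_one_of_pow_odd {M : Type*} [Monoid M] {x : M} {n : ℕ} (hn : Odd n)
    (h2 : x ^ 2 = 1) (hx : x ^ n = 1) : x = 1 :=
  (pow_eq_one_iff_of_coprime hn.coprime_two_left).mp ⟨h2, hx⟩

lemma card_nthRootsFinset_one {K : Type*} [Field K] [IsAlgClosed K] [CharP K p] {g : ℕ}
    (hg : p.Coprime g) : #(Polynomial.nthRootsFinset g (1 : K)) = g := by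
  have : NeZero (g : K) := ⟨fun h => (Fact.out : p.Prime).coprime_iff_not_dvd.mp hg
    ((CharP.cast_eq_zero_iff K p g).mp h)⟩
  obtain ⟨ζ, hζ⟩ := HasEnoughRootsOfUnity.exists_primitiveRoot K g
  exact hζ.card_nthRootsFinset

section Eigenvalues

variable {K : Type*} [Field K] [DecidableEq K] [CharP K p] {A : Matrix (Fin 2) (Fin 2) K} {g : ℕ}

lemma card_eigenvalue_pow_eq_one_eq_two (hA : A.det = 1) (hex : ∃ l, l * (A.trace - l) = 1)
    (hg : Odd g) (hpg : p.Coprime g) (hA1 : A ≠ 1) (hAg : A ^ g = 1) :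
    #{e ∈ (Polynomial.nthRootsFinset g (1 : K)).erase 1 | e * (A.trace - e) = 1} = 2 := by
  obtain ⟨l, hl⟩ := hex
  have hl2 : l ^ 2 ≠ 1 := fun h =>
    hA1 <| (pow_eq_one_iff_of_coprime (hg.coprime_two_left.mul_left hpg)).mp
      ⟨(pow_two_mul_char_eq_one_iff p hA).mpr ((trace_sq_eq_four_iff hl).mpr h), hAg⟩
  have hl1 : l ≠ 1 := fun h => hl2 (by rw [h, one_pow])
  have hlg : l ^ g = 1 := (pow_eq_one_iff_of_eigenvalue hA hl hl2 g).mp hAg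
  refine (congrArg card (Finset.ext fun e => ?_)).trans (card_pair
    (inv_ne_self_of_sq_ne_one (left_ne_zero_of_mul_eq_one hl) hl2).symm)
  rw [mem_filter, mem_erase, Polynomial.mem_nthRootsFinset hg.pos, mul_sub_eq_one_iff hl,
    mem_insert, mem_singleton, and_iff_right_iff_imp]
  rintro (rfl | rfl)
  exacts [⟨hl1, hlg⟩, ⟨inv_ne_one.mpr hl1, by rw [inv_pow, hlg, inv_one]⟩]

lemma card_eigenvalue_pow_eq_one (hA : A.det = 1) (hex : ∃ l, l * (A.trace - l) = 1)
    (hg : Odd g) (hpg : p.Coprime g) :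
    #{e ∈ (Polynomial.nthRootsFinset g (1 : K)).erase 1 | e * (A.trace - e) = 1} +
      (if A = 1 then 2 else 0) = if A ^ g = 1 then 2 else 0 := by
  by_cases hAg : A ≠ 1 ∧ A ^ g = 1
  · rw [card_eigenvalue_pow_eq_one_eq_two p hA hex hg hpg hAg.1 hAg.2, if_neg hAg.1, if_pos hAg.2]
  have hempty :
      #{e ∈ (Polynomial.nthRootsFinset g (1 : K)).erase 1 | e * (A.trace - e) = 1} = 0 := by
    refine card_filter_eq_zero_iff.mpr fun e he hroot => hAg ?_
    rw [mem_erase, Polynomial.mem_nthRootsFinset hg.pos] at he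
    have he2 : e ^ 2 ≠ 1 := fun h => he.1 (eq_one_of_sq_eq_one_of_pow_odd hg h he.2)
    refine ⟨?_, (pow_eq_one_iff_of_eigenvalue hA hroot he2 g).mpr he.2⟩
    rintro rfl
    refine he2 ((trace_sq_eq_four_iff hroot).mp ?_)
    rw [trace_one, Fintype.card_fin]
    norm_num
  rw [hempty, zero_add]
  have hiff : A = 1 ↔ A ^ g = 1 :=
    ⟨fun h => by rw [h, one_pow], fun h => not_not.mp fun h1 => hAg ⟨h1, h⟩⟩
  simp only [hiff]

lemma card_eigenvalue_algebraMap_pow_eq_one [IsAlgClosed K] {k : Type*} [Field k]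
    [DecidableEq k] [Algebra k K] (hg : Odd g) (hpg : p.Coprime g)
    (m : SpecialLinearGroup (Fin 2) k) :
    #{e ∈ (Polynomial.nthRootsFinset g (1 : K)).erase 1 |
        e * (algebraMap k K (m : Matrix (Fin 2) (Fin 2) k).trace - e) = 1} +
      (if m = 1 then 2 else 0) = if m ^ g = 1 then 2 else 0 := by
  let ι := (algebraMap k K).mapMatrix (m := Fin 2)
  have hι : Function.Injective ι := Matrix.map_injective (algebraMap k K).injective
  have hdet : (ι m).det = 1 := by rw [← RingHom.map_det, m.det_coe, map_one]
  have htr : (ι m).trace = algebraMap k K (m : Matrix (Fin 2) (Fin 2) k).trace :=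
    (AddMonoidHom.map_trace _ _).symm
  have hm : ι m = 1 ↔ m = 1 := by
    rw [map_eq_one_iff ι hι]
    exact ⟨fun h => Subtype.ext h, congrArg Subtype.val⟩
  have h := card_eigenvalue_pow_eq_one p hdet (exists_mul_sub_eq_one _) hg hpg
  simpa only [htr, hm, ← map_pow, map_eq_one_iff ι hι, coe_pow_eq_one_iff] using h

end Eigenvalues

/-- The trace `e + e⁻¹` of `m` lies in `E` as `e⁻¹ = e ^ |E|` is the conjugate of `e`, and
`E` contains no eigenvalue of `m`. -/
lemma card_trace_of_pow_card_add_one_eq_one [DecidableEq E] {K : Type*} [Field K]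
    [Algebra E K] [DecidableEq K] {e : K} (he : e ^ 2 ≠ 1) (heP : e ^ (Fintype.card E + 1) = 1) :
    #{m : SpecialLinearGroup (Fin 2) E |
        e * (algebraMap E K (m : Matrix (Fin 2) (Fin 2) E).trace - e) = 1} + Fintype.card E =
      Fintype.card E ^ 2 := by
  have he0 : e ≠ 0 := left_ne_zero_of_mul_eq_one ((pow_succ' e _).symm.trans heP)
  have hinv : e ^ Fintype.card E = e⁻¹ :=
    (mul_eq_one_iff_eq_inv₀ he0).mp ((pow_succ e _).symm.trans heP)
  obtain ⟨T, hT⟩ : e + e⁻¹ ∈ Set.range (algebraMap E K) := by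
    have h := map_add (FiniteField.frobeniusAlgHom E K) e e⁻¹
    simp only [map_inv₀, FiniteField.frobeniusAlgHom_apply, hinv, inv_inv] at h
    rw [← pow_card_eq_self_iff, h, add_comm]
  have htrace (t : E) : e * (algebraMap E K t - e) = 1 ↔ t = T := by
    rw [mul_comm, mul_eq_one_iff_eq_inv₀ he0, sub_eq_iff_eq_add', ← hT,
      (algebraMap E K).injective.eq_iff]
  have hroots : #{x : E | x * (T - x) = 1} = 0 := by
    refine card_filter_eq_zero_iff.mpr fun x _ hx => he ?_
    have hxK : e ∈ Set.range (algebraMap E K) := by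
      have h := congrArg (algebraMap E K) hx
      rw [map_mul, map_sub, map_one,
        mul_sub_eq_one_iff (l := e) ((htrace T).mpr rfl)] at h
      rcases h with h | h
      exacts [⟨x, h⟩, ⟨x⁻¹, by rw [map_inv₀, h, inv_inv]⟩]
    rw [sq, ← heP, pow_succ, pow_card_eq_self_iff.mpr hxK]
  simp only [htrace, card_trace_eq, hroots, mul_zero, add_zero]

/-- Double counting of the pairs `(m, e)` where `e ≠ 1` is a `g`-th root of unity in the algebraic
closure and an eigenvalue of `m`: each `m ≠ 1` with `m ^ g = 1` has two such eigenvalues. -/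
lemma two_mul_card_pow_eq_one [DecidableEq E] {g : ℕ} (hg : Odd g)
    (hgP : g ∣ Fintype.card E + 1) :
    2 * #{m : SpecialLinearGroup (Fin 2) E | m ^ g = 1} + g * Fintype.card E + Fintype.card E ^ 2 =
      g * Fintype.card E ^ 2 + Fintype.card E + 2 := by
  classical
  obtain ⟨p, _⟩ := CharP.exists E
  have : Fact p.Prime := ⟨CharP.char_is_prime E p⟩
  let K := AlgebraicClosure E
  have : CharP K p := charP_of_injective_algebraMap (algebraMap E K).injective p
  have hp : p ∣ Fintype.card E :=
    (CharP.cast_eq_zero_iff E p _).mp (FiniteField.cast_card_eq_zero E)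
  have hpg : p.Coprime g :=
    .of_dvd hp hgP (Nat.coprime_self_add_right.mpr (Nat.coprime_one_right _))
  let R := (Polynomial.nthRootsFinset g (1 : K)).erase 1
  have hR : #R + 1 = g := by
    rw [card_erase_add_one, card_nthRootsFinset_one p hpg]
    exact (Polynomial.mem_nthRootsFinset hg.pos _).mpr (one_pow g)
  let r (m : SpecialLinearGroup (Fin 2) E) (e : K) : Prop :=
    e * (algebraMap E K (m : Matrix (Fin 2) (Fin 2) E).trace - e) = 1
  have habove (m) : #(bipartiteAbove r R m) + (if m = 1 then 2 else 0) =
      if m ^ g = 1 then 2 else 0 :=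
    card_eigenvalue_algebraMap_pow_eq_one p hg hpg m
  have hbelow (e : K) (he : e ∈ R) :
      #(bipartiteBelow r univ e) + Fintype.card E = Fintype.card E ^ 2 := by
    obtain ⟨he1, heg⟩ := mem_erase.mp he
    rw [Polynomial.mem_nthRootsFinset hg.pos] at heg
    refine card_trace_of_pow_card_add_one_eq_one
      (fun h => he1 (eq_one_of_sq_eq_one_of_pow_odd hg h heg)) ?_
    obtain ⟨c, hc⟩ := hgP
    rw [hc, pow_mul, heg, one_pow]
  have h := sum_card_bipartiteAbove_eq_sum_card_bipartiteBelow r (s := univ) (t := R)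
  have h₁ := sum_congr rfl fun m (_ : m ∈ univ) => habove m
  have h₂ := sum_congr rfl hbelow
  simp only [sum_add_distrib, sum_ite_eq', mem_univ, if_true, ← sum_filter, sum_const,
    smul_eq_mul] at h₁ h₂
  linear_combination h₂ - h₁ + h + (Fintype.card E : ℕ) ^ 2 * hR - Fintype.card E * hR

end Torsion

section SumNumEigenvalues

variable {E : Type*} [Field E] [Fintype E] [DecidableEq E] (p : ℕ) [Fact p.Prime] [CharP E p]
  {r : ℕ}

lemma numEigenvalues_pow_of_odd (hr : Odd r) (m : SpecialLinearGroup (Fin 2) E) :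
    numEigenvalues p (Fintype.card E ^ r) m = numEigenvalues p (Fintype.card E) m := by
  have hdvd : m ^ (Fintype.card E - 1) = 1 → m ^ (Fintype.card E ^ r - 1) = 1 := by
    have h := Nat.sub_dvd_pow_sub_pow (Fintype.card E) 1 r
    rw [one_pow] at h
    exact fun hm => orderOf_dvd_iff_pow_eq_one.mp ((orderOf_dvd_of_pow_eq_one hm).trans h)
  unfold numEigenvalues
  by_cases hm : m ^ (2 * p) = 1
  · rw [if_pos hm, if_pos hm]
  rw [if_neg hm, if_neg hm]
  refine if_congr ⟨fun hr' => ?_, hdvd⟩ rfl rfl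
  have htri := pow_eq_one_trichotomy p m.det_coe
  simp only [coe_pow_eq_one_iff] at htri
  rcases htri with h | h | h
  · exact absurd h hm
  · exact h
  · have hplus : m ^ (Fintype.card E ^ r + 1) = 1 := by
      have hd := hr.nat_add_dvd_pow_add_pow (Fintype.card E) 1
      rw [one_pow] at hd
      exact orderOf_dvd_iff_pow_eq_one.mp ((orderOf_dvd_of_pow_eq_one h).trans hd)
    have hsq : m ^ 2 = 1 := by
      have hexp : Fintype.card E ^ r + 1 = Fintype.card E ^ r - 1 + 2 := by
        have := Nat.one_le_pow r _ (Fintype.card_pos (α := E))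
        lia
      rwa [hexp, pow_add, hr', one_mul] at hplus
    exact absurd (by rw [pow_mul, hsq, one_pow]) hm

lemma sum_numEigenvalues_pow_of_odd (hE : Odd (Fintype.card E)) (h2 : (2 : E) ≠ 0) (hr : Odd r) :
    ∑ m : SpecialLinearGroup (Fin 2) E, numEigenvalues p (Fintype.card E ^ r) m +
      3 * Fintype.card E = Fintype.card E ^ 3 := by
  simp only [numEigenvalues_pow_of_odd p hr, sum_numEigenvalues p hE h2]

lemma sum_numEigenvalues_pow_of_even (h2 : (2 : E) ≠ 0) (hr : Even r) :
    ∑ m : SpecialLinearGroup (Fin 2) E, numEigenvalues p (Fintype.card E ^ r) m +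
      2 * Fintype.card E ^ 2 + 2 * Fintype.card E = 2 * Fintype.card E ^ 3 := by
  have hdvd (m : SpecialLinearGroup (Fin 2) E) (hm : ¬m ^ (2 * p) = 1) :
      m ^ (Fintype.card E ^ r - 1) = 1 := by
    obtain ⟨s, rfl⟩ := hr.two_dvd
    have htri := pow_eq_one_trichotomy p m.det_coe
    simp only [coe_pow_eq_one_iff] at htri
    have h := Nat.sub_dvd_pow_sub_pow (Fintype.card E ^ 2) 1 s
    rw [one_pow, ← pow_mul, ← one_pow 2, Nat.sq_sub_sq, one_pow] at h
    rw [← orderOf_dvd_iff_pow_eq_one]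
    rcases htri with hm' | hm' | hm'
    · exact absurd hm' hm
    · exact (orderOf_dvd_of_pow_eq_one hm').trans ((Dvd.intro_left _ rfl).trans h)
    · exact (orderOf_dvd_of_pow_eq_one hm').trans ((Dvd.intro _ rfl).trans h)
  have hterm (m : SpecialLinearGroup (Fin 2) E) :
      numEigenvalues p (Fintype.card E ^ r) m + (if m ^ (2 * p) = 1 then 1 else 0) = 2 := by
    unfold numEigenvalues
    split_ifs with h h'
    exacts [rfl, rfl, absurd (hdvd m h) h']
  have h := sum_congr rfl fun m (_ : m ∈ univ) => hterm m
  rw [sum_add_distrib, ← card_filter, card_pow_two_mul_char_eq_one p h2, sum_const, card_univ,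
    smul_eq_mul] at h
  linear_combination h + 2 * card_specialLinearGroup_add_card (E := E)

end SumNumEigenvalues

section Norm

lemma exists_pow_eq_of_pow_eq_one {G : Type*} [CommGroup G] [IsCyclic G] [Finite G] {a b : ℕ}
    (hG : Nat.card G = a * b) {x : G} (hx : x ^ b = 1) : ∃ y, y ^ a = x := by
  have hpos : 0 < a * b := hG ▸ Nat.card_pos
  have hle : (powMonoidHom a : G →* G).range ≤ (powMonoidHom b).ker := by
    rintro _ ⟨y, rfl⟩
    rw [MonoidHom.mem_ker, powMonoidHom_apply, powMonoidHom_apply, ← pow_mul, ← hG,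
      pow_card_eq_one']
  have heq := Subgroup.eq_of_le_of_card_ge hle (by
    rw [IsCyclic.card_powMonoidHom_ker, IsCyclic.card_powMonoidHom_range, hG,
      Nat.gcd_mul_right_left, Nat.gcd_mul_left_left,
      Nat.mul_div_cancel_left b (Nat.pos_of_mul_pos_right hpos)])
  have hmem : x ∈ (powMonoidHom b : G →* G).ker := hx
  rw [← heq] at hmem
  exact hmem

variable {F : Type*} [Field F] [Fintype F]

lemma card_pow_eq [DecidableEq F] {a b : ℕ} (hF : Fintype.card F = a * b + 1) {X : F} (hX : X ≠ 0)
    (hXb : X ^ b = 1) : #{x : F | x ^ a = X} = a := by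
  have hcard : Nat.card Fˣ = a * b := by
    rw [Nat.card_units, Nat.card_eq_fintype_card, hF, Nat.add_sub_cancel]
  have hpos : 0 < a * b := hcard ▸ Nat.card_pos
  have ha : a ≠ 0 := (Nat.pos_of_mul_pos_right hpos).ne'
  obtain ⟨u, hu⟩ := exists_pow_eq_of_pow_eq_one hcard (x := Units.mk0 X hX) (Units.ext hXb)
  have hker := IsCyclic.card_powMonoidHom_ker Fˣ a
  rw [hcard, Nat.gcd_mul_right_left] at hker
  have hfib := MonoidHom.card_fiber_eq_of_mem_range (powMonoidHom a : Fˣ →* Fˣ) ⟨u, hu⟩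
    ⟨1, one_pow a⟩
  rw [← Fintype.card_subtype (fun g : Fˣ => powMonoidHom a g = 1),
    ← Nat.card_eq_fintype_card] at hfib
  refine Eq.trans ?_ (hfib.trans hker)
  refine (card_bij (fun (x : Fˣ) _ => (x : F)) (fun x hx => ?_)
    (fun _ _ _ _ => Units.ext) ?_).symm
  · simpa [Units.ext_iff] using hx
  · intro x hx
    have hx0 : x ≠ 0 := by
      rintro rfl
      simp [ha, hX.symm] at hx
    exact ⟨Units.mk0 x hx0, by simpa [Units.ext_iff] using hx, rfl⟩

variable {q : ℕ} (hF : Fintype.card F = q ^ 2) {σ : F →+* F} (hσ : ∀ x, σ x = x ^ q)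
include hF hσ

lemma conj_conj (x : F) : σ (σ x) = x := by
  rw [hσ, hσ, ← pow_mul, ← sq, ← hF, FiniteField.pow_card]

lemma card_mul_conj_eq [DecidableEq F] {X : F} (hX : X ≠ 0) (hXσ : σ X = X) :
    #{x : F | x * σ x = X} = q + 1 := by
  have hq : q ≠ 0 := by
    rintro rfl
    simp at hF
  simp only [hσ, ← pow_succ']
  refine card_pow_eq (b := q - 1) ?_ hX ?_
  · rw [hF, ← Nat.sq_sub_sq, one_pow,
      Nat.sub_add_cancel (Nat.one_le_pow _ _ (Nat.pos_of_ne_zero hq))]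
  · rwa [pow_pred_eq_one_iff hX hq, ← hσ]

lemma exists_mul_sub_eq_one_of_conj_eq (hq : Odd q) (h2 : (2 : F) ≠ 0) {T : F} (hT : σ T = T) :
    ∃ l, l * (T - l) = 1 := by
  classical
  obtain ⟨y, hy⟩ : IsSquare (T ^ 2 - 4) := by
    by_cases hD : T ^ 2 - 4 = 0
    · exact hD ▸ IsSquare.zero
    have hDσ : σ (T ^ 2 - 4) = T ^ 2 - 4 := by rw [map_sub, map_pow, hT, map_ofNat]
    obtain ⟨x, hx⟩ := card_pos.mp (q.succ_pos.trans_eq (card_mul_conj_eq hF hσ hD hDσ).symm)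
    rw [mem_filter_univ, hσ, ← pow_succ'] at hx
    exact hx ▸ hq.add_one.isSquare_pow x
  refine ⟨(T + y) / 2, ?_⟩
  field_simp
  linear_combination hy

end Norm

/-! ### Eigenvectors of special unitary matrices -/

section Hermitian

/-- The Hermitian form `x * σ x - y * σ y` on the plane. -/
def hermitianForm {F : Type*} [Field F] (σ : F →+* F) (v : Fin 2 → F) : F :=
  v 0 * σ (v 0) - v 1 * σ (v 1)

/-- The special unitary group of `hermitianForm σ`: the matrices `!![a, σ c; c, σ a]` of
determinant one. -/
structure IsSpecialUnitary {F : Type*} [Field F] (σ : F →+* F) (m : Matrix (Fin 2) (Fin 2) F) :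
    Prop where
  det_eq_one : m.det = 1
  apply_zero_one : m 0 1 = σ (m 1 0)
  apply_one_one : m 1 1 = σ (m 0 0)

variable {F : Type*} [Field F] {σ : F →+* F} {m : Matrix (Fin 2) (Fin 2) F}

lemma mulVec_eq_smul_iff {v : Fin 2 → F} {c : F} : m *ᵥ v = c • v ↔
    m 0 0 * v 0 + m 0 1 * v 1 = c * v 0 ∧ m 1 0 * v 0 + m 1 1 * v 1 = c * v 1 := by
  rw [mulVec_fin_two, funext_iff, Fin.forall_fin_two]
  rfl

lemma mulVec_one_eq_smul_iff {t : F} : (∃ c : F, m *ᵥ ![1, t] = c • ![1, t]) ↔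
    m 1 0 + m 1 1 * t = t * (m 0 0 + m 0 1 * t) := by
  simp only [mulVec_eq_smul_iff, cons_val_zero, cons_val_one, mul_one]
  exact ⟨fun ⟨c, h0, h1⟩ => by rw [h0, h1, mul_comm], fun h => ⟨_, rfl, by rw [h, mul_comm]⟩⟩

lemma mul_trace_sub_eq_one (hm : m.det = 1) {v : Fin 2 → F} (hv : v ≠ 0) {c : F}
    (h : m *ᵥ v = c • v) : c * (m.trace - c) = 1 := by
  have hdet : (m - c • (1 : Matrix (Fin 2) (Fin 2) F)).det = 0 :=
    exists_mulVec_eq_zero_iff.mp ⟨v, hv, by rw [sub_mulVec, smul_mulVec, one_mulVec, h, sub_self]⟩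
  rw [det_fin_two] at hm hdet
  simp only [Matrix.sub_apply, Matrix.smul_apply, one_apply_eq, smul_eq_mul, mul_one, ne_eq,
    Fin.zero_ne_one, one_ne_zero, not_false_eq_true, one_apply_ne, mul_zero, sub_zero] at hdet
  rw [trace_fin_two]
  linear_combination hm - hdet

lemma hermitianForm_smul (t : F) (v : Fin 2 → F) :
    hermitianForm σ (t • v) = t * σ t * hermitianForm σ v := by
  simp only [hermitianForm, Pi.smul_apply, smul_eq_mul, map_mul]
  ring

lemma conj_hermitianForm (hσσ : ∀ x, σ (σ x) = x) (v : Fin 2 → F) :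
    σ (hermitianForm σ v) = hermitianForm σ v := by
  simp only [hermitianForm, map_sub, map_mul, hσσ, mul_comm]

lemma ne_zero_of_hermitianForm_ne_zero {v : Fin 2 → F} (hv : hermitianForm σ v ≠ 0) : v ≠ 0 := by
  rintro rfl
  simp [hermitianForm] at hv

namespace IsSpecialUnitary

lemma conj_trace (hσσ : ∀ x, σ (σ x) = x) (hm : IsSpecialUnitary σ m) : σ m.trace = m.trace := by
  rw [trace_fin_two, map_add, hm.apply_one_one, hσσ, add_comm]

lemma eq_one_of_mulVec_eq (hσσ : ∀ x, σ (σ x) = x) (hm : IsSpecialUnitary σ m) {v : Fin 2 → F}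
    (hv : hermitianForm σ v = 1) (h : m *ᵥ v = v) : m = 1 := by
  obtain ⟨h1, h2⟩ := mulVec_eq_smul_iff.mp (h.trans (one_smul F v).symm)
  rw [hermitianForm] at hv
  have h2' := congrArg σ h2
  simp only [map_add, map_mul, map_one, hm.apply_one_one, hσσ, ← hm.apply_zero_one] at h2'
  have h00 : m 0 0 = 1 := by
    linear_combination σ (v 0) * h1 - v 1 * h2' - (m 0 0 - 1) * hv
  have h01 : m 0 1 = 0 := by
    linear_combination v 0 * h2' - σ (v 1) * h1 - m 0 1 * hv
  have h10 : m 1 0 = 0 := by rw [← hσσ (m 1 0), ← hm.apply_zero_one, h01, map_zero]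
  ext i j
  fin_cases i <;> fin_cases j <;> simp [h00, h01, h10, hm.apply_one_one]

/-- The eigenlines of a special unitary matrix for two distinct eigenvalues `c` and `σ c` of norm
one are orthogonal, so neither is isotropic. -/
lemma exists_eigenvector (hσσ : ∀ x, σ (σ x) = x) (hm : IsSpecialUnitary σ m) {c : F}
    (hc : c * σ c = 1) (hcc : c ≠ σ c) (hroot : c * (m.trace - c) = 1) :
    ∃ v, m *ᵥ v = c • v ∧ hermitianForm σ v ≠ 0 := by
  have hc0 : c ≠ 0 := left_ne_zero_of_mul_eq_one hc
  have htr : m 0 0 + m 1 1 = c + σ c := by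
    rw [← trace_fin_two]
    exact mul_left_cancel₀ hc0 (by linear_combination hroot - hc)
  have hdet := hm.det_eq_one
  rw [det_fin_two] at hdet
  by_cases h00 : m 0 0 = σ c
  · have h11 : m 1 1 = c := by rw [hm.apply_one_one, h00, hσσ]
    have h01 : m 0 1 = 0 := by
      have h : m 0 1 * m 1 0 = 0 := by linear_combination hc - hdet + m 1 1 * h00 + σ c * h11
      rcases mul_eq_zero.mp h with h | h
      exacts [h, by rw [hm.apply_zero_one, h, map_zero]]
    refine ⟨![0, 1], mulVec_eq_smul_iff.mpr ⟨by simp [h01], by simp [h11]⟩, ?_⟩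
    simp [hermitianForm]
  · refine ⟨![m 0 0 - σ c, m 1 0], mulVec_eq_smul_iff.mpr ⟨?_, ?_⟩, ?_⟩
    · simp only [cons_val_zero, cons_val_one]
      linear_combination m 0 0 * htr - hdet + hc
    · simp only [cons_val_zero, cons_val_one]
      linear_combination m 1 0 * htr
    · have hform : hermitianForm σ ![m 0 0 - σ c, m 1 0] = (m 0 0 - σ c) * (σ c - c) := by
        simp only [hermitianForm, cons_val_zero, cons_val_one, map_sub, hσσ, ← hm.apply_one_one,
          ← hm.apply_zero_one]
        linear_combination hdet - σ c * htr - hc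
      rw [hform]
      exact mul_ne_zero (sub_ne_zero.mpr h00) (sub_ne_zero.mpr hcc.symm)

lemma bijOn_isotropic_eigenvector (hσσ : ∀ x, σ (σ x) = x) (hm : IsSpecialUnitary σ m)
    (h10 : m 1 0 ≠ 0) : Set.BijOn (fun t => m 0 0 + m 0 1 * t)
      {t | t * σ t = 1 ∧ ∃ c : F, m *ᵥ ![1, t] = c • ![1, t]}
      {x | σ x = x ∧ x * (m.trace - x) = 1} := by
  have h01 : m 0 1 ≠ 0 := by rwa [hm.apply_zero_one, Ne, map_eq_zero]
  have hσ01 : σ (m 0 1) = m 1 0 := by rw [hm.apply_zero_one, hσσ]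
  have hdet := hm.det_eq_one
  rw [det_fin_two] at hdet
  simp only [mulVec_one_eq_smul_iff, trace_fin_two]
  refine ⟨fun t ⟨ht, hct⟩ => ⟨?_, ?_⟩, fun t _ t' _ h => mul_left_cancel₀ h01 (add_left_cancel h),
    fun x ⟨hx, hroot⟩ => ⟨(x - m 0 0) / m 0 1, ⟨?_, ?_⟩, ?_⟩⟩
  · rw [map_add, map_mul, hσ01, ← hm.apply_one_one]
    refine mul_left_cancel₀ (left_ne_zero_of_mul_eq_one ht) ?_
    linear_combination hct + m 1 0 * ht
  · linear_combination m 0 1 * hct + hdet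
  · rw [map_div₀, map_sub, hx, hσ01, ← hm.apply_one_one]
    field_simp
    linear_combination hdet - hroot
  · field_simp
    linear_combination hroot - hdet
  · simp only [mul_div_cancel₀ _ h01, add_sub_cancel]

lemma ncard_isotropic_eigenvector_of_sq_ne_one (hσσ : ∀ x, σ (σ x) = x)
    (hm : IsSpecialUnitary σ m) (hm2 : m ^ 2 ≠ 1) :
    {t | t * σ t = 1 ∧ ∃ c : F, m *ᵥ ![1, t] = c • ![1, t]}.ncard =
      {x | σ x = x ∧ x * (m.trace - x) = 1}.ncard := by
  by_cases h10 : m 1 0 = 0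
  · have h01 : m 0 1 = 0 := by rw [hm.apply_zero_one, h10, map_zero]
    have hdet := hm.det_eq_one
    rw [det_fin_two, h10, mul_zero, sub_zero] at hdet
    have hne : m 1 1 ≠ m 0 0 := by
      intro h
      refine hm2 ?_
      rw [h] at hdet
      ext i j
      fin_cases i <;> fin_cases j <;>
        simp [sq, Matrix.mul_apply, Fin.sum_univ_two, h10, h01, h, hdet]
    refine congrArg Set.ncard ((Set.eq_empty_of_forall_notMem ?_).trans
      (Set.eq_empty_of_forall_notMem ?_).symm)
    · rintro t ⟨ht, hct⟩
      rw [mulVec_one_eq_smul_iff, h10, h01] at hct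
      exact hne (mul_left_cancel₀ (left_ne_zero_of_mul_eq_one ht) (by linear_combination hct))
    · rintro x ⟨hx, hroot⟩
      have h : (x - m 0 0) * (x - m 1 1) = 0 := by
        rw [trace_fin_two] at hroot
        linear_combination hdet - hroot
      rcases mul_eq_zero.mp h with h | h <;> rw [sub_eq_zero] at h <;> subst h
      · exact hne (hm.apply_one_one.trans hx)
      · exact hne (hx.symm.trans (by rw [hm.apply_one_one, hσσ]))
  · exact (hm.bijOn_isotropic_eigenvector hσσ h10).ncard_eq

end IsSpecialUnitary

lemma exists_eq_smul_of_eigenvector {c : F} (hcc : 2 * c ≠ m.trace) {v₀ v : Fin 2 → F}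
    (hv₀ : hermitianForm σ v₀ ≠ 0) (h₀ : m *ᵥ v₀ = c • v₀) (h : m *ᵥ v = c • v) :
    ∃ t : F, v = t • v₀ := by
  obtain ⟨h00, h01⟩ := mulVec_eq_smul_iff.mp h₀
  obtain ⟨h10, h11⟩ := mulVec_eq_smul_iff.mp h
  have hdet : v₀ 0 * v 1 = v₀ 1 * v 0 := by
    rw [trace_fin_two] at hcc
    refine sub_eq_zero.mp ((mul_eq_zero.mp ?_).resolve_left (sub_ne_zero.mpr hcc))
    linear_combination v 0 * h01 - v 1 * h00 + v₀ 1 * h10 - v₀ 0 * h11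
  refine ⟨(v 0 * σ (v₀ 0) - v 1 * σ (v₀ 1)) / hermitianForm σ v₀, funext fun i => ?_⟩
  rw [Pi.smul_apply, smul_eq_mul, div_mul_eq_mul_div, eq_div_iff hv₀, hermitianForm]
  revert i
  rw [Fin.forall_fin_two]
  constructor
  · linear_combination σ (v₀ 1) * hdet
  · linear_combination σ (v₀ 0) * hdet

section Count

variable [Fintype F] [DecidableEq F] {q : ℕ} (hF : Fintype.card F = q ^ 2) (hσ : ∀ x, σ x = x ^ q)
include hF hσ

lemma card_hermitianForm_eq_one : #{v : Fin 2 → F | hermitianForm σ v = 1} + q = q ^ 3 := by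
  have hneg : #{y : F | y * σ y = -1} = q + 1 :=
    card_mul_conj_eq hF hσ (neg_ne_zero.mpr one_ne_zero) (by rw [map_neg, map_one])
  have hsum : #{v : Fin 2 → F | hermitianForm σ v = 1} =
      ∑ y : F, #{x : F | x * σ x = 1 + y * σ y} := by
    simp only [card_filter]
    refine (Fintype.sum_equiv (finTwoArrowEquiv F) _
      (fun v : F × F => if v.1 * σ v.1 - v.2 * σ v.2 = 1 then 1 else 0) fun _ => rfl).trans ?_
    rw [Fintype.sum_prod_type_right]
    simp only [sub_eq_iff_eq_add]
  have hfib (y : F) : #{x : F | x * σ x = 1 + y * σ y} + (if y * σ y = -1 then q else 0) =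
      q + 1 := by
    split_ifs with hy
    · have hzero : #{x : F | x * σ x = 1 + y * σ y} = 1 := by
        refine card_eq_one.mpr ⟨0, Finset.ext fun x => ?_⟩
        rw [mem_filter_univ, mem_singleton, hy, add_neg_cancel, mul_eq_zero, map_eq_zero, or_self]
      rw [hzero, add_comm]
    · rw [add_zero]
      refine card_mul_conj_eq hF hσ (fun h => hy (by linear_combination h)) ?_
      rw [map_add, map_one, map_mul, conj_conj hF hσ, mul_comm]
  have h := sum_congr rfl fun y (_ : y ∈ univ) => hfib y
  rw [sum_add_distrib, ← hsum, ← sum_filter, sum_const, sum_const, hneg, card_univ, hF,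
    smul_eq_mul, smul_eq_mul] at h
  linear_combination h

namespace IsSpecialUnitary

lemma card_eigenvector (hm : IsSpecialUnitary σ m) {c : F} (hc : c * σ c = 1) (hcc : c ≠ σ c)
    (hroot : c * (m.trace - c) = 1) :
    #{v : Fin 2 → F | hermitianForm σ v = 1 ∧ m *ᵥ v = c • v} = q + 1 := by
  have hσσ := conj_conj hF hσ
  obtain ⟨v₀, h₀, hv₀⟩ := hm.exists_eigenvector hσσ hc hcc hroot
  have htr : 2 * c ≠ m.trace := by
    intro h
    refine hcc (mul_left_cancel₀ (left_ne_zero_of_mul_eq_one hc) ?_)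
    linear_combination hroot - hc + c * h
  rw [← card_mul_conj_eq hF hσ (inv_ne_zero hv₀)
    (by rw [map_inv₀, conj_hermitianForm hσσ])]
  refine (card_bij (fun t _ => t • v₀) (fun t ht => ?_) (fun t _ t' _ h => ?_) fun v hv => ?_).symm
  · rw [mem_filter_univ] at ht ⊢
    rw [hermitianForm_smul, ht, inv_mul_cancel₀ hv₀, mulVec_smul, h₀, smul_comm]
    exact ⟨rfl, rfl⟩
  · exact smul_left_injective F (ne_zero_of_hermitianForm_ne_zero hv₀) h
  · rw [mem_filter_univ] at hv
    obtain ⟨t, rfl⟩ := exists_eq_smul_of_eigenvector htr hv₀ h₀ hv.2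
    rw [hermitianForm_smul] at hv
    exact ⟨t, (mem_filter_univ t).mpr (eq_inv_of_mul_eq_one_left hv.1), rfl⟩

lemma ncard_isotropic_eigenvector (p : ℕ) [Fact p.Prime] [CharP F p] (hq : Odd q)
    (h2 : (2 : F) ≠ 0) (hm : IsSpecialUnitary σ m) :
    {t | t * σ t = 1 ∧ ∃ c : F, m *ᵥ ![1, t] = c • ![1, t]}.ncard =
      numEigenvalues p q m + if m ^ 2 = 1 then q else 0 := by
  have hσσ := conj_conj hF hσ
  split_ifs with hm2
  · have hscalar (v : Fin 2 → F) : ∃ c : F, m *ᵥ v = c • v := by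
      rcases (sq_eq_one_iff_of_det_eq_one h2 hm.det_eq_one).mp hm2 with rfl | rfl
      exacts [⟨1, by rw [one_mulVec, one_smul]⟩, ⟨-1, by rw [neg_mulVec, one_mulVec, neg_one_smul]⟩]
    rw [numEigenvalues, pow_mul, hm2, one_pow, if_pos rfl, add_comm]
    simp only [hscalar, and_true]
    rw [← card_mul_conj_eq hF hσ one_ne_zero (map_one σ), ← Set.ncard_coe_finset, coe_filter_univ]
  · rw [add_zero, hm.ncard_isotropic_eigenvector_of_sq_ne_one hσσ hm2]
    simp only [hσ]
    exact ncard_eigenvalue_pow_eq_self p hq hm.det_eq_one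
      (exists_mul_sub_eq_one_of_conj_eq hF hσ hq h2 (hm.conj_trace hσσ))

lemma card_mulVec_eq_self (hm : IsSpecialUnitary σ m) :
    #{v : Fin 2 → F | hermitianForm σ v = 1 ∧ m *ᵥ v = v} + (if m = 1 then q else 0) =
      if m = 1 then q ^ 3 else 0 := by
  split_ifs with h1
  · subst h1
    simp only [one_mulVec, and_true, card_hermitianForm_eq_one hF hσ]
  · rw [add_zero, card_eq_zero, filter_eq_empty_iff]
    rintro v - ⟨hv, hmv⟩
    exact h1 (hm.eq_one_of_mulVec_eq (conj_conj hF hσ) hv hmv)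

lemma card_mulVec_eq_smul (hm : IsSpecialUnitary σ m) {c : F} (hc : c * σ c = 1) (hcc : c ≠ σ c) :
    #{v : Fin 2 → F | hermitianForm σ v = 1 ∧ m *ᵥ v = c • v} =
      if c * (m.trace - c) = 1 then q + 1 else 0 := by
  split_ifs with hroot
  · exact hm.card_eigenvector hF hσ hc hcc hroot
  · rw [card_eq_zero, filter_eq_empty_iff]
    rintro v - ⟨hv, hmv⟩
    exact hroot (mul_trace_sub_eq_one hm.det_eq_one
      (ne_zero_of_hermitianForm_ne_zero (hv ▸ one_ne_zero)) hmv)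

end IsSpecialUnitary

end Count

end Hermitian

section Orbits

lemma ncard_image_orbit_mul_card {G X : Type*} [Group G] [Fintype G] [MulAction G X] {Y : Set X}
    (hYfin : Y.Finite) (hY : ∀ (g : G), ∀ x ∈ Y, g • x ∈ Y) :
    (MulAction.orbit G '' Y).ncard * Fintype.card G =
      ∑ g : G, {x ∈ Y | g • x = x}.ncard := by
  classical
  let Z : SubMulAction G X := ⟨Y, fun g x hx => hY g x hx⟩
  have : Fintype Z := hYfin.fintype
  have hfix (g : G) : Fintype.card (MulAction.fixedBy Z g) = {x ∈ Y | g • x = x}.ncard := by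
    rw [← Nat.card_eq_fintype_card, Nat.card_coe_set_eq,
      ← Set.ncard_image_of_injective _ Subtype.val_injective]
    congr 1
    ext x
    have hxZ : x ∈ Z ↔ x ∈ Y := Iff.rfl
    simp [Subtype.ext_iff, hxZ, and_comm]
  have hker : MulAction.orbitRel G Z = Setoid.ker fun x : Z => MulAction.orbit G (x : X) := by
    rw [Z.orbitRel_of_subMul]
    exact Setoid.ext fun x y => MulAction.orbit_eq_iff.symm
  have horb : Fintype.card (Quotient (MulAction.orbitRel G Z)) =
      (MulAction.orbit G '' Y).ncard := by
    rw [← Nat.card_eq_fintype_card, hker, Nat.card_congr (Setoid.quotientKerEquivRange _),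
      Set.image_eq_range, Nat.card_coe_set_eq]
    rfl
  rw [← horb, ← MulAction.sum_card_fixedBy_eq_card_orbits_mul_card_group]
  exact sum_congr rfl fun g _ => hfix g

variable {F : Type*} [Field F]

lemma numOrbits_range_mul_card [Finite F] {G : Type*} [Group G] [Fintype G]
    (ψ : G →* GL (Fin 3) F) {O : Set (Projectivization F (Fin 3 → F))}
    (hO : ∀ g, ∀ x ∈ O, glAct (ψ g) x ∈ O) :
    numOrbits ψ.range O * Fintype.card G = ∑ g : G, {x ∈ O | glAct (ψ g) x = x}.ncard := by
  let := MulAction.compHom (Projectivization F (Fin 3 → F))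
    ((Matrix.GeneralLinearGroup.toLin (n := Fin 3) (R := F)).toMonoidHom.comp ψ)
  have hsmul (g : G) (x : Projectivization F (Fin 3 → F)) : glAct (ψ g) x = g • x := rfl
  simp only [hsmul] at hO ⊢
  rw [← ncard_image_orbit_mul_card O.toFinite hO, numOrbits, Nat.card_coe_set_eq]
  congr 3
  ext x y
  simp [MulAction.mem_orbit_iff, hsmul]

end Orbits

/-! ### Fixed points in the projective plane -/

section FixedPoints

variable {F : Type*} [Field F]

/-- The embedding `m ↦ m ⊕ 1` of the matrices acting on the affine plane `Z = 1` into those acting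
on the projective plane. -/
def block : Matrix (Fin 2) (Fin 2) F →* Matrix (Fin 3) (Fin 3) F where
  toFun m := !![m 0 0, m 0 1, 0; m 1 0, m 1 1, 0; 0, 0, 1]
  map_one' := by
    ext i j
    fin_cases i <;> fin_cases j <;> simp
  map_mul' m n := by
    ext i j
    fin_cases i <;> fin_cases j <;> simp [Matrix.mul_apply, Fin.sum_univ_three, Fin.sum_univ_two]

lemma block_apply (m : Matrix (Fin 2) (Fin 2) F) :
    block m = !![m 0 0, m 0 1, 0; m 1 0, m 1 1, 0; 0, 0, 1] := rfl

lemma block_injective : Function.Injective (block (F := F)) := by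
  intro m n h
  ext i j
  fin_cases i <;> fin_cases j
  exacts [congrFun₂ h 0 0, congrFun₂ h 0 1, congrFun₂ h 1 0, congrFun₂ h 1 1]

lemma block_mulVec (m : Matrix (Fin 2) (Fin 2) F) (v : Fin 3 → F) :
    block m *ᵥ v = ![(m *ᵥ ![v 0, v 1]) 0, (m *ᵥ ![v 0, v 1]) 1, v 2] := by
  ext i
  fin_cases i <;> simp [block_apply, mulVec, dotProduct, Fin.sum_univ_three, Fin.sum_univ_two]

/-- The point `(x : y : 1)` of the projective plane with affine coordinates `v = (x, y)`. -/
def affinePoint (v : Fin 2 → F) : Projectivization F (Fin 3 → F) :=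
  .mk F ![v 0, v 1, 1] fun h => one_ne_zero (congrFun h 2)

/-- The point `(1 : t : 0)` at infinity, in the direction of slope `t`. -/
def infinitePoint (t : F) : Projectivization F (Fin 3 → F) :=
  .mk F ![1, t, 0] fun h => one_ne_zero (congrFun h 0)

lemma affinePoint_eq_mk_iff {v : Fin 2 → F} {u : Fin 3 → F} (hu : u ≠ 0) (h2 : u 2 = 1) :
    affinePoint v = .mk F u hu ↔ v = ![u 0, u 1] := by
  rw [affinePoint, Projectivization.mk_eq_mk_iff']
  constructor
  · rintro ⟨c, hc⟩
    have hc1 : c = 1 := by simpa [h2] using congrFun hc 2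
    ext i
    fin_cases i
    exacts [by simpa [hc1] using (congrFun hc 0).symm, by simpa [hc1] using (congrFun hc 1).symm]
  · rintro rfl
    refine ⟨1, ?_⟩
    ext i
    fin_cases i <;> simp [h2]

lemma infinitePoint_eq_mk_iff {t : F} {u : Fin 3 → F} (hu : u ≠ 0) (h2 : u 2 = 0) :
    infinitePoint t = .mk F u hu ↔ ∃ c : F, ![u 0, u 1] = c • ![1, t] := by
  rw [eq_comm, infinitePoint, Projectivization.mk_eq_mk_iff']
  refine exists_congr fun c => ⟨fun h => ?_, fun h => ?_⟩
  · ext i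
    fin_cases i
    exacts [(congrFun h 0).symm, (congrFun h 1).symm]
  · ext i
    fin_cases i
    exacts [(congrFun h 0).symm, (congrFun h 1).symm, by simp [h2]]

lemma affinePoint_injective : Function.Injective (affinePoint (F := F)) := fun v v' h => by
  refine ((affinePoint_eq_mk_iff _ rfl).mp h).trans ?_
  ext i
  fin_cases i <;> rfl

lemma infinitePoint_injective : Function.Injective (infinitePoint (F := F)) := fun t t' h => by
  obtain ⟨c, hc⟩ := (infinitePoint_eq_mk_iff _ rfl).mp h
  have hc1 : 1 = c := by simpa using congrFun hc 0
  simpa [← hc1] using (congrFun hc 1).symm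

lemma affinePoint_ne_infinitePoint (v : Fin 2 → F) (t : F) : affinePoint v ≠ infinitePoint t := by
  intro h
  obtain ⟨c, hc⟩ := (Projectivization.mk_eq_mk_iff' ..).mp h
  simpa using congrFun hc 2

lemma glAct_affinePoint_eq_iff {M : GL (Fin 3) F} {m : Matrix (Fin 2) (Fin 2) F}
    (hM : M.1 = block m) (v : Fin 2 → F) :
    glAct M (affinePoint v) = affinePoint v ↔ m *ᵥ v = v := by
  have hMv : M.1 *ᵥ ![v 0, v 1, 1] = ![(m *ᵥ v) 0, (m *ᵥ v) 1, 1] := by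
    rw [hM, block_mulVec]
    exact congrArg (fun u => ![(m *ᵥ u) 0, (m *ᵥ u) 1, 1]) (FinVec.etaExpand_eq v)
  rw [eq_comm, eq_comm (a := m *ᵥ v), ← FinVec.etaExpand_eq (m *ᵥ v)]
  refine (affinePoint_eq_mk_iff _ (congrFun hMv 2)).trans ?_
  rw [hMv]
  rfl

lemma glAct_infinitePoint_eq_iff {M : GL (Fin 3) F} {m : Matrix (Fin 2) (Fin 2) F}
    (hM : M.1 = block m) (t : F) :
    glAct M (infinitePoint t) = infinitePoint t ↔ ∃ c : F, m *ᵥ ![1, t] = c • ![1, t] := by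
  have hMt : M.1 *ᵥ ![1, t, 0] = ![(m *ᵥ ![1, t]) 0, (m *ᵥ ![1, t]) 1, 0] := by
    rw [hM, block_mulVec]
    rfl
  rw [eq_comm, ← FinVec.etaExpand_eq (m *ᵥ ![1, t])]
  refine (infinitePoint_eq_mk_iff _ (congrFun hMt 2)).trans ?_
  rw [hMt]
  rfl

section HermitianPoints

variable {q : ℕ} {σ : F →+* F} (hσ : ∀ x, σ x = x ^ q)
include hσ

lemma mk_mem_hermitianPts_iff {v : Fin 3 → F} (hv : v ≠ 0) :
    Projectivization.mk F v hv ∈ hermitianPts q F ↔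
      hermitianForm σ ![v 0, v 1] = v 2 * σ (v 2) := by
  obtain ⟨a, ha⟩ := Projectivization.exists_smul_eq_mk_rep F v hv
  have hrep (i : Fin 3) : (Projectivization.mk F v hv).rep i = a * v i := congrFun ha.symm i
  simp only [hermitianPts, Set.mem_ofPred_eq, hrep, mul_pow, ← mul_sub,
    mul_right_inj' (pow_ne_zero (q + 1) a.ne_zero), hermitianForm, cons_val_zero, cons_val_one,
    hσ, ← pow_succ']
  exact ⟨fun h => by rw [h, sub_sub_cancel], fun h => by rw [← h, sub_sub_cancel]⟩

lemma affinePoint_mem_hermitianPts_iff {v : Fin 2 → F} :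
    affinePoint v ∈ hermitianPts q F ↔ hermitianForm σ v = 1 := by
  have hone : (1 : F) * σ 1 = 1 := by rw [map_one, mul_one]
  rw [affinePoint, mk_mem_hermitianPts_iff hσ, ← FinVec.etaExpand_eq v]
  exact iff_of_eq (congrArg (hermitianForm σ ![v 0, v 1] = ·) hone)

lemma infinitePoint_mem_hermitianPts_iff {t : F} :
    infinitePoint t ∈ hermitianPts q F ↔ t * σ t = 1 := by
  rw [infinitePoint, mk_mem_hermitianPts_iff hσ, hermitianForm]
  simp [sub_eq_zero, eq_comm (a := (1 : F))]

lemma exists_eq_point_of_mem_hermitianPts {x : Projectivization F (Fin 3 → F)}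
    (hx : x ∈ hermitianPts q F) : (∃ v, affinePoint v = x) ∨ ∃ t, infinitePoint t = x := by
  induction x using Projectivization.ind with
  | h v hv =>
    by_cases h2 : v 2 = 0
    · have h0 : v 0 ≠ 0 := by
        intro h0
        have h1 : v 1 = 0 := by
          simpa [mk_mem_hermitianPts_iff hσ, hermitianForm, h0, h2] using hx
        refine hv (funext fun i => ?_)
        fin_cases i <;> assumption
      refine Or.inr ⟨v 1 / v 0, (infinitePoint_eq_mk_iff hv h2).mpr ⟨v 0, ?_⟩⟩
      simp [mul_div_cancel₀ _ h0]
    · refine Or.inl ⟨![v 0 / v 2, v 1 / v 2], (Projectivization.mk_eq_mk_iff' ..).mpr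
        ⟨(v 2)⁻¹, funext fun i => ?_⟩⟩
      fin_cases i <;> simp [h2, div_eq_inv_mul]

lemma fixed_hermitianPts_eq_union {M : GL (Fin 3) F} {m : Matrix (Fin 2) (Fin 2) F}
    (hM : M.1 = block m) : {x ∈ hermitianPts q F | glAct M x = x} =
      affinePoint '' {v | hermitianForm σ v = 1 ∧ m *ᵥ v = v} ∪
      infinitePoint '' {t | t * σ t = 1 ∧ ∃ c : F, m *ᵥ ![1, t] = c • ![1, t]} := by
  ext x
  constructor
  · rintro ⟨hx, hfix⟩
    rcases exists_eq_point_of_mem_hermitianPts hσ hx with ⟨v, rfl⟩ | ⟨t, rfl⟩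
    · exact Or.inl ⟨v, ⟨(affinePoint_mem_hermitianPts_iff hσ).mp hx,
        (glAct_affinePoint_eq_iff hM v).mp hfix⟩, rfl⟩
    · exact Or.inr ⟨t, ⟨(infinitePoint_mem_hermitianPts_iff hσ).mp hx,
        (glAct_infinitePoint_eq_iff hM t).mp hfix⟩, rfl⟩
  · rintro (⟨v, ⟨hv, hfix⟩, rfl⟩ | ⟨t, ⟨ht, hfix⟩, rfl⟩)
    · exact ⟨(affinePoint_mem_hermitianPts_iff hσ).mpr hv,
        (glAct_affinePoint_eq_iff hM v).mpr hfix⟩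
    · exact ⟨(infinitePoint_mem_hermitianPts_iff hσ).mpr ht,
        (glAct_infinitePoint_eq_iff hM t).mpr hfix⟩

lemma ncard_fixed_hermitianPts [Finite F] {M : GL (Fin 3) F} {m : Matrix (Fin 2) (Fin 2) F}
    (hM : M.1 = block m) : {x ∈ hermitianPts q F | glAct M x = x}.ncard =
      {v | hermitianForm σ v = 1 ∧ m *ᵥ v = v}.ncard +
      {t | t * σ t = 1 ∧ ∃ c : F, m *ᵥ ![1, t] = c • ![1, t]}.ncard := by
  have hdisj : Disjoint (affinePoint '' {v | hermitianForm σ v = 1 ∧ m *ᵥ v = v})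
      (infinitePoint '' {t | t * σ t = 1 ∧ ∃ c : F, m *ᵥ ![1, t] = c • ![1, t]}) := by
    rw [Set.disjoint_left]
    rintro - ⟨v, -, rfl⟩ ⟨t, -, h⟩
    exact affinePoint_ne_infinitePoint v t h.symm
  rw [fixed_hermitianPts_eq_union hσ hM, Set.ncard_union_eq hdisj,
    Set.ncard_image_of_injective _ affinePoint_injective,
    Set.ncard_image_of_injective _ infinitePoint_injective]

end HermitianPoints

end FixedPoints

section ScaledRepresentation

variable {F : Type*} [Field F] {σ : F →+* F}

lemma IsSpecialUnitary.hermitianForm_mulVec {m : Matrix (Fin 2) (Fin 2) F}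
    (hσσ : ∀ x, σ (σ x) = x) (hm : IsSpecialUnitary σ m) (v : Fin 2 → F) :
    hermitianForm σ (m *ᵥ v) = hermitianForm σ v := by
  have hdet := hm.det_eq_one
  rw [det_fin_two, hm.apply_zero_one, hm.apply_one_one] at hdet
  simp only [hermitianForm, mulVec, dotProduct, Fin.sum_univ_two, hm.apply_zero_one,
    hm.apply_one_one, map_add, map_mul, hσσ]
  linear_combination (v 0 * σ (v 0) - v 1 * σ (v 1)) * hdet

lemma glAct_mem_hermitianPts {q : ℕ} (hσ : ∀ x, σ x = x ^ q) {M : GL (Fin 3) F}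
    {m : Matrix (Fin 2) (Fin 2) F} (hM : M.1 = block m)
    (hm : ∀ v, hermitianForm σ (m *ᵥ v) = hermitianForm σ v)
    {x : Projectivization F (Fin 3 → F)} (hx : x ∈ hermitianPts q F) :
    glAct M x ∈ hermitianPts q F := by
  induction x using Projectivization.ind with
  | h v hv =>
    refine (mk_mem_hermitianPts_iff hσ (v := M.1 *ᵥ v) _).mpr ?_
    rw [mk_mem_hermitianPts_iff hσ, ← hm] at hx
    rw [hM, block_mulVec]
    exact (congrArg (hermitianForm σ) (FinVec.etaExpand_eq (m *ᵥ ![v 0, v 1]))).trans hx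

/-- The homomorphism `block` on invertible matrices. -/
def blockGL : GL (Fin 2) F →* GL (Fin 3) F := Units.map block

lemma blockGL_injective : Function.Injective (blockGL (F := F)) :=
  Units.map_injective block_injective

variable {G : Type*} [Group G]

/-- The homomorphism `(g, u) ↦ (u • ρ g) ⊕ 1`, which describes a group such as `L̄` as the product
of a linear group `G` and a group of scalars. -/
def scaledBlock (ρ : G →* SpecialLinearGroup (Fin 2) F) (w : ℕ) :
    G × rootsOfUnity w F →* GL (Fin 3) F :=
  blockGL.comp ((SpecialLinearGroup.toGL.comp ρ).noncommCoprod
    ((GeneralLinearGroup.scalar (Fin 2)).comp (rootsOfUnity w F).subtype)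
    fun g u => (GeneralLinearGroup.scalar_commute u.1 (ρ g).toGL).symm)

lemma scaledBlock_apply (ρ : G →* SpecialLinearGroup (Fin 2) F) (w : ℕ) (g : G)
    (u : rootsOfUnity w F) : (scaledBlock ρ w (g, u)).1 =
      block (((u : Fˣ) : F) • (ρ g : Matrix (Fin 2) (Fin 2) F)) := by
  rw [smul_eq_mul_diagonal]
  rfl

lemma range_scaledBlock (ρ : G →* SpecialLinearGroup (Fin 2) F) (w : ℕ) :
    (scaledBlock ρ w).range = (blockGL.comp (SpecialLinearGroup.toGL.comp ρ)).range ⊔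
      (rootsOfUnity w F).map (blockGL.comp (GeneralLinearGroup.scalar (Fin 2))) := by
  rw [scaledBlock, MonoidHom.range_comp]
  refine (congrArg _ (MonoidHom.noncommCoprod_range ..)).trans ?_
  rw [Subgroup.map_sup, ← MonoidHom.range_comp, MonoidHom.range_comp _ (Subgroup.subtype _),
    Subgroup.range_subtype, Subgroup.map_map]

end ScaledRepresentation

/-! ### The orbit formula -/

section OrbitFormula

lemma sum_rootsOfUnity_inv {F : Type*} [Field F] {w : ℕ} [NeZero w] [Fintype (rootsOfUnity w F)]
    (f : F → ℕ) :
    ∑ u : rootsOfUnity w F, f ((u : Fˣ) : F)⁻¹ =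
      ∑ c ∈ Polynomial.nthRootsFinset w (1 : F), f c := by
  have hw := NeZero.pos w
  refine sum_bij (fun u _ => ((u : Fˣ) : F)⁻¹) (fun u _ => ?_) (fun u _ u' _ h => ?_)
    (fun c hc => ?_) fun _ _ => rfl
  · rw [Polynomial.mem_nthRootsFinset hw, inv_pow, (mem_rootsOfUnity' w _).mp u.2, inv_one]
  · exact Subtype.ext (Units.ext (inv_injective h))
  · have hc1 := (Polynomial.mem_nthRootsFinset hw _).mp hc
    have hc0 : c ≠ 0 := ne_zero_pow hw.ne' (hc1 ▸ one_ne_zero)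
    refine ⟨⟨(Units.mk0 c hc0)⁻¹, inv_mem ((mem_rootsOfUnity' w _).mpr hc1)⟩, mem_univ _, ?_⟩
    simp

variable {F : Type*} [Field F] [Fintype F] {q : ℕ} (hF : Fintype.card F = q ^ 2) {σ : F →+* F}
  (hσ : ∀ x, σ x = x ^ q)
include hF hσ

lemma IsSpecialUnitary.sum_card_eigenvector [DecidableEq F] (p : ℕ) [Fact p.Prime] [CharP F p]
    (hq : Odd q) (h2 : (2 : F) ≠ 0) {m : Matrix (Fin 2) (Fin 2) F} (hm : IsSpecialUnitary σ m)
    {w : ℕ} (hw : Odd w) (hwp : p.Coprime w) (hwq : w ∣ q + 1) :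
    ∑ c ∈ Polynomial.nthRootsFinset w (1 : F),
        #{v : Fin 2 → F | hermitianForm σ v = 1 ∧ m *ᵥ v = c • v} +
      (if m = 1 then 3 * q + 2 else 0) =
      (if m = 1 then q ^ 3 else 0) + (q + 1) * if m ^ w = 1 then 2 else 0 := by
  have hone : (1 : F) ∈ Polynomial.nthRootsFinset w 1 :=
    (Polynomial.mem_nthRootsFinset hw.pos _).mpr (one_pow w)
  have hself := hm.card_mulVec_eq_self hF hσ
  have hex := exists_mul_sub_eq_one_of_conj_eq hF hσ hq h2 (hm.conj_trace (conj_conj hF hσ))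
  have hroots := card_eigenvalue_pow_eq_one p hm.det_eq_one hex hw hwp
  have hne : ∑ c ∈ (Polynomial.nthRootsFinset w (1 : F)).erase 1,
      #{v : Fin 2 → F | hermitianForm σ v = 1 ∧ m *ᵥ v = c • v} =
      (q + 1) * #{c ∈ (Polynomial.nthRootsFinset w (1 : F)).erase 1 | c * (m.trace - c) = 1} := by
    rw [card_filter, mul_sum]
    refine sum_congr rfl fun c hc => ?_
    obtain ⟨hc1, hcw⟩ := mem_erase.mp hc
    rw [Polynomial.mem_nthRootsFinset hw.pos] at hcw
    have hconj : c * σ c = 1 := by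
      rw [hσ, ← pow_succ', ← orderOf_dvd_iff_pow_eq_one]
      exact (orderOf_dvd_of_pow_eq_one hcw).trans hwq
    have hcc : c ≠ σ c := fun h =>
      hc1 (eq_one_of_sq_eq_one_of_pow_odd hw (by rw [sq]; nth_rw 2 [h]; exact hconj) hcw)
    rw [hm.card_mulVec_eq_smul hF hσ hconj hcc, mul_ite, mul_one, mul_zero]
  rw [← add_sum_erase _ _ hone, hne]
  simp only [one_smul]
  split_ifs at hroots hself ⊢ <;> lia

variable (p : ℕ) [Fact p.Prime] [CharP F p] (hq : Odd q) (h2 : (2 : F) ≠ 0) {G : Type*} [Group G]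
  [DecidableEq G] {ρ : G →* SpecialLinearGroup (Fin 2) F} {w : ℕ}
include hq h2

lemma ncard_fixed_scaledBlock [DecidableEq F] (hρ : Function.Injective ρ)
    (hρu : ∀ g, IsSpecialUnitary σ (ρ g : Matrix (Fin 2) (Fin 2) F)) (g : G)
    (u : rootsOfUnity w F) :
    {x ∈ hermitianPts q F | glAct (scaledBlock ρ w (g, u)) x = x}.ncard =
      #{v : Fin 2 → F | hermitianForm σ v = 1 ∧
        (ρ g : Matrix (Fin 2) (Fin 2) F) *ᵥ v = ((u : Fˣ) : F)⁻¹ • v} +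
      (numEigenvalues p q g + if g ^ 2 = 1 then q else 0) := by
  have hu : ((u : Fˣ) : F) ≠ 0 := (u : Fˣ).ne_zero
  have hcount := (hρu g).ncard_isotropic_eigenvector hF hσ p hq h2
  rw [numEigenvalues_coe, numEigenvalues_map ρ hρ] at hcount
  simp only [coe_pow_eq_one_iff, ← map_pow, map_eq_one_iff ρ hρ] at hcount
  rw [ncard_fixed_hermitianPts hσ (scaledBlock_apply ρ w g u), ← hcount, ← Set.ncard_coe_finset,
    coe_filter_univ]
  simp only [smul_mulVec, eq_inv_smul_iff₀ hu]
  congr 3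
  ext t
  refine and_congr_right fun _ => ⟨fun ⟨c, hc⟩ => ⟨((u : Fˣ) : F)⁻¹ * c, ?_⟩,
    fun ⟨c, hc⟩ => ⟨(u : Fˣ) * c, by rw [hc, smul_smul]⟩⟩
  rw [mul_smul, eq_inv_smul_iff₀ hu, hc]

lemma sum_ncard_fixed_scaledBlock [Fintype (rootsOfUnity w F)] (hρ : Function.Injective ρ)
    (hρu : ∀ g, IsSpecialUnitary σ (ρ g : Matrix (Fin 2) (Fin 2) F)) (hw : Odd w)
    (hwp : p.Coprime w) (hwq : w ∣ q + 1) (g : G) :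
    ∑ u : rootsOfUnity w F, {x ∈ hermitianPts q F | glAct (scaledBlock ρ w (g, u)) x = x}.ncard +
        (if g = 1 then 3 * q + 2 else 0) =
      (if g = 1 then q ^ 3 else 0) + (q + 1) * (if g ^ w = 1 then 2 else 0) +
        Fintype.card (rootsOfUnity w F) *
          (numEigenvalues p q g + if g ^ 2 = 1 then q else 0) := by
  classical
  have : NeZero w := ⟨hw.pos.ne'⟩
  have hone : (ρ g : Matrix (Fin 2) (Fin 2) F) = 1 ↔ g = 1 := by
    simpa only [pow_one, map_eq_one_iff ρ hρ] using coe_pow_eq_one_iff (ρ g) 1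
  have hsum := (hρu g).sum_card_eigenvector hF hσ p hq h2 hw hwp hwq
  simp only [coe_pow_eq_one_iff, hone, ← map_pow, map_eq_one_iff ρ hρ] at hsum
  rw [sum_congr rfl fun u _ => ncard_fixed_scaledBlock hF hσ p hq h2 hρ hρu g u, sum_add_distrib,
    sum_rootsOfUnity_inv fun c => #{v : Fin 2 → F | hermitianForm σ v = 1 ∧
      (ρ g : Matrix (Fin 2) (Fin 2) F) *ᵥ v = c • v}, sum_const, card_univ, smul_eq_mul,
    add_right_comm, hsum]

lemma numOrbits_range_scaledBlock [Fintype G] (hρ : Function.Injective ρ)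
    (hρu : ∀ g, IsSpecialUnitary σ (ρ g : Matrix (Fin 2) (Fin 2) F))
    (hw : Odd w) (hwp : p.Coprime w) (hwq : w ∣ q + 1) :
    numOrbits (scaledBlock ρ w).range (hermitianPts q F) *
        (Fintype.card G * Nat.card (rootsOfUnity w F)) + (3 * q + 2) =
      q ^ 3 + (q + 1) * (2 * #{g : G | g ^ w = 1}) + Nat.card (rootsOfUnity w F) *
        (∑ g : G, numEigenvalues p q g + q * #{g : G | g ^ 2 = 1}) := by
  have : NeZero w := ⟨hw.pos.ne'⟩
  have := Fintype.ofFinite (rootsOfUnity w F)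
  have hinv (x : G × rootsOfUnity w F) (y) (hy : y ∈ hermitianPts q F) :
      glAct (scaledBlock ρ w x) y ∈ hermitianPts q F := by
    refine glAct_mem_hermitianPts hσ (scaledBlock_apply ρ w x.1 x.2) (fun v => ?_) hy
    have hnorm : ((x.2 : Fˣ) : F) * σ (x.2 : Fˣ) = 1 := by
      rw [hσ, ← pow_succ', ← orderOf_dvd_iff_pow_eq_one]
      exact (orderOf_dvd_of_pow_eq_one ((mem_rootsOfUnity' w _).mp x.2.2)).trans hwq
    rw [smul_mulVec, hermitianForm_smul, hnorm, one_mul,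
      (hρu x.1).hermitianForm_mulVec (conj_conj hF hσ)]
  have hsum := sum_congr rfl fun g (_ : g ∈ univ) =>
    sum_ncard_fixed_scaledBlock hF hσ p hq h2 hρ hρu hw hwp hwq g
  rw [Nat.card_eq_fintype_card, ← Fintype.card_prod, numOrbits_range_mul_card _ hinv,
    Fintype.sum_prod_type]
  simpa only [sum_add_distrib, ← mul_sum, sum_ite_eq', mem_univ, if_true, sum_ite, sum_const,
    smul_eq_mul, mul_comm #_, zero_mul, add_zero] using hsum

end OrbitFormula

/-! ### Subgroups of `M_ℓ` -/

section Subgroups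

variable {F : Type*} [Field F]

lemma transvection_pow {ι R : Type*} [Fintype ι] [DecidableEq ι] [CommRing R] {i j : ι}
    (hij : i ≠ j) (c : R) (n : ℕ) :
    SpecialLinearGroup.transvection hij c ^ n = SpecialLinearGroup.transvection hij (n * c) := by
  induction n with
  | zero => simp
  | succ n ih =>
    rw [pow_succ, ih, ← SpecialLinearGroup.transvection_add, Nat.cast_succ, add_one_mul]

lemma character_eq_one {E : Type*} [Field E] (p : ℕ) [hp : Fact p.Prime] [CharP E p] [CharP F p]
    (δ : SpecialLinearGroup (Fin 2) E →* F) (m : SpecialLinearGroup (Fin 2) E) : δ m = 1 := by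
  induction m using SL2.transvection_induction with
  | htransvec i j hij c =>
    have hpow : δ (SpecialLinearGroup.transvection hij c) ^ p = 1 := by
      rw [← map_pow, transvection_pow, CharP.cast_eq_zero, zero_mul]
      simp
    have hsub : (δ (SpecialLinearGroup.transvection hij c) - 1) ^ p = 0 := by
      rw [sub_pow_char, hpow, one_pow, sub_self]
    exact sub_eq_zero.mp ((pow_eq_zero_iff hp.out.ne_zero).mp hsub)
  | hmul A B hA hB => rw [map_mul, hA, hB, one_mul]

lemma exists_blockGL_eq_of_mem_MlSet {q : ℕ} {σ : F →+* F} (hσ : ∀ x, σ x = x ^ q)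
    {M : GL (Fin 3) F} (hM : M ∈ MlSet q F) :
    ∃ m : GL (Fin 2) F, blockGL m = M ∧ (m.1.det = 1 → IsSpecialUnitary σ m.1) := by
  obtain ⟨a, c, τ, hac, hτ, hM⟩ := hM
  have hdet : det !![a, τ * c ^ q; c, τ * a ^ q] = τ := by
    rw [det_fin_two_of]
    linear_combination τ * hac
  have hτ0 : τ ≠ 0 := ne_zero_pow q.succ_ne_zero (hτ ▸ one_ne_zero)
  refine ⟨.mkOfDetNeZero _ (hdet.trans_ne hτ0), Units.ext hM.symm, fun h => ?_⟩
  obtain rfl : τ = 1 := hdet.symm.trans h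
  exact ⟨h, by simp [GeneralLinearGroup.mkOfDetNeZero, hσ],
    by simp [GeneralLinearGroup.mkOfDetNeZero, hσ]⟩

lemma exists_specialUnitary_lift {E : Type*} [Field E] (p : ℕ) [Fact p.Prime] [CharP E p]
    [CharP F p] {q : ℕ} {σ : F →+* F} (hσ : ∀ x, σ x = x ^ q)
    (f : SpecialLinearGroup (Fin 2) E →* GL (Fin 3) F) (hf : ∀ m, f m ∈ MlSet q F) :
    ∃ ρ : SpecialLinearGroup (Fin 2) E →* SpecialLinearGroup (Fin 2) F,
      (∀ m, IsSpecialUnitary σ (ρ m : Matrix (Fin 2) (Fin 2) F)) ∧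
        blockGL.comp (SpecialLinearGroup.toGL.comp ρ) = f := by
  choose g hg hgσ using fun m => exists_blockGL_eq_of_mem_MlSet hσ (hf m)
  let γ : SpecialLinearGroup (Fin 2) E →* GL (Fin 2) F :=
    { toFun := g
      map_one' := blockGL_injective (by rw [hg, map_one, map_one])
      map_mul' := fun m n => blockGL_injective (by rw [hg, map_mul, map_mul, hg, hg]) }
  have hdet (m) : (γ m).1.det = 1 :=
    character_eq_one p ((Units.coeHom F).comp (GeneralLinearGroup.det.comp γ)) m
  refine ⟨{ toFun := fun m => ⟨(γ m).1, hdet m⟩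
            map_one' := Subtype.ext (congrArg Units.val (map_one γ))
            map_mul' := fun m n => Subtype.ext (congrArg Units.val (map_mul γ m n)) },
    fun m => hgσ m (hdet m), MonoidHom.ext fun m => ?_⟩
  rw [← hg m]
  exact congrArg blockGL (Units.ext rfl)

/-- The homomorphism `ε ↦ diag(ε, ε, 1)`, parametrising the homologies with axis `Z = 0`. -/
def homology (F : Type*) [Field F] : Fˣ →* GL (Fin 3) F :=
  blockGL.comp (GeneralLinearGroup.scalar (Fin 2))

lemma homology_apply (ε : Fˣ) : (homology F ε).1 = diagonal ![(ε : F), ε, 1] := by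
  ext i j
  fin_cases i <;> fin_cases j <;> rfl

lemma homology_injective : Function.Injective (homology F) := by
  refine fun ε δ h => Units.ext ?_
  have hval : (homology F ε).1 0 0 = (homology F δ).1 0 0 := by rw [h]
  simpa [homology_apply] using hval

lemma Z1Set_eq_image_homology (q : ℕ) (hq : Odd q) :
    Z1Set q F = homology F '' rootsOfUnity ((q + 1) / 2) F := by
  ext M
  constructor
  · rintro ⟨ε, hε, hM⟩
    have hε0 : ε ≠ 0 := ne_zero_pow (by have := hq.pos; omega) (hε ▸ one_ne_zero)
    exact ⟨Units.mk0 ε hε0, (mem_rootsOfUnity' _ _).mpr hε,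
      Units.ext ((homology_apply _).trans hM.symm)⟩
  · rintro ⟨ε, hε, rfl⟩
    exact ⟨ε, (mem_rootsOfUnity' _ _).mp hε, homology_apply ε⟩

lemma eq_rootsOfUnity_card {R : Type*} [CommRing R] [IsDomain R] (C : Subgroup Rˣ) [Finite C] :
    C = rootsOfUnity (Nat.card C) R := by
  have : NeZero (Nat.card C) := ⟨Nat.card_pos.ne'⟩
  refine Subgroup.eq_of_le_of_card_ge (fun ε hε => ?_) (card_rootsOfUnity R _)
  exact (mem_rootsOfUnity _ _).mpr (congrArg Subtype.val (pow_card_eq_one' (x := (⟨ε, hε⟩ : C))))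

lemma card_dvd_of_le_rootsOfUnity {R : Type*} [CommRing R] [IsDomain R] {C : Subgroup Rˣ}
    [Finite C] {n : ℕ} (hC : C ≤ rootsOfUnity n R) : Nat.card C ∣ n := by
  rw [← IsCyclic.exponent_eq_card, Monoid.exponent_dvd_iff_forall_pow_eq_one]
  exact fun ε => Subtype.ext ((mem_rootsOfUnity _ _).mp (hC ε.2))

lemma inter_Z1Set_eq_image_homology [Finite F] {q : ℕ} (hq : Odd q) (L : Subgroup (GL (Fin 3) F))
    {w : ℕ} (hw : Nat.card ((L : Set (GL (Fin 3) F)) ∩ Z1Set q F : Set (GL (Fin 3) F)) = w) :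
    (L : Set (GL (Fin 3) F)) ∩ Z1Set q F = homology F '' rootsOfUnity w F ∧
      Nat.card (rootsOfUnity w F) = w ∧ w ∣ (q + 1) / 2 := by
  let C : Subgroup Fˣ := L.comap (homology F) ⊓ rootsOfUnity ((q + 1) / 2) F
  have himage : (L : Set (GL (Fin 3) F)) ∩ Z1Set q F = homology F '' C := by
    rw [Z1Set_eq_image_homology q hq, ← Set.image_preimage_inter]
    rfl
  have hcard : Nat.card C = w := by
    rw [← hw, himage]
    exact (Nat.card_image_of_injective homology_injective _).symm
  have hroots : C = rootsOfUnity w F := hcard ▸ eq_rootsOfUnity_card C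
  exact ⟨hroots ▸ himage, hroots ▸ hcard, hcard ▸ card_dvd_of_le_rootsOfUnity inf_le_right⟩

lemma exists_range_scaledBlock_eq {E : Type*} [Field E] (p : ℕ) [Fact p.Prime] [CharP E p]
    [CharP F p] {q w : ℕ} {σ : F →+* F} (hσ : ∀ x, σ x = x ^ q) {L S : Subgroup (GL (Fin 3) F)}
    (hS : (S : Set (GL (Fin 3) F)) ⊆ MlSet q F) (φ : S ≃* SpecialLinearGroup (Fin 2) E)
    (hL : L = Subgroup.closure (S ∪ homology F '' rootsOfUnity w F)) :
    ∃ ρ : SpecialLinearGroup (Fin 2) E →* SpecialLinearGroup (Fin 2) F, Function.Injective ρ ∧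
      (∀ m, IsSpecialUnitary σ (ρ m : Matrix (Fin 2) (Fin 2) F)) ∧
      (blockGL.comp (SpecialLinearGroup.toGL.comp ρ)).range = S ∧ (scaledBlock ρ w).range = L := by
  obtain ⟨ρ, hρσ, hρ⟩ := exists_specialUnitary_lift p hσ (S.subtype.comp φ.symm.toMonoidHom)
    fun m => hS (φ.symm m).2
  have hinj : Function.Injective (S.subtype.comp φ.symm.toMonoidHom) :=
    S.subtype_injective.comp φ.symm.injective
  have hrange : (S.subtype.comp φ.symm.toMonoidHom).range = S := by
    rw [MonoidHom.range_comp, MonoidHom.range_eq_top.mpr φ.symm.surjective,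
      ← MonoidHom.range_eq_map, Subgroup.range_subtype]
  refine ⟨ρ, ?_, hρσ, hρ ▸ hrange, ?_⟩
  · rw [← hρ] at hinj
    exact fun m n h => hinj (congrArg (fun x => blockGL x.toGL) h)
  · rw [range_scaledBlock, hρ, hrange, hL, Subgroup.closure_union, Subgroup.closure_eq,
      ← Subgroup.coe_map, Subgroup.closure_eq]
    rfl

/-- For even `w` the matrix `diag(-1, -1, 1)` would be the image of `-1 ∈ SL₂(E)`. -/
lemma odd_of_inter_subset_one {E : Type*} [Field E] (h2E : (2 : E) ≠ 0) (h2 : (2 : F) ≠ 0)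
    {ρ : SpecialLinearGroup (Fin 2) E →* SpecialLinearGroup (Fin 2) F}
    (hρ : Function.Injective ρ) {w : ℕ}
    (htriv : ((blockGL.comp (SpecialLinearGroup.toGL.comp ρ)).range : Set (GL (Fin 3) F)) ∩
      homology F '' rootsOfUnity w F ⊆ {1}) : Odd w := by
  by_contra hw
  have hneg : ρ (-1) = -1 := by
    refine ((specialLinearGroup_sq_eq_one_iff h2 _).mp ?_).resolve_left fun h => ?_
    · rw [← map_pow, neg_one_sq, map_one]
    · exact specialLinearGroup_one_ne_neg_one h2E (hρ ((map_one ρ).trans h.symm))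
  have hmem : homology F (-1) ∈ ({1} : Set (GL (Fin 3) F)) := by
    refine htriv ⟨⟨-1, ?_⟩, ⟨-1, ?_, rfl⟩⟩
    · refine congrArg blockGL (Units.ext ?_)
      change (ρ (-1) : Matrix (Fin 2) (Fin 2) F) = scalar (Fin 2) (-1)
      rw [hneg, map_neg, map_one, Matrix.SpecialLinearGroup.coe_neg,
        Matrix.SpecialLinearGroup.coe_one]
    · exact (mem_rootsOfUnity _ _).mpr (Nat.not_odd_iff_even.mp hw).neg_one_pow
  have hone : (-1 : F) = 1 :=
    congrArg Units.val (homology_injective (hmem.trans (map_one _).symm))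
  exact h2 (by linear_combination -hone)

end Subgroups

/-! ### Evaluation of the orbit formula -/

section Evaluation

lemma two_ne_zero_of_odd_card {F : Type*} [Field F] [Fintype F] (hF : Odd (Fintype.card F)) :
    (2 : F) ≠ 0 :=
  Ring.two_ne_zero fun h =>
    Nat.not_odd_iff.mpr (FiniteField.even_card_of_char_two h) hF

lemma coprime_of_dvd_sub_one_of_dvd_add_one {a n w : ℕ} (hn : n ≠ 0) (hw : Odd w)
    (ha : a ∣ n - 1) (hwn : w ∣ n + 1) : a.Coprime w := by
  have h2 : a.gcd w ∣ 2 := by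
    rw [← Nat.dvd_add_right ((a.gcd_dvd_left w).trans ha), show n - 1 + 2 = n + 1 by lia]
    exact (a.gcd_dvd_right w).trans hwn
  exact (hw.of_dvd_nat (a.gcd_dvd_right w)).coprime_two_right.eq_one_of_dvd h2

lemma coprime_sub_one_of_dvd_pow_add_one {P r w : ℕ} (hP : P ≠ 0) (hw : Odd w)
    (hwP : w ∣ P ^ r + 1) : (P - 1).Coprime w := by
  have hdvd := Nat.sub_dvd_pow_sub_pow P 1 r
  rw [one_pow] at hdvd
  exact coprime_of_dvd_sub_one_of_dvd_add_one (pow_ne_zero r hP) hw hdvd hwP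

lemma coprime_add_one_of_dvd_pow_add_one {P r w : ℕ} (hP : P ≠ 0) (hr : Even r) (hw : Odd w)
    (hwP : w ∣ P ^ r + 1) : (P + 1).Coprime w := by
  obtain ⟨s, rfl⟩ := hr.two_dvd
  have hdvd := Nat.sub_dvd_pow_sub_pow (P ^ 2) 1 s
  rw [one_pow, ← pow_mul, ← one_pow 2, Nat.sq_sub_sq, one_pow] at hdvd
  exact coprime_of_dvd_sub_one_of_dvd_add_one (pow_ne_zero _ hP) hw
    ((Dvd.intro _ rfl).trans hdvd) hwP

variable {E F : Type*} [Field E] [Fintype E] [Field F] [Fintype F]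
  {q r w : ℕ} (hF : Fintype.card F = q ^ 2) {σ : F →+* F} (hσ : ∀ x, σ x = x ^ q)
  (p : ℕ) [Fact p.Prime] [CharP E p] [CharP F p] (hE : Odd (Fintype.card E))
  (hq : q = Fintype.card E ^ r) (hw : Odd w) (hwq : w ∣ q + 1)
  (hwF : Nat.card (rootsOfUnity w F) = w)
  {ρ : SpecialLinearGroup (Fin 2) E →* SpecialLinearGroup (Fin 2) F} (hρ : Function.Injective ρ)
  (hρu : ∀ m, IsSpecialUnitary σ (ρ m : Matrix (Fin 2) (Fin 2) F))
include p hF hσ hE hq hw hwq hwF hρ hρu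

lemma numOrbits_range_scaledBlock_mul [DecidableEq E] :
    (numOrbits (scaledBlock ρ w).range (hermitianPts q F) : ℚ) *
        ((Fintype.card E ^ 3 - Fintype.card E) * w) =
      q ^ 3 - q + (q + 1) * ((Fintype.card E ^ 2 - Fintype.card E) *
        ((Fintype.card E + 1).gcd w - 1)) +
      w * (∑ m : SpecialLinearGroup (Fin 2) E, numEigenvalues p q m + 2 * q) := by
  classical
  have hq2 : Odd q := hq ▸ hE.pow
  have hpq : p ∣ q := Nat.Prime.dvd_of_dvd_pow Fact.out
    ((CharP.cast_eq_zero_iff F p (q ^ 2)).mp (hF ▸ FiniteField.cast_card_eq_zero F))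
  have hq1 : q.Coprime (q + 1) := Nat.coprime_self_add_right.mpr (Nat.coprime_one_right q)
  have hwp : p.Coprime w := (hq1.coprime_dvd_left hpq).coprime_dvd_right hwq
  have hburnside := numOrbits_range_scaledBlock hF hσ p hq2
    (two_ne_zero_of_odd_card (hF ▸ hq2.pow)) hρ hρu hw hwp hwq
  rw [hwF, card_sq_eq_one (two_ne_zero_of_odd_card hE)] at hburnside
  simp only [pow_eq_one_iff_pow_gcd_eq_one p (hw.coprime_two_left.mul_left hwp)
    (coprime_sub_one_of_dvd_pow_add_one Fintype.card_ne_zero hw (hq ▸ hwq))] at hburnside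
  have htorsion := two_mul_card_pow_eq_one (E := E) (hw.of_dvd_nat (Nat.gcd_dvd_right _ w))
    (Nat.gcd_dvd_left (Fintype.card E + 1) w)
  have hcard := card_specialLinearGroup_add_card (E := E)
  have hburnside := congrArg (Nat.cast : ℕ → ℚ) hburnside
  have htorsion := congrArg (Nat.cast : ℕ → ℚ) htorsion
  have hcard := congrArg (Nat.cast : ℕ → ℚ) hcard
  push_cast at hburnside htorsion hcard ⊢
  linear_combination hburnside + (q + 1) * htorsion -
    numOrbits (scaledBlock ρ w).range (hermitianPts q F) * w * hcard

lemma numOrbits_range_scaledBlock_of_odd (hr : Odd r) :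
    (numOrbits (scaledBlock ρ w).range (hermitianPts q F) : ℚ) =
      1 + 2 * (q - Fintype.card E) / (Fintype.card E * (Fintype.card E ^ 2 - 1)) +
        (q + 1) * (Fintype.card E + 1).gcd w / ((Fintype.card E + 1) * w) +
        (q ^ 2 - q - Fintype.card E * (Fintype.card E - 1)) * (q + 1) /
          (Fintype.card E * (Fintype.card E - 1) * (Fintype.card E + 1) * w) := by
  classical
  have hN := numOrbits_range_scaledBlock_mul hF hσ p hE hq hw hwq hwF hρ hρu
  have hs := congrArg (Nat.cast : ℕ → ℚ)
    (sum_numEigenvalues_pow_of_odd p hE (two_ne_zero_of_odd_card hE) hr)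
  have hP : (1 : ℚ) < Fintype.card E := by exact_mod_cast Fintype.one_lt_card
  have hw0 : (w : ℚ) ≠ 0 := by exact_mod_cast hw.pos.ne'
  have h0 : (Fintype.card E : ℚ) ≠ 0 := by linarith
  have h1 : (Fintype.card E : ℚ) - 1 ≠ 0 := by linarith
  have h2 : (Fintype.card E : ℚ) + 1 ≠ 0 := by linarith
  rw [← hq] at hs
  push_cast at hs hN
  rw [show (Fintype.card E : ℚ) ^ 2 - 1 = (Fintype.card E - 1) * (Fintype.card E + 1) by ring]
  field_simp
  linear_combination hN + w * hs

lemma numOrbits_range_scaledBlock_of_even (hr : Even r) :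
    (numOrbits (scaledBlock ρ w).range (hermitianPts q F) : ℚ) =
      2 + 2 * (q - Fintype.card E ^ 2) / (Fintype.card E * (Fintype.card E ^ 2 - 1)) +
        (q / Fintype.card E) * ((q - 1) / (Fintype.card E ^ 2 - 1)) * ((q + 1) / w) := by
  classical
  have hN := numOrbits_range_scaledBlock_mul hF hσ p hE hq hw hwq hwF hρ hρu
  have hs := congrArg (Nat.cast : ℕ → ℚ)
    (sum_numEigenvalues_pow_of_even p (two_ne_zero_of_odd_card hE) hr)
  have hg := coprime_add_one_of_dvd_pow_add_one Fintype.card_ne_zero hr hw (hq ▸ hwq)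
  have hP : (1 : ℚ) < Fintype.card E := by exact_mod_cast Fintype.one_lt_card
  have hw0 : (w : ℚ) ≠ 0 := by exact_mod_cast hw.pos.ne'
  have h0 : (Fintype.card E : ℚ) ≠ 0 := by linarith
  have h1 : (Fintype.card E : ℚ) - 1 ≠ 0 := by linarith
  have h2 : (Fintype.card E : ℚ) + 1 ≠ 0 := by linarith
  rw [← hq] at hs
  push_cast [hg.gcd_eq_one] at hs hN
  rw [show (Fintype.card E : ℚ) ^ 2 - 1 = (Fintype.card E - 1) * (Fintype.card E + 1) by ring]
  field_simp
  linear_combination hN + w * hs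

end Evaluation

end HermitianOrbits

open HermitianOrbits in
theorem stmt15_general (p h q k w : ℕ) [hp : Fact (Nat.Prime p)] (hpodd : Odd p)
    (hh : 1 ≤ h) (hq : q = p ^ h)
    (F : Type*) [Field F] [Fintype F] (hF : Fintype.card F = q ^ 2)
    (hk : k ∣ h)
    (L : Subgroup (GL (Fin 3) F)) (hLMl : (L : Set (GL (Fin 3) F)) ⊆ MlSet q F)
    (hZ1card : Nat.card ((L : Set (GL (Fin 3) F)) ∩ Z1Set q F : Set (GL (Fin 3) F)) = w)
    (S : Subgroup (GL (Fin 3) F))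
    (hSiso : Nonempty (↥S ≃* Matrix.SpecialLinearGroup (Fin 2) (GaloisField p k)))
    (hgen : L = Subgroup.closure
      ((S : Set (GL (Fin 3) F)) ∪ ((L : Set (GL (Fin 3) F)) ∩ Z1Set q F)))
    (htriv : (S : Set (GL (Fin 3) F)) ∩ ((L : Set (GL (Fin 3) F)) ∩ Z1Set q F) ⊆ {1}) :
    (Even (h / k) →
      (numOrbits L (hermitianPts q F) : ℚ)
        = 2 + 2 * ((q : ℚ) - (p : ℚ) ^ (2 * k)) / ((p : ℚ) ^ k * ((p : ℚ) ^ (2 * k) - 1))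
          + ((q : ℚ) / (p : ℚ) ^ k) * (((q : ℚ) - 1) / ((p : ℚ) ^ (2 * k) - 1))
            * (((q : ℚ) + 1) / (w : ℚ))) ∧
    (Odd (h / k) →
      (numOrbits L (hermitianPts q F) : ℚ)
        = 1 + 2 * ((q : ℚ) - (p : ℚ) ^ k) / ((p : ℚ) ^ k * ((p : ℚ) ^ (2 * k) - 1))
          + ((q : ℚ) + 1) * (Nat.gcd (p ^ k + 1) w : ℚ) / (((p : ℚ) ^ k + 1) * (w : ℚ))
          + ((q : ℚ) ^ 2 - (q : ℚ) - (p : ℚ) ^ k * ((p : ℚ) ^ k - 1)) * ((q : ℚ) + 1)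
            / ((p : ℚ) ^ k * ((p : ℚ) ^ k - 1) * ((p : ℚ) ^ k + 1) * (w : ℚ))) := by
  obtain ⟨φ⟩ := hSiso
  have := Fintype.ofFinite (GaloisField p k)
  have := Classical.decEq (GaloisField p k)
  have : CharP F p := charP_of_card_eq_prime_pow (hF.trans (by rw [hq, ← pow_mul]))
  have hcard : Fintype.card (GaloisField p k) = p ^ k := by
    rw [← Nat.card_eq_fintype_card, GaloisField.card p k (ne_zero_of_dvd_ne_zero (by lia) hk)]
  have hq2 : Odd q := hq ▸ hpodd.pow
  have hE : Odd (Fintype.card (GaloisField p k)) := hcard ▸ hpodd.pow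
  have hσ (x : F) : iterateFrobenius F p h x = x ^ q := by rw [iterateFrobenius_def, hq]
  have hqr : q = Fintype.card (GaloisField p k) ^ (h / k) := by
    rw [hcard, hq, ← pow_mul, Nat.mul_div_cancel' hk]
  obtain ⟨hLZ, hwF, hwq⟩ := inter_Z1Set_eq_image_homology hq2 L hZ1card
  rw [hLZ] at hgen htriv
  have hSL : (S : Set (GL (Fin 3) F)) ⊆ L :=
    hgen ▸ Set.subset_union_left.trans Subgroup.subset_closure
  obtain ⟨ρ, hρ, hρu, rfl, rfl⟩ := exists_range_scaledBlock_eq p hσ (hSL.trans hLMl) φ hgen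
  have hw := odd_of_inter_subset_one (two_ne_zero_of_odd_card hE)
    (two_ne_zero_of_odd_card (hF ▸ hq2.pow)) hρ htriv
  have hwq' := hwq.trans (Nat.div_dvd_of_dvd hq2.add_one.two_dvd)
  rw [mul_comm 2 k, pow_mul, ← Nat.cast_pow, ← hcard]
  exact ⟨numOrbits_range_scaledBlock_of_even hF hσ p hE hqr hw hwq' hwF hρ hρu,
    numOrbits_range_scaledBlock_of_odd hF hσ p hE hqr hw hwq' hwF hρ hρu⟩

theorem stmt15 (p h q k w : ℕ) [hp : Fact (Nat.Prime p)] (hpodd : Odd p)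
    (hh : 1 ≤ h) (hq : q = p ^ h) (hq4 : q % 4 = 1)
    (F : Type*) [Field F] [Fintype F] (hF : Fintype.card F = q ^ 2)
    (hk : k ∣ h) (hw : w ∣ (q + 1) / 2)
    (L : Subgroup (GL (Fin 3) F)) (hLMl : (L : Set (GL (Fin 3) F)) ⊆ MlSet q F)
    (hZ1card : Nat.card ((L : Set (GL (Fin 3) F)) ∩ Z1Set q F : Set (GL (Fin 3) F)) = w)
    (S : Subgroup (GL (Fin 3) F))
    (hSiso : Nonempty (↥S ≃* Matrix.SpecialLinearGroup (Fin 2) (GaloisField p k)))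
    (hgen : L = Subgroup.closure
      ((S : Set (GL (Fin 3) F)) ∪ ((L : Set (GL (Fin 3) F)) ∩ Z1Set q F)))
    (htriv : (S : Set (GL (Fin 3) F)) ∩ ((L : Set (GL (Fin 3) F)) ∩ Z1Set q F) ⊆ {1}) :
    (Even (h / k) →
      (numOrbits L (hermitianPts q F) : ℚ)
        = 2 + 2 * ((q : ℚ) - (p : ℚ) ^ (2 * k)) / ((p : ℚ) ^ k * ((p : ℚ) ^ (2 * k) - 1))
          + ((q : ℚ) / (p : ℚ) ^ k) * (((q : ℚ) - 1) / ((p : ℚ) ^ (2 * k) - 1))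
            * (((q : ℚ) + 1) / (w : ℚ))) ∧
    (Odd (h / k) →
      (numOrbits L (hermitianPts q F) : ℚ)
        = 1 + 2 * ((q : ℚ) - (p : ℚ) ^ k) / ((p : ℚ) ^ k * ((p : ℚ) ^ (2 * k) - 1))
          + ((q : ℚ) + 1) * (Nat.gcd (p ^ k + 1) w : ℚ) / (((p : ℚ) ^ k + 1) * (w : ℚ))
          + ((q : ℚ) ^ 2 - (q : ℚ) - (p : ℚ) ^ k * ((p : ℚ) ^ k - 1)) * ((q : ℚ) + 1)
            / ((p : ℚ) ^ k * ((p : ℚ) ^ k - 1) * ((p : ℚ) ^ k + 1) * (w : ℚ))) := by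
  exact stmt15_general p h q k w hpodd hh hq F hF hk L hLMl hZ1card S hSiso hgen htriv
end
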